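/- Let p be a prime and f : U → ℚ_p^n an analytic map on an open set U ⊆ ℚ_p^d which is non-degenerate at x₀ ∈ U. Then there exists a sufficiently small ball B₀ ⊆ U centered at x₀ and a constant C₀ > 0 such that for every ball B ⊆ B₀ and every δ > 0, for all sufficiently large Q one has |A_f(δ;B;Q)| ≤ C₀ δ |B|, where A_f(δ;B;Q) = ⋃_{q̃∈ℤ^{n+1}, 0<‖q̃‖_∞≤Q} {x ∈ B : |q̃·f(x)|_p < δ Q^{-n-1}}. -/

import Mathlib

/-!
The proof reduces the bound to one variable and there follows the two-case scheme of
Bernik, Kleinbock and Margulis: large and small derivative.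

*Reduction to a curve.* There is an analytic curve `γ : ℤ_p → ℚ_p^d` with `γ(0) = 0` along which
`1, f⁽¹⁾, …, f⁽ⁿ⁾` stay linearly independent: interpolate finitely many points near `x₀` at which
these functions are already independent (`PadicND.exists_curve`). A ball of radius `ρ` is invariant
under translation by `γ(t)` as soon as `|γ(t)| ≤ ρ`, so by Fubini it suffices to bound, uniformly
for `x` in the ball, the proportion of `t` in a small ball about `0` of `ℤ_p` such that
`x + γ(t)` lies in the exceptional set (`PadicND.measure_le_of_curve`).

*Uniformity.* Along the translated curves, `F = (1, f)` is a family of power series depending in a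
Lipschitz way on `x`. By compactness of the unit sphere, normalized linear combinations `a · F`, and
Wronskians of normalized pairs of them, have a coefficient of bounded index and size bounded below
that dominates all later ones, uniformly for `x` close to `x₀` (`PadicND.exists_goodFam`). The
Wronskians do not vanish since in characteristic zero a vanishing Wronskian means proportionality. A
power series with a dominant coefficient of index `l` has divided differences of order `l` of
constant norm, which bounds its sublevel sets as in Lagrange interpolation
(`PadicND.IsDD.sublevel`, `PadicND.DDc.good`).

*Large derivative.* Let `|(q · F)'(t)| ≥ η`. On a ball of a radius depending only on `η`, the map
`q · F` scales distances by a constant `G ≥ η`, so each `q₀` contributes a set of measure at most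
`ε₀ / G`, where `ε₀ = δ Q^{-n-1}`. The relevant `q₀` are `p`-adically close to each other, and by the
product formula there are few of them (`PadicND.card_le_of_close`). Summing over `q` gives a
proportion of at most `3^{n+1} δ`, which is linear in `δ` (`PadicND.measure_largeGrad_le`).

*Small derivative.* Integer vectors `v` of size at most `Q` with `|v · F(t)| < ε₀` and
`|v · F'(t)| < η` are short vectors of a lattice over `ℤ[1/p]`. Covolumes of rational subspaces are
suprema of minors, which are values of linear combinations of `F`, their derivatives and
Wronskians; so they have small sublevel sets (`PadicND.good_covol`) and are not small on a whole
ball (`PadicND.exists_one_le_covol`). Quantitative nondivergence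
(`PadicND.measure_unmarked_le`, `PadicND.Marked.no_short_vector`) shows that the proportion of such
`t` is as small as desired, in particular at most `δ`, once `η` is small and `Q` is large. The
constant is therefore `3^{n+1} + 1`.
-/

open MeasureTheory

/-- The partial derivative `∂_j g (x)` of a scalar function on `K^d`. -/
noncomputable def pd {K : Type*} [NontriviallyNormedField K] {d : ℕ}
    (g : (Fin d → K) → K) (j : Fin d) (x : Fin d → K) : K :=
  fderiv K g x (Pi.single j 1)

/-- The `k`-th order difference quotient `Φ^k f (x 0, …, x k)` of a one-variable
function, as in Schikhof. -/
noncomputable def diffQuot {K : Type*} [Field K] (f : K → K) : ℕ → (ℕ → K) → K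
  | 0, x => f (x 0)
  | k + 1, x =>
      (diffQuot f k (fun j => if j = 0 then x 0 else x (j + 1)) -
        diffQuot f k (fun j => x (j + 1))) / (x 0 - x 1)

/-- Second-order difference quotient `Φ_i Φ_j g` of a scalar function of `d`
variables at base point `y`, with respect to the values `a, b, c` (in the repeated
coordinate case `i = j`) or `a, b` in coordinate `i` and `c, e` in coordinate `j`
(in the mixed case `i ≠ j`). -/
noncomputable def sdq {K : Type*} [Field K] {d : ℕ}
    (g : (Fin d → K) → K) (i j : Fin d) (y : Fin d → K) (a b c e : K) : K :=
  if i = j then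
    diffQuot (fun t => g (Function.update y i t)) 2
      (fun m => if m = 0 then a else if m = 1 then b else c)
  else
    (g (Function.update (Function.update y i a) j c)
      - g (Function.update (Function.update y i a) j e)
      - g (Function.update (Function.update y i b) j c)
      + g (Function.update (Function.update y i b) j e)) / ((a - b) * (c - e))

/-- `f = (f⁽¹⁾, …, f⁽ⁿ⁾)` is non-degenerate on `U`: the restrictions of
`1, f⁽¹⁾, …, f⁽ⁿ⁾` to any open ball contained in `U` are linearly independent. -/
def Nondeg {K : Type*} [NontriviallyNormedField K] {d n : ℕ}
    (f : (Fin d → K) → (Fin n → K)) (U : Set (Fin d → K)) : Prop :=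
  ∀ (z : Fin d → K) (r : ℝ), 0 < r → Metric.ball z r ⊆ U →
    ∀ (c₀ : K) (c : Fin n → K),
      (∀ x ∈ Metric.ball z r, c₀ + ∑ i, c i * f x i = 0) → c₀ = 0 ∧ ∀ i, c i = 0

/-! ### Power series converging on `ℤ_p` -/

namespace PadicND

open PowerSeries

variable {p : ℕ} [Fact p.Prime]

/-- `Bd M φ`: the `k`-th coefficient of `φ` has norm at most `M p⁻ᵏ`, so that `φ` converges
absolutely on `ℤ_[p]` (indeed on a slightly larger disc). -/
def Bd (M : ℝ) (φ : PowerSeries ℚ_[p]) : Prop :=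
  ∀ k, ‖coeff k φ‖ ≤ M * ((p : ℝ)⁻¹) ^ k

/-- The value at `t ∈ ℤ_[p]` of a power series; meaningful only under `Bd M φ`. -/
noncomputable def ev (φ : PowerSeries ℚ_[p]) (t : ℤ_[p]) : ℚ_[p] :=
  ∑' k, coeff k φ * (t : ℚ_[p]) ^ k

lemma pinv_pos : 0 < (p : ℝ)⁻¹ := by
  have := (Fact.out : p.Prime).pos
  positivity

lemma pinv_lt_one : (p : ℝ)⁻¹ < 1 := by
  have := (Fact.out : p.Prime).one_lt
  apply inv_lt_one_of_one_lt₀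
  exact_mod_cast this

lemma pinv_le_one : (p : ℝ)⁻¹ ≤ 1 := pinv_lt_one.le

lemma Bd.nonneg {M : ℝ} {φ : PowerSeries ℚ_[p]} (h : Bd M φ) : 0 ≤ M := by
  have := h 0
  simp only [pow_zero, mul_one] at this
  exact (norm_nonneg _).trans this

lemma Bd.mono {M M' : ℝ} {φ : PowerSeries ℚ_[p]} (h : Bd M φ) (hM : M ≤ M') : Bd M' φ :=
  fun k => (h k).trans (by have := (pinv_pos (p := p)).le; gcongr)

lemma Bd.le {M : ℝ} {φ : PowerSeries ℚ_[p]} (h : Bd M φ) (k : ℕ) : ‖coeff k φ‖ ≤ M :=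
  (h k).trans (mul_le_of_le_one_right h.nonneg (pow_le_one₀ pinv_pos.le pinv_le_one))

lemma Bd.add {M : ℝ} {φ ψ : PowerSeries ℚ_[p]} (h : Bd M φ) (h' : Bd M ψ) : Bd M (φ + ψ) :=
  fun k => by
    rw [map_add]
    exact (IsUltrametricDist.norm_add_le_max _ _).trans (max_le (h k) (h' k))

lemma Bd.neg {M : ℝ} {φ : PowerSeries ℚ_[p]} (h : Bd M φ) : Bd M (-φ) :=
  fun k => by rw [map_neg, norm_neg]; exact h k

lemma Bd.sub {M : ℝ} {φ ψ : PowerSeries ℚ_[p]} (h : Bd M φ) (h' : Bd M ψ) : Bd M (φ - ψ) := by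
  rw [sub_eq_add_neg]; exact h.add h'.neg

lemma Bd.zero {M : ℝ} (hM : 0 ≤ M) : Bd M (0 : PowerSeries ℚ_[p]) :=
  fun k => by
    have := (pinv_pos (p := p)).le
    rw [map_zero, norm_zero]; positivity

lemma Bd.sum {ι : Type*} {M : ℝ} (hM : 0 ≤ M) (s : Finset ι) {φ : ι → PowerSeries ℚ_[p]}
    (h : ∀ i ∈ s, Bd M (φ i)) : Bd M (∑ i ∈ s, φ i) := by
  classical
  induction s using Finset.induction_on with
  | empty => simpa using Bd.zero hM
  | insert a s ha ih =>
    rw [Finset.sum_insert ha]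
    exact (h a (by simp)).add (ih fun i hi => h i (by simp [hi]))

lemma Bd.mul {M M' : ℝ} {φ ψ : PowerSeries ℚ_[p]} (h : Bd M φ) (h' : Bd M' ψ) :
    Bd (M * M') (φ * ψ) := fun k => by
  have hp := (pinv_pos (p := p)).le
  have h0 := h.nonneg
  have h1 := h'.nonneg
  rw [coeff_mul]
  refine IsUltrametricDist.norm_sum_le_of_forall_le_of_nonneg (by positivity) fun x hx => ?_
  rw [norm_mul, ← Finset.HasAntidiagonal.mem_antidiagonal.mp hx, pow_add]
  calc _ ≤ (M * (p : ℝ)⁻¹ ^ x.1) * (M' * (p : ℝ)⁻¹ ^ x.2) := by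
        gcongr
        · exact h _
        · exact h' _
    _ = _ := by ring

lemma Bd.C (a : ℚ_[p]) : Bd ‖a‖ (C a) := fun k => by
  have hp := (pinv_pos (p := p)).le
  rw [coeff_C]
  split_ifs with h
  · simp [h]
  · rw [norm_zero]; positivity

lemma Bd.C_mul {M : ℝ} {φ : PowerSeries ℚ_[p]} (h : Bd M φ) (a : ℚ_[p]) :
    Bd (‖a‖ * M) (PowerSeries.C a * φ) := (Bd.C a).mul h

lemma Bd.deriv {M : ℝ} {φ : PowerSeries ℚ_[p]} (h : Bd M φ) : Bd M (derivative ℚ_[p] φ) :=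
  fun k => by
    have hp := (pinv_pos (p := p)).le
    have h0 := h.nonneg
    rw [coeff_derivative, norm_mul]
    have h1 : ‖((k : ℚ_[p]) + 1)‖ ≤ 1 := by
      exact_mod_cast Padic.norm_int_le_one (p := p) ((k : ℤ) + 1)
    calc _ ≤ (M * (p : ℝ)⁻¹ ^ (k + 1)) * 1 := by
          gcongr
          exact h _
      _ ≤ (M * (p : ℝ)⁻¹ ^ k) * 1 := by
          have := pow_le_pow_of_le_one hp (pinv_le_one (p := p)) (Nat.le_succ k)
          gcongr
      _ = _ := by ring

lemma norm_coe_pow_le (t : ℤ_[p]) (k : ℕ) : ‖(t : ℚ_[p]) ^ k‖ ≤ 1 := by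
  rw [norm_pow]
  exact pow_le_one₀ (norm_nonneg _) (by simpa using PadicInt.norm_le_one t)

lemma Bd.norm_term {M : ℝ} {φ : PowerSeries ℚ_[p]} (h : Bd M φ) (t : ℤ_[p]) (k : ℕ) :
    ‖coeff k φ * (t : ℚ_[p]) ^ k‖ ≤ M * ((p : ℝ)⁻¹) ^ k := by
  rw [norm_mul]
  exact (mul_le_of_le_one_right (norm_nonneg _) (norm_coe_pow_le t k)).trans (h k)

lemma summable_geo (M : ℝ) : Summable fun k : ℕ => M * ((p : ℝ)⁻¹) ^ k :=
  (summable_geometric_of_lt_one pinv_pos.le pinv_lt_one).mul_left M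

lemma Bd.summable_norm {M : ℝ} {φ : PowerSeries ℚ_[p]} (h : Bd M φ) (t : ℤ_[p]) :
    Summable fun k => ‖coeff k φ * (t : ℚ_[p]) ^ k‖ :=
  Summable.of_nonneg_of_le (fun _ => norm_nonneg _) (h.norm_term t) (summable_geo M)

lemma Bd.summable {M : ℝ} {φ : PowerSeries ℚ_[p]} (h : Bd M φ) (t : ℤ_[p]) :
    Summable fun k => coeff k φ * (t : ℚ_[p]) ^ k := (h.summable_norm t).of_norm

lemma Bd.norm_ev_le {M : ℝ} {φ : PowerSeries ℚ_[p]} (h : Bd M φ) (t : ℤ_[p]) :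
    ‖ev φ t‖ ≤ M := by
  refine IsUltrametricDist.norm_tsum_le_of_forall_le_of_nonneg h.nonneg fun k => ?_
  rw [norm_mul]
  exact (mul_le_of_le_one_right (norm_nonneg _) (norm_coe_pow_le t k)).trans (h.le k)

lemma ev_add {M M' : ℝ} {φ ψ : PowerSeries ℚ_[p]} (h : Bd M φ) (h' : Bd M' ψ) (t : ℤ_[p]) :
    ev (φ + ψ) t = ev φ t + ev ψ t := by
  unfold ev
  rw [← (h.summable t).tsum_add (h'.summable t)]
  simp [add_mul]

lemma ev_neg (φ : PowerSeries ℚ_[p]) (t : ℤ_[p]) : ev (-φ) t = - ev φ t := by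
  unfold ev
  rw [← tsum_neg]
  simp

lemma ev_sub {M M' : ℝ} {φ ψ : PowerSeries ℚ_[p]} (h : Bd M φ) (h' : Bd M' ψ) (t : ℤ_[p]) :
    ev (φ - ψ) t = ev φ t - ev ψ t := by
  rw [sub_eq_add_neg, ev_add h h'.neg, ev_neg, sub_eq_add_neg]

@[simp] lemma ev_C (a : ℚ_[p]) (t : ℤ_[p]) : ev (C a) t = a := by
  unfold ev
  rw [tsum_eq_single 0]
  · simp
  · intro k hk
    simp [coeff_C, hk]

@[simp] lemma ev_zero (t : ℤ_[p]) : ev (0 : PowerSeries ℚ_[p]) t = 0 := by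
  simp [ev]

lemma ev_mul {M M' : ℝ} {φ ψ : PowerSeries ℚ_[p]} (h : Bd M φ) (h' : Bd M' ψ) (t : ℤ_[p]) :
    ev (φ * ψ) t = ev φ t * ev ψ t := by
  unfold ev
  rw [tsum_mul_tsum_eq_tsum_sum_antidiagonal_of_summable_norm (h.summable_norm t)
    (h'.summable_norm t)]
  refine tsum_congr fun k => ?_
  rw [coeff_mul, Finset.sum_mul]
  refine Finset.sum_congr rfl fun x hx => ?_
  rw [← Finset.HasAntidiagonal.mem_antidiagonal.mp hx, pow_add]
  ring

lemma ev_C_mul (a : ℚ_[p]) {M : ℝ} {φ : PowerSeries ℚ_[p]} (h : Bd M φ) (t : ℤ_[p]) :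
    ev (C a * φ) t = a * ev φ t := by
  rw [ev_mul (Bd.C a) h, ev_C]

lemma ev_sum {ι : Type*} {M : ℝ} (hM : 0 ≤ M) (s : Finset ι) {φ : ι → PowerSeries ℚ_[p]}
    (h : ∀ i ∈ s, Bd M (φ i)) (t : ℤ_[p]) : ev (∑ i ∈ s, φ i) t = ∑ i ∈ s, ev (φ i) t := by
  classical
  induction s using Finset.induction_on with
  | empty => simp
  | insert a s ha ih =>
    rw [Finset.sum_insert ha, Finset.sum_insert ha, ev_add (h a (by simp))
      (Bd.sum hM s fun i hi => h i (by simp [hi])), ih fun i hi => h i (by simp [hi])]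

/-- First-order Taylor expansion with quadratic error term. -/
lemma Bd.taylor {M : ℝ} {φ : PowerSeries ℚ_[p]} (h : Bd M φ) (t u : ℤ_[p]) :
    ‖ev φ (t + u) - ev φ t - u * ev (derivative ℚ_[p] φ) t‖ ≤ M * ‖u‖ ^ 2 := by
  have hd : ev (derivative ℚ_[p] φ) t = ∑' k, coeff k φ * (k * (t : ℚ_[p]) ^ (k - 1)) := by
    unfold ev
    have hs := h.deriv.summable t
    have hs' : Summable fun k => coeff k φ * (k * (t : ℚ_[p]) ^ (k - 1)) := by
      refine (summable_nat_add_iff 1).mp ?_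
      refine hs.congr fun k => ?_
      rw [coeff_derivative]
      push_cast
      ring
    rw [hs'.tsum_eq_zero_add]
    simp only [Nat.cast_zero, zero_mul, mul_zero, zero_add]
    refine tsum_congr fun k => ?_
    rw [coeff_derivative]
    push_cast
    ring
  have hs' : Summable fun k => coeff k φ * (k * (t : ℚ_[p]) ^ (k - 1)) := by
    refine (summable_nat_add_iff 1).mp ?_
    refine (h.deriv.summable t).congr fun k => ?_
    rw [coeff_derivative]
    push_cast
    ring
  rw [hd, ← tsum_mul_left]
  unfold ev
  rw [← (h.summable (t + u)).tsum_sub (h.summable t),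
    ← ((h.summable (t + u)).sub (h.summable t)).tsum_sub (hs'.mul_left _)]
  refine IsUltrametricDist.norm_tsum_le_of_forall_le_of_nonneg
    (mul_nonneg h.nonneg (by positivity)) fun k => ?_
  obtain ⟨c, hc⟩ := Polynomial.powAddExpansion t u k
  have : coeff k φ * ((t + u : ℤ_[p]) : ℚ_[p]) ^ k - coeff k φ * (t : ℚ_[p]) ^ k
      - u * (coeff k φ * (k * (t : ℚ_[p]) ^ (k - 1)))
      = coeff k φ * ((c : ℚ_[p]) * (u : ℚ_[p]) ^ 2) := by
    have h2 := congrArg (fun z : ℤ_[p] => (z : ℚ_[p])) hc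
    push_cast at h2 ⊢
    rw [h2]; ring
  rw [this, norm_mul, norm_mul, norm_pow]
  have h1 : ‖(c : ℚ_[p])‖ ≤ 1 := by simpa using PadicInt.norm_le_one c
  have h3 : ‖(u : ℚ_[p])‖ = ‖u‖ := by simp
  rw [h3]
  have := h.nonneg
  have := h.le k
  calc _ ≤ M * (1 * ‖u‖ ^ 2) := by gcongr
    _ = _ := by ring

lemma Bd.lipschitz {M : ℝ} {φ : PowerSeries ℚ_[p]} (h : Bd M φ) (t u : ℤ_[p]) :
    ‖ev φ t - ev φ u‖ ≤ M * ‖t - u‖ := by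
  have h1 := h.taylor u (t - u)
  have h2 := h.deriv.norm_ev_le u
  have h0 := h.nonneg
  have h3 : ‖t - u‖ ≤ 1 := PadicInt.norm_le_one _
  have e : ev φ t - ev φ u = (ev φ (u + (t - u)) - ev φ u
      - ((t - u : ℤ_[p]) : ℚ_[p]) * ev (derivative ℚ_[p] φ) u)
      + ((t - u : ℤ_[p]) : ℚ_[p]) * ev (derivative ℚ_[p] φ) u := by
    rw [add_sub_cancel u t]; ring
  rw [e]
  refine (IsUltrametricDist.norm_add_le_max _ _).trans (max_le (h1.trans ?_) ?_)
  · nlinarith [norm_nonneg (t - u), mul_nonneg h0 (norm_nonneg (t - u))]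
  · rw [norm_mul]
    have : ‖((t - u : ℤ_[p]) : ℚ_[p])‖ = ‖t - u‖ := by simp only [PadicInt.norm_def]
    rw [this, mul_comm M]
    gcongr

lemma Bd.continuous {M : ℝ} {φ : PowerSeries ℚ_[p]} (h : Bd M φ) : Continuous (ev φ) := by
  refine (LipschitzWith.of_dist_le_mul (K := ⟨M, h.nonneg⟩) fun t u => ?_).continuous
  rw [dist_eq_norm, dist_eq_norm]
  exact h.lipschitz t u

end PadicND

/-! ### Divided differences and sublevel sets -/

namespace PadicND

open PowerSeries

variable {p : ℕ} [Fact p.Prime]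

/-- All divided differences of order `l` of `h` at distinct points of `S` have norm exactly `A`.
The divided differences are formed one node at a time. -/
def IsDD : ℕ → ℝ → (ℤ_[p] → ℚ_[p]) → Set ℤ_[p] → Prop
  | 0, A, h, S => ∀ t ∈ S, ‖h t‖ = A
  | l + 1, A, h, S => ∀ t₀ ∈ S,
      IsDD l A (fun t => (h t - h t₀) / ((t : ℚ_[p]) - (t₀ : ℚ_[p]))) (S \ {t₀})

/-- The coefficient of index `l` has norm `A` and strictly dominates all later ones. (The norm
being discrete, `< A` amounts to `≤ A p⁻¹`, which is stable under limits.) -/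
def DDc (l : ℕ) (A : ℝ) (φ : PowerSeries ℚ_[p]) : Prop :=
  ‖coeff l φ‖ = A ∧ ∀ k, l < k → ‖coeff k φ‖ ≤ A * (p : ℝ)⁻¹

lemma IsDD.congr {l : ℕ} {A : ℝ} {h h' : ℤ_[p] → ℚ_[p]} {S : Set ℤ_[p]}
    (H : IsDD l A h S) (e : ∀ t ∈ S, h t = h' t) : IsDD l A h' S := by
  induction l generalizing h h' S with
  | zero => intro t ht; rw [← e t ht]; exact H t ht
  | succ l ih =>
    intro t₀ ht₀
    refine ih (H t₀ ht₀) fun t ht => ?_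
    rw [e t ht.1, e t₀ ht₀]

/-- The quotient `(φ(t) - φ(t₀)) / (t - t₀)` as a power series in `t`. -/
noncomputable def sh (φ : PowerSeries ℚ_[p]) (t₀ : ℤ_[p]) : PowerSeries ℚ_[p] :=
  PowerSeries.mk fun i => ∑' j, coeff (i + j + 1) φ * (t₀ : ℚ_[p]) ^ j

lemma Bd.sh {M : ℝ} {φ : PowerSeries ℚ_[p]} (h : Bd M φ) (t₀ : ℤ_[p]) :
    Bd M (sh φ t₀) := fun k => by
  have hp := (pinv_pos (p := p)).le
  have h0 := h.nonneg
  rw [PadicND.sh, coeff_mk]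
  refine IsUltrametricDist.norm_tsum_le_of_forall_le_of_nonneg (by positivity) fun j => ?_
  rw [norm_mul]
  refine (mul_le_of_le_one_right (norm_nonneg _) (norm_coe_pow_le t₀ j)).trans ((h _).trans ?_)
  have := pow_le_pow_of_le_one hp (pinv_le_one (p := p)) (show k ≤ k + j + 1 by omega)
  gcongr

lemma ev_sh {M : ℝ} {φ : PowerSeries ℚ_[p]} (h : Bd M φ) (t t₀ : ℤ_[p]) :
    ev φ t - ev φ t₀ = ((t : ℚ_[p]) - t₀) * ev (sh φ t₀) t := by
  have hp := (pinv_pos (p := p)).le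
  have h0 := h.nonneg
  set G : ℕ × ℕ → ℚ_[p] :=
    fun x => coeff (x.1 + x.2 + 1) φ * ((t : ℚ_[p]) ^ x.1 * (t₀ : ℚ_[p]) ^ x.2) with hG
  have hGs : Summable G := by
    have hs : Summable fun x : ℕ × ℕ => M * ((p : ℝ)⁻¹ ^ x.1 * (p : ℝ)⁻¹ ^ x.2) := by
      refine Summable.mul_left M ?_
      exact (summable_geometric_of_lt_one hp pinv_lt_one).mul_of_nonneg
        (summable_geometric_of_lt_one hp pinv_lt_one) (fun _ => by positivity)
        (fun _ => by positivity)
    refine Summable.of_norm (Summable.of_nonneg_of_le (fun _ => norm_nonneg _) (fun x => ?_) hs)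
    rw [hG]
    simp only [norm_mul]
    have h1 := norm_coe_pow_le t x.1
    have h2 := norm_coe_pow_le t₀ x.2
    have h3 := h (x.1 + x.2 + 1)
    have h4 := pow_le_pow_of_le_one hp (pinv_le_one (p := p))
      (show x.1 + x.2 ≤ x.1 + x.2 + 1 by omega)
    calc _ ≤ (M * (p : ℝ)⁻¹ ^ (x.1 + x.2 + 1)) * (1 * 1) := by gcongr
      _ ≤ (M * (p : ℝ)⁻¹ ^ (x.1 + x.2)) * (1 * 1) := by gcongr
      _ = _ := by rw [pow_add]; ring
  have e1 : ev (sh φ t₀) t = ∑' x, G x := by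
    rw [hGs.tsum_prod]
    unfold ev
    refine tsum_congr fun i => ?_
    rw [sh, coeff_mk, ← tsum_mul_right]
    refine tsum_congr fun j => ?_
    simp only [hG]; ring
  have hs1 : HasSum (fun n => ∑ x ∈ Finset.HasAntidiagonal.antidiagonal n, G x) (∑' x, G x) := by
    have h1 := (Finset.HasAntidiagonal.sigmaAntidiagonalEquivProd (A := ℕ)).hasSum_iff.mpr
      hGs.hasSum
    have h2 := h1.sigma (fun n => hasSum_fintype _)
    have h3 : ∀ n : ℕ, ∑ x ∈ Finset.HasAntidiagonal.antidiagonal n, G x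
        = ∑ c : Finset.HasAntidiagonal.antidiagonal n, G c := fun n =>
      (Finset.sum_coe_sort (Finset.HasAntidiagonal.antidiagonal n) G).symm
    simp_rw [h3]
    exact h2
  have e2 := hs1.tsum_eq.symm
  rw [e1, e2, ← tsum_mul_left]
  unfold ev
  rw [(h.summable t).tsum_eq_zero_add, (h.summable t₀).tsum_eq_zero_add]
  simp only [pow_zero, add_sub_add_left_eq_sub]
  rw [← ((summable_nat_add_iff 1).mpr (h.summable t)).tsum_sub
    ((summable_nat_add_iff 1).mpr (h.summable t₀))]
  refine tsum_congr fun n => ?_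
  have e3 : ∑ x ∈ Finset.HasAntidiagonal.antidiagonal n, G x
      = coeff (n + 1) φ * ∑ i ∈ Finset.range (n + 1), (t : ℚ_[p]) ^ i * (t₀ : ℚ_[p]) ^ (n - i) := by
    rw [Finset.mul_sum, Finset.Nat.sum_antidiagonal_eq_sum_range_succ_mk]
    refine Finset.sum_congr rfl fun i hi => ?_
    have : i + (n - i) = n := by
      have := Finset.mem_range.mp hi; omega
    simp only [hG, this]
  have e4 := (Commute.all (t : ℚ_[p]) (t₀ : ℚ_[p])).mul_geom_sum₂ (n + 1)
  simp only [Nat.add_sub_cancel] at e4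
  rw [e3, mul_left_comm, e4]
  ring

/-- Divided differences of `ev φ` are again values of power series, with the dominant coefficient
moved down by one index at each step. -/
lemma DDc.isDD {l : ℕ} {A M : ℝ} {φ : PowerSeries ℚ_[p]} (hB : Bd M φ) (h : DDc l A φ)
    (S : Set ℤ_[p]) : IsDD l A (ev φ) S := by
  have hp := pinv_pos (p := p)
  have hA : 0 ≤ A := h.1 ▸ norm_nonneg _
  induction l generalizing φ S with
  | zero =>
    intro t _
    rcases hA.eq_or_lt with h0 | h0
    · have : φ = 0 := by
        ext k
        rcases Nat.eq_zero_or_pos k with rfl | hk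
        · simpa using h.1.trans h0.symm
        · simpa [← h0] using h.2 k hk
      rw [this, ev_zero, norm_zero, h0]
    · unfold ev
      rw [(hB.summable t).tsum_eq_zero_add]
      have h1 : ‖∑' k, coeff (k + 1) φ * (t : ℚ_[p]) ^ (k + 1)‖ ≤ A * (p : ℝ)⁻¹ := by
        refine IsUltrametricDist.norm_tsum_le_of_forall_le_of_nonneg (by positivity) fun k => ?_
        rw [norm_mul]
        exact (mul_le_of_le_one_right (norm_nonneg _) (norm_coe_pow_le t _)).trans
          (h.2 _ (Nat.succ_pos k))
      have h2 : A * (p : ℝ)⁻¹ < A := mul_lt_of_lt_one_right h0 pinv_lt_one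
      have h3 : ‖coeff 0 φ * (t : ℚ_[p]) ^ 0‖ = A := by rw [pow_zero, mul_one]; exact h.1
      rw [IsUltrametricDist.norm_add_eq_max_of_norm_ne_norm (by rw [h3]; exact (h1.trans_lt h2).ne'),
        h3, max_eq_left (h1.trans h2.le)]
  | succ l ih =>
    intro t₀ _
    have hd : DDc l A (sh φ t₀) := by
      have hs : ∀ k, Summable fun j => coeff (k + j + 1) φ * (t₀ : ℚ_[p]) ^ j := fun k => by
        refine Summable.of_norm (Summable.of_nonneg_of_le (fun _ => norm_nonneg _) (fun j => ?_)
          (summable_geo (p := p) M))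
        rw [norm_mul]
        refine (mul_le_of_le_one_right (norm_nonneg _) (norm_coe_pow_le t₀ j)).trans
          ((hB _).trans ?_)
        have := hB.nonneg
        have := pow_le_pow_of_le_one hp.le (pinv_le_one (p := p)) (show j ≤ k + j + 1 by omega)
        gcongr
      constructor
      · rcases hA.eq_or_lt with h0 | h0
        · have : coeff l (sh φ t₀) = 0 := by
            rw [sh, coeff_mk]
            convert tsum_zero with j
            rcases Nat.eq_zero_or_pos j with rfl | hj
            · have := h.1; rw [← h0, norm_eq_zero] at this
              simp [this]
            · have := h.2 (l + j + 1) (by omega)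
              rw [← h0, zero_mul, norm_le_zero_iff] at this
              simp [this]
          rw [this, norm_zero, h0]
        · rw [sh, coeff_mk, (hs l).tsum_eq_zero_add]
          have h1 : ‖∑' k, coeff (l + (k + 1) + 1) φ * (t₀ : ℚ_[p]) ^ (k + 1)‖
              ≤ A * (p : ℝ)⁻¹ := by
            refine IsUltrametricDist.norm_tsum_le_of_forall_le_of_nonneg (by positivity)
              fun k => ?_
            rw [norm_mul]
            exact (mul_le_of_le_one_right (norm_nonneg _) (norm_coe_pow_le t₀ _)).trans
              (h.2 _ (by omega))
          have h2 : A * (p : ℝ)⁻¹ < A := mul_lt_of_lt_one_right h0 pinv_lt_one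
          have h3 : ‖coeff (l + 0 + 1) φ * (t₀ : ℚ_[p]) ^ 0‖ = A := by
            rw [pow_zero, mul_one]; exact h.1
          rw [IsUltrametricDist.norm_add_eq_max_of_norm_ne_norm
            (by rw [h3]; exact (h1.trans_lt h2).ne'), h3, max_eq_left (h1.trans h2.le)]
      · intro k hk
        rw [sh, coeff_mk]
        refine IsUltrametricDist.norm_tsum_le_of_forall_le_of_nonneg (by positivity) fun j => ?_
        rw [norm_mul]
        exact (mul_le_of_le_one_right (norm_nonneg _) (norm_coe_pow_le t₀ _)).trans
          (h.2 _ (by omega))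
    refine (ih (hB.sh t₀) hd _).congr fun t ht => ?_
    have hne : (t : ℚ_[p]) - t₀ ≠ 0 := by
      rw [sub_ne_zero]
      intro e
      exact ht.2 (PadicInt.ext e)
    rw [ev_sh hB t t₀, mul_div_cancel_left₀ _ hne]

lemma norm_sub_le_max_ultra {E : Type*} [SeminormedAddCommGroup E] [IsUltrametricDist E] (a b : E) :
    ‖a - b‖ ≤ max ‖a‖ ‖b‖ := by
  rw [sub_eq_add_neg, ← norm_neg b]
  exact IsUltrametricDist.norm_add_le_max _ _

lemma norm_coe_sub (t u : ℤ_[p]) : ‖(t : ℚ_[p]) - u‖ = ‖t - u‖ := by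
  rw [PadicInt.norm_def, PadicInt.coe_sub]

variable [MeasurableSpace ℤ_[p]]

/-- Dichotomy for the sublevel set `{‖h‖ < ε}`: either it is covered by `l` balls of radius `δ`,
or `h` is small throughout `S`. Each node taken in the sublevel set removes one ball and lowers
the order of the divided differences by one. -/
lemma IsDD.sublevel (ν : Measure ℤ_[p]) {l : ℕ} {A R δ ε : ℝ} {h : ℤ_[p] → ℚ_[p]}
    {S : Set ℤ_[p]} (hS : ∀ t ∈ S, ∀ u ∈ S, ‖t - u‖ ≤ R) (hδ : 0 < δ) (hR : δ ≤ R)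
    (H : IsDD l A h S) (v : ENNReal) (hv : ∀ t, ν {u | ‖u - t‖ ≤ δ} ≤ v) :
    ν {t | t ∈ S ∧ ‖h t‖ < ε} ≤ l * v ∨
      ((∀ t ∈ S, ‖h t‖ < ε * (R / δ) ^ l) ∧ A < ε * (1 / δ) ^ l) := by
  induction l generalizing h S ε with
  | zero =>
    rcases Set.eq_empty_or_nonempty {t | t ∈ S ∧ ‖h t‖ < ε} with h0 | ⟨t₀, ht₀, ht₁⟩
    · left; rw [h0]; simp
    · right
      have e : ‖h t₀‖ = A := H t₀ ht₀
      refine ⟨fun t ht => ?_, by simpa [← e] using ht₁⟩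
      have e' : ‖h t‖ = A := H t ht
      rw [e', ← e]; simpa using ht₁
  | succ l ih =>
    rcases Set.eq_empty_or_nonempty {t | t ∈ S ∧ ‖h t‖ < ε} with h0 | ⟨t₀, ht₀, ht₁⟩
    · left; rw [h0]; simp
    have hε : 0 < ε := (norm_nonneg _).trans_lt ht₁
    rcases ih (ε := ε / δ) (fun t ht u hu => hS t ht.1 u hu.1) (H t₀ ht₀) with h1 | ⟨h1, h2⟩
    · left
      have hsub : {t | t ∈ S ∧ ‖h t‖ < ε} ⊆ {u | ‖u - t₀‖ ≤ δ} ∪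
          {t | t ∈ S \ {t₀} ∧ ‖(h t - h t₀) / ((t : ℚ_[p]) - (t₀ : ℚ_[p]))‖ < ε / δ} := by
        rintro t ⟨htS, ht⟩
        by_cases hd : ‖t - t₀‖ ≤ δ
        · exact Or.inl hd
        · right
          push Not at hd
          refine ⟨⟨htS, fun e => ?_⟩, ?_⟩
          · rw [e, sub_self, norm_zero] at hd
            exact absurd hd hδ.le.not_gt
          · rw [norm_div, norm_coe_sub]
            have h3 : ‖h t - h t₀‖ < ε :=
              (norm_sub_le_max_ultra _ _).trans_lt (max_lt ht ht₁)
            exact div_lt_div₀ h3 hd.le hε.le hδ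
      calc _ ≤ _ := measure_mono hsub
        _ ≤ _ := measure_union_le _ _
        _ ≤ v + l * v := add_le_add (hv t₀) h1
        _ = _ := by push_cast; ring
    · right
      have hRδ : 1 ≤ R / δ := (one_le_div hδ).mpr hR
      refine ⟨fun t ht => ?_, ?_⟩
      · by_cases e : t = t₀
        · rw [e]
          exact ht₁.trans_le (le_mul_of_one_le_right hε.le (one_le_pow₀ hRδ))
        · have hne : (t : ℚ_[p]) - t₀ ≠ 0 := by
            rw [sub_ne_zero]
            intro e'
            exact e (PadicInt.ext e')
          have h3 := h1 t ⟨ht, e⟩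
          have e2 : h t = ((t : ℚ_[p]) - t₀) * ((h t - h t₀) / ((t : ℚ_[p]) - t₀)) + h t₀ := by
            field_simp; ring
          rw [e2]
          refine (IsUltrametricDist.norm_add_le_max _ _).trans_lt (max_lt ?_ ?_)
          · rw [norm_mul, norm_coe_sub]
            calc _ ≤ R * ‖(h t - h t₀) / ((t : ℚ_[p]) - (t₀ : ℚ_[p]))‖ := by
                  gcongr
                  exact hS t ht t₀ ht₀
              _ < R * (ε / δ * (R / δ) ^ l) := by
                  have : 0 < R := hδ.trans_le hR
                  gcongr
              _ = _ := by rw [pow_succ]; ring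
          · exact ht₁.trans_le (le_mul_of_one_le_right hε.le (one_le_pow₀ hRδ))
      · calc A < ε / δ * (1 / δ) ^ l := h2
          _ = _ := by rw [pow_succ]; ring

/-- The closed ball of radius `p⁻ʲ` about `t`. -/
def bl (t : ℤ_[p]) (j : ℕ) : Set ℤ_[p] := {u | ‖u - t‖ ≤ (p : ℝ)⁻¹ ^ j}

/-- `ν` is the normalized Haar measure, as far as balls are concerned. -/
def IsUnif (ν : Measure ℤ_[p]) : Prop :=
  ∀ t j, ν (bl t j) = ENNReal.ofReal ((p : ℝ)⁻¹ ^ j)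

/-- A quantitative form of the `(C, α)`-good property at the fixed scale `m`: on every ball, the
points where `ψ` is smaller than `p^{-mL}` times one of its values on the ball occupy a proportion
of at most `L p⁻ᵐ`. -/
def Good (ν : Measure ℤ_[p]) (L m : ℕ) (ψ : ℤ_[p] → ℝ) : Prop :=
  ∀ t₀ j, ∀ t' ∈ bl t₀ j, ν {t | t ∈ bl t₀ j ∧ ψ t * (p : ℝ) ^ (m * L) < ψ t'}
    ≤ L * ENNReal.ofReal ((p : ℝ)⁻¹ ^ (j + m))

omit [MeasurableSpace ℤ_[p]] in
lemma bl_diam {t₀ t u : ℤ_[p]} {j : ℕ} (ht : t ∈ bl t₀ j) (hu : u ∈ bl t₀ j) :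
    ‖t - u‖ ≤ (p : ℝ)⁻¹ ^ j := by
  have e : t - u = (t - t₀) - (u - t₀) := by ring
  rw [e]
  exact (norm_sub_le_max_ultra _ _).trans (max_le ht hu)

omit [MeasurableSpace ℤ_[p]] in
lemma mem_bl_self (t : ℤ_[p]) (j : ℕ) : t ∈ bl t j := by
  have := pinv_pos (p := p)
  simp only [bl, Set.mem_ofPred_eq, sub_self, norm_zero]
  positivity

omit [MeasurableSpace ℤ_[p]] in
lemma p_pos : 0 < (p : ℝ) := by exact_mod_cast (Fact.out : p.Prime).pos

omit [MeasurableSpace ℤ_[p]] in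
lemma one_le_p : 1 ≤ (p : ℝ) := by exact_mod_cast (Fact.out : p.Prime).one_lt.le

lemma DDc.good {ν : Measure ℤ_[p]} (hν : IsUnif ν) {l L : ℕ} (hl : l ≤ L) {A M : ℝ}
    {φ : PowerSeries ℚ_[p]} (hB : Bd M φ) (h : DDc l A φ) (m : ℕ) :
    Good ν L m (fun t => ‖ev φ t‖) := by
  intro t₀ j t' ht'
  have hp := pinv_pos (p := p)
  have hp' := p_pos (p := p)
  rcases (h.isDD hB (bl t₀ j)).sublevel ν (R := (p : ℝ)⁻¹ ^ j) (δ := (p : ℝ)⁻¹ ^ (j + m))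
    (ε := ‖ev φ t'‖ / (p : ℝ) ^ (m * L))
    (fun t ht u hu => bl_diam ht hu) (by positivity)
    (pow_le_pow_of_le_one hp.le pinv_le_one (by omega)) (ENNReal.ofReal ((p : ℝ)⁻¹ ^ (j + m)))
    (fun t => (hν t (j + m)).le) with h1 | ⟨h1, _⟩
  · refine le_trans (measure_mono ?_) (h1.trans ?_)
    · rintro t ⟨ht, ht1⟩
      exact ⟨ht, (lt_div_iff₀ (by positivity)).mpr ht1⟩
    · gcongr
  · exfalso
    have h2 := h1 t' ht'
    have e : ((p : ℝ)⁻¹ ^ j / (p : ℝ)⁻¹ ^ (j + m)) ^ l = (p : ℝ) ^ (m * l) := by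
      rw [pow_add, pow_mul, inv_pow, inv_pow]
      congr 1
      field_simp
    rw [e] at h2
    have h3 : (p : ℝ) ^ (m * l) ≤ (p : ℝ) ^ (m * L) :=
      pow_le_pow_right₀ one_le_p (Nat.mul_le_mul_left m hl)
    have h4 : ‖ev φ t'‖ / (p : ℝ) ^ (m * L) * (p : ℝ) ^ (m * l) ≤ ‖ev φ t'‖ := by
      rw [div_mul_eq_mul_div, div_le_iff₀ (by positivity)]
      gcongr
    exact absurd h2 h4.not_gt

/-- The norm cannot be small on a whole ball: otherwise the sublevel dichotomy would bound the
dominant coefficient. -/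
lemma DDc.exists_large {ν : Measure ℤ_[p]} (hν : IsUnif ν) {l L : ℕ} (hl : l ≤ L) {A M : ℝ}
    {φ : PowerSeries ℚ_[p]} (hB : Bd M φ) (h : DDc l A φ) {m : ℕ}
    (hm : L * (p : ℝ)⁻¹ ^ m < 1) (t₀ : ℤ_[p]) (j : ℕ) :
    ∃ t ∈ bl t₀ j, A * ((p : ℝ)⁻¹ ^ (j + m)) ^ L ≤ ‖ev φ t‖ := by
  have hp := pinv_pos (p := p)
  have hA : 0 ≤ A := h.1 ▸ norm_nonneg _
  by_contra! hcon
  rcases (h.isDD hB (bl t₀ j)).sublevel ν (R := (p : ℝ)⁻¹ ^ j) (δ := (p : ℝ)⁻¹ ^ (j + m))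
    (ε := A * ((p : ℝ)⁻¹ ^ (j + m)) ^ L)
    (fun t ht u hu => bl_diam ht hu) (by positivity)
    (pow_le_pow_of_le_one hp.le pinv_le_one (by omega)) (ENNReal.ofReal ((p : ℝ)⁻¹ ^ (j + m)))
    (fun t => (hν t (j + m)).le) with h1 | ⟨_, h1⟩
  · have e : {t | t ∈ bl t₀ j ∧ ‖ev φ t‖ < A * ((p : ℝ)⁻¹ ^ (j + m)) ^ L} = bl t₀ j := by
      ext t
      exact ⟨fun h => h.1, fun h => ⟨h, hcon t h⟩⟩
    rw [e, hν] at h1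
    have e2 : (l : ENNReal) * ENNReal.ofReal ((p : ℝ)⁻¹ ^ (j + m))
        = ENNReal.ofReal (l * (p : ℝ)⁻¹ ^ (j + m)) := by
      rw [ENNReal.ofReal_mul (by positivity), ENNReal.ofReal_natCast]
    rw [e2, ENNReal.ofReal_le_ofReal_iff (by positivity), pow_add] at h1
    have h3 : (l : ℝ) * (p : ℝ)⁻¹ ^ m < 1 := by
      refine lt_of_le_of_lt ?_ hm
      gcongr
    have h4 : 0 < (p : ℝ)⁻¹ ^ j := by positivity
    nlinarith
  · have h5 : ((p : ℝ)⁻¹ ^ (j + m)) ^ L ≤ ((p : ℝ)⁻¹ ^ (j + m)) ^ l :=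
      pow_le_pow_of_le_one (by positivity) (pow_le_one₀ hp.le pinv_le_one) hl
    have h6 : A * ((p : ℝ)⁻¹ ^ (j + m)) ^ L * (1 / (p : ℝ)⁻¹ ^ (j + m)) ^ l ≤ A := by
      rw [div_pow, one_pow, mul_one_div, div_le_iff₀ (by positivity)]
      gcongr
    exact absurd h1 h6.not_gt

lemma Good.const {ν : Measure ℤ_[p]} (L m : ℕ) {ψ : ℤ_[p] → ℝ} (h0 : ∀ t, 0 ≤ ψ t)
    (h : ∀ t u, ψ t = ψ u) :
    Good ν L m ψ := by
  intro t₀ j t' _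
  have : {t | t ∈ bl t₀ j ∧ ψ t * (p : ℝ) ^ (m * L) < ψ t'} = ∅ := by
    ext t
    simp only [Set.mem_ofPred_eq, Set.mem_empty_iff_false, iff_false, not_and, not_lt]
    intro _
    rw [h t' t]
    exact le_mul_of_one_le_right (h0 t) (one_le_pow₀ one_le_p)
  rw [this]; simp

lemma Good.const_mul {ν : Measure ℤ_[p]} {L m : ℕ} {ψ : ℤ_[p] → ℝ} (h : Good ν L m ψ)
    {c : ℝ} (hc : 0 ≤ c) : Good ν L m (fun t => c * ψ t) := by
  intro t₀ j t' ht'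
  refine le_trans (measure_mono ?_) (h t₀ j t' ht')
  rintro t ⟨ht, h1⟩
  refine ⟨ht, ?_⟩
  rw [mul_assoc] at h1
  exact lt_of_mul_lt_mul_left h1 hc

lemma Good.iSup {ν : Measure ℤ_[p]} {L m : ℕ} {ι : Type*} [Finite ι] [Nonempty ι]
    {ψ : ι → ℤ_[p] → ℝ} (h : ∀ i, Good ν L m (ψ i)) : Good ν L m (fun t => ⨆ i, ψ i t) := by
  intro t₀ j t' ht'
  obtain ⟨i, hi⟩ := exists_eq_ciSup_of_finite (f := fun i => ψ i t')
  refine le_trans (measure_mono ?_) (h i t₀ j t' ht')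
  rintro t ⟨ht, h1⟩
  refine ⟨ht, lt_of_le_of_lt ?_ (h1.trans_eq hi.symm)⟩
  have := p_pos (p := p)
  gcongr
  exact le_ciSup (f := fun i => ψ i t) (Set.finite_range _).bddAbove i

end PadicND

/-! ### Quantitative nondivergence -/

namespace PadicND

variable {p : ℕ} [Fact p.Prime]

lemma bl_eq {t u : ℤ_[p]} {j : ℕ} (h : u ∈ bl t j) : bl u j = bl t j := by
  have key : ∀ {t u v : ℤ_[p]}, u ∈ bl t j → v ∈ bl u j → v ∈ bl t j := by
    intro t u v hu hv
    have e : v - t = (v - u) + (u - t) := by ring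
    simp only [bl, Set.mem_ofPred_eq] at *
    rw [e]
    exact (IsUltrametricDist.norm_add_le_max _ _).trans (max_le hv hu)
  have h' : t ∈ bl u j := by
    simp only [bl, Set.mem_ofPred_eq] at *
    rwa [norm_sub_rev]
  ext v
  exact ⟨key h, key h'⟩

lemma bl_anti (t : ℤ_[p]) {i j : ℕ} (h : i ≤ j) : bl t j ⊆ bl t i := fun _ hu =>
  le_trans hu (pow_le_pow_of_le_one (pinv_pos (p := p)).le pinv_le_one h)

lemma bl_appr (t : ℤ_[p]) (j : ℕ) : bl (t.appr j : ℤ_[p]) j = bl t j := by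
  refine bl_eq ?_
  have h := PadicInt.appr_spec j t
  rw [← PadicInt.norm_le_pow_iff_mem_span_pow] at h
  simp only [bl, Set.mem_ofPred_eq]
  rw [norm_sub_rev]
  refine h.trans_eq ?_
  rw [zpow_neg, zpow_natCast, inv_pow]

lemma bl_eq_closedBall (t : ℤ_[p]) (j : ℕ) : bl t j = Metric.closedBall t ((p : ℝ)⁻¹ ^ j) := by
  ext u; simp [bl, Metric.mem_closedBall, dist_eq_norm]

lemma ofReal_pinv_pow (j : ℕ) : ENNReal.ofReal ((p : ℝ)⁻¹ ^ j) = ((p : ENNReal)⁻¹) ^ j := by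
  rw [ENNReal.ofReal_pow (pinv_pos (p := p)).le, ENNReal.ofReal_inv_of_pos p_pos,
    ENNReal.ofReal_natCast]

lemma p_mul_pinv_pow (j : ℕ) : (p : ENNReal) * (p : ENNReal)⁻¹ ^ (j + 1) = (p : ENNReal)⁻¹ ^ j := by
  rw [pow_succ, mul_left_comm, ENNReal.mul_inv_cancel, mul_one]
  · exact_mod_cast (Fact.out : p.Prime).ne_zero
  · exact ENNReal.natCast_ne_top p

variable [MeasurableSpace ℤ_[p]] [BorelSpace ℤ_[p]]

lemma measurableSet_bl (t : ℤ_[p]) (j : ℕ) : MeasurableSet (bl t j) := by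
  rw [bl_eq_closedBall]
  exact Metric.isClosed_closedBall.measurableSet

/-- A set whose proportion is at most `c` in some ball about each of its points has proportion at
most `c` overall: the maximal such balls are disjoint. -/
lemma measure_le_of_local {ν : Measure ℤ_[p]} {E : Set ℤ_[p]} {t₀ : ℤ_[p]} {J : ℕ} {c : ENNReal}
    (hE : E ⊆ bl t₀ J) (h : ∀ t ∈ E, ∃ i, J ≤ i ∧ ν (E ∩ bl t i) ≤ c * ν (bl t i)) :
    ν E ≤ c * ν (bl t₀ J) := by
  classical
  let F : Set (Set ℤ_[p]) := {B | ∃ t, t ∈ E ∧ ∃ i, J ≤ i ∧ B = bl t i ∧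
    ν (E ∩ bl t i) ≤ c * ν (bl t i) ∧ ∀ k < i, ¬ (J ≤ k ∧ ν (E ∩ bl t k) ≤ c * ν (bl t k))}
  have hF : F.Countable := by
    refine (Set.countable_range fun x : ℕ × ℕ => bl (x.1 : ℤ_[p]) x.2).mono ?_
    rintro B ⟨t, _, i, _, rfl, _⟩
    exact ⟨(t.appr i, i), bl_appr t i⟩
  have hcov : E ⊆ ⋃ B ∈ F, E ∩ B := by
    intro t ht
    have hf := Nat.find_spec (h t ht)
    simp only [Set.mem_iUnion]
    exact ⟨_, ⟨t, ht, _, hf.1, rfl, hf.2, fun k hk => Nat.find_min (h t ht) hk⟩, ht,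
      mem_bl_self _ _⟩
  have hdis : F.PairwiseDisjoint id := by
    have key : ∀ {t t' : ℤ_[p]} {i i' : ℕ}, i ≤ i' → J ≤ i → ν (E ∩ bl t i) ≤ c * ν (bl t i) →
        (∀ k < i', ¬ (J ≤ k ∧ ν (E ∩ bl t' k) ≤ c * ν (bl t' k))) →
        (bl t i ∩ bl t' i').Nonempty → bl t i = bl t' i' := by
      rintro t t' i i' hii hJ hg hmin ⟨u, hu, hu'⟩
      have e : bl t i = bl t' i := (bl_eq hu).symm.trans (bl_eq (bl_anti t' hii hu'))
      rcases hii.eq_or_lt with rfl | hlt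
      · exact e
      · exact absurd ⟨hJ, e ▸ hg⟩ (hmin i hlt)
    rintro B ⟨t, _, i, hJ, rfl, hg, hmin⟩ B' ⟨t', _, i', hJ', rfl, hg', hmin'⟩ hne
    by_contra hnd
    rw [Function.onFun, Set.not_disjoint_iff_nonempty_inter] at hnd
    rcases le_total i i' with hii | hii
    · exact hne (key hii hJ hg hmin' hnd)
    · refine hne (key hii hJ' hg' hmin ?_).symm
      rw [Set.inter_comm]; exact hnd
  calc ν E ≤ ν (⋃ B ∈ F, E ∩ B) := measure_mono hcov
    _ ≤ ∑' B : F, ν (E ∩ B) := measure_biUnion_le ν hF _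
    _ ≤ ∑' B : F, c * ν B := by
        refine ENNReal.tsum_le_tsum ?_
        rintro ⟨B, t, _, i, _, rfl, hg, _⟩
        exact hg
    _ = c * ν (⋃ B ∈ F, B) := by
        rw [ENNReal.tsum_mul_left]
        refine congrArg (c * ·) (measure_biUnion (f := id) hF hdis ?_).symm
        rintro B ⟨t, _, i, _, rfl, _⟩
        exact measurableSet_bl t i
    _ ≤ c * ν (bl t₀ J) := by
        gcongr
        refine Set.iUnion₂_subset ?_
        rintro B ⟨t, ht, i, hJ, rfl, _⟩
        rw [← bl_eq (hE ht)]
        exact bl_anti t hJ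

/-- The point `t` is marked by a chain `C ⊆ S` on which `ψ · t` lies in `[ε, 1)`, while every
other element of `S` comparable with all of `C` has `ψ` at least `1`. -/
def Marked {P : Type*} [PartialOrder P] (ε : ℝ) (ψ : P → ℤ_[p] → ℝ) (S : Set P) (t : ℤ_[p]) :
    Prop :=
  ∃ C : Set P, C ⊆ S ∧ (∀ a ∈ C, ∀ b ∈ C, a ≤ b ∨ b ≤ a) ∧ (∀ s ∈ C, ε ≤ ψ s t ∧ ψ s t < 1) ∧
    ∀ s ∈ S, s ∉ C → (∀ c ∈ C, s ≤ c ∨ c ≤ s) → 1 ≤ ψ s t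

/-- The proportion of unmarked points when the ranks take `k` values. -/
noncomputable def unmarkedBound (p L m : ℕ) : ℕ → ENNReal
  | 0 => 0
  | k + 1 => p * (L * (p : ENNReal)⁻¹ ^ m + unmarkedBound p L m k)

/-- Quantitative nondivergence, after Kleinbock and Margulis: if no `ψ s` is below `1` on the whole
ball, then most points of the ball are marked. About an unmarked point take the largest ball on
which some `ψ s` stays below `1`; there, away from the points with `ψ s < ε`, being unmarked is
inherited by the set of elements comparable with `s`, which has fewer ranks. -/
theorem measure_unmarked_le {ν : Measure ℤ_[p]} (hν : IsUnif ν) {L m : ℕ} {ε : ℝ}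
    (hε : ε * (p : ℝ) ^ (m * L) ≤ 1) {P : Type*} [PartialOrder P] {rk : P → ℕ}
    (hrk : StrictMono rk) {ψ : P → ℤ_[p] → ℝ} (k : ℕ) :
    ∀ (S : Set P) (R : Finset ℕ), R.card = k → (∀ s ∈ S, rk s ∈ R) →
      (∀ s ∈ S, Continuous (ψ s)) → (∀ s ∈ S, Good ν L m (ψ s)) →
      ∀ t₀ j, (∀ s ∈ S, ∃ t ∈ bl t₀ j, 1 ≤ ψ s t) →
        ν {t | t ∈ bl t₀ j ∧ ¬ Marked ε ψ S t} ≤ unmarkedBound p L m k * ν (bl t₀ j) := by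
  classical
  induction k with
  | zero =>
    intro S R hR hS _ _ t₀ j _
    have hR' := Finset.card_eq_zero.mp hR
    have : {t | t ∈ bl t₀ j ∧ ¬ Marked ε ψ S t} = ∅ := by
      ext t
      simp only [Set.mem_ofPred_eq, Set.mem_empty_iff_false, iff_false, not_and, not_not]
      refine fun _ => ⟨∅, by simp, by simp, by simp, fun s hs => ?_⟩
      have := hS s hs
      simp [hR'] at this
    rw [this]; simp
  | succ k ih =>
    intro S R hR hS hc hg t₀ j h1
    refine measure_le_of_local (fun t ht => ht.1) ?_
    rintro t ⟨htT, ht⟩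
    have hex : ∃ i, ∃ s ∈ S, ∀ u ∈ bl t i, ψ s u < 1 := by
      have : ∃ s ∈ S, ψ s t < 1 := by
        by_contra! hcon
        exact ht ⟨∅, by simp, by simp, by simp, fun s hs _ _ => hcon s hs⟩
      obtain ⟨s, hs, hst⟩ := this
      have hn : {u | ψ s u < 1} ∈ nhds t :=
        (isOpen_lt (hc s hs) continuous_const).mem_nhds hst
      obtain ⟨r, hr, hr'⟩ := Metric.mem_nhds_iff.mp hn
      obtain ⟨i, hi⟩ := exists_pow_lt_of_lt_one hr (pinv_lt_one (p := p))
      refine ⟨i, s, hs, fun u hu => hr' ?_⟩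
      rw [Metric.mem_ball, dist_eq_norm]
      exact lt_of_le_of_lt hu hi
    obtain ⟨s, hs, hlt⟩ := Nat.find_spec hex
    have hmin := fun {i} => Nat.find_min hex (m := i)
    generalize Nat.find hex = j' at hlt hmin
    have hjj : j < j' := by
      by_contra! hle
      obtain ⟨u, hu, hu1⟩ := h1 s hs
      rw [← bl_eq htT] at hu
      exact (hlt u (bl_anti t hle hu)).not_ge hu1
    obtain ⟨i, rfl⟩ := Nat.exists_eq_succ_of_ne_zero (by omega : j' ≠ 0)
    refine ⟨i + 1, hjj.le, ?_⟩
    have hbig : ∀ r ∈ S, ∃ u ∈ bl t i, 1 ≤ ψ r u := by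
      have := hmin (i := i) (by omega)
      push Not at this
      exact this
    obtain ⟨u₁, hu₁, hψ₁⟩ := hbig s hs
    set S' : Set P := {r | r ∈ S ∧ r ≠ s ∧ (r ≤ s ∨ s ≤ r)} with hS'
    have hsub : {t | t ∈ bl t₀ j ∧ ¬ Marked ε ψ S t} ∩ bl t (i + 1) ⊆
        {u | u ∈ bl t i ∧ ψ s u * (p : ℝ) ^ (m * L) < ψ s u₁} ∪
          {u | u ∈ bl t i ∧ ¬ Marked ε ψ S' u} := by
      rintro u ⟨⟨_, hu⟩, hu'⟩
      have hui := bl_anti t (Nat.le_succ i) hu'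
      by_contra hcon
      simp only [Set.mem_union, Set.mem_ofPred_eq, not_or, not_and, not_not, not_lt] at hcon
      obtain ⟨C, hCS, hch, hC, hmax⟩ := hcon.2 hui
      have hεs : ε ≤ ψ s u := by
        have h2 := hψ₁.trans (hcon.1 hui)
        have h3 : 0 < (p : ℝ) ^ (m * L) := by
          have := p_pos (p := p); positivity
        exact le_of_mul_le_mul_right (hε.trans h2) h3
      refine hu ⟨insert s C, Set.insert_subset hs (hCS.trans fun r hr => hr.1), ?_, ?_, ?_⟩
      · rintro a (rfl | ha) b (rfl | hb)
        · exact Or.inl le_rfl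
        · exact (hCS hb).2.2.symm
        · exact (hCS ha).2.2
        · exact hch a ha b hb
      · rintro a (rfl | ha)
        · exact ⟨hεs, hlt u hu'⟩
        · exact hC a ha
      · intro r hr hrC hcomp
        simp only [Set.mem_insert_iff, not_or] at hrC
        exact hmax r ⟨hr, hrC.1, hcomp s (Set.mem_insert _ _)⟩ hrC.2
          fun c hc => hcomp c (Set.mem_insert_of_mem _ hc)
    have hrec := ih S' (R.erase (rk s)) (by rw [Finset.card_erase_of_mem (hS s hs), hR]; rfl)
      (fun r hr => Finset.mem_erase.mpr ⟨?_, hS r hr.1⟩) (fun r hr => hc r hr.1)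
      (fun r hr => hg r hr.1) t i (fun r hr => hbig r hr.1)
    · refine (measure_mono hsub).trans ((measure_union_le _ _).trans
        ((add_le_add (hg s hs t i u₁ hu₁) hrec).trans_eq ?_))
      rw [hν, hν, ofReal_pinv_pow, ofReal_pinv_pow, ofReal_pinv_pow, ← p_mul_pinv_pow i,
        unmarkedBound, pow_add, ← p_mul_pinv_pow i]
      ring
    · rcases hr.2.2 with h | h
      · exact (hrk (lt_of_le_of_ne h hr.2.1)).ne
      · exact (hrk (lt_of_le_of_ne h hr.2.1.symm)).ne'

omit [MeasurableSpace ℤ_[p]] [BorelSpace ℤ_[p]] in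
/-- At a fine enough scale the proportion of unmarked points is as small as desired. -/
lemma unmarkedBound_le (L k : ℕ) {c : ENNReal} (hc : 0 < c) :
    ∃ m₀, ∀ m, m₀ ≤ m → unmarkedBound p L m k ≤ c := by
  have key : Filter.Tendsto (fun m => unmarkedBound p L m k) Filter.atTop (nhds 0) := by
    induction k with
    | zero => exact tendsto_const_nhds
    | succ k ih =>
      have h1 : Filter.Tendsto (fun m => (p : ENNReal)⁻¹ ^ m) Filter.atTop (nhds 0) := by
        refine ENNReal.tendsto_pow_atTop_nhds_zero_of_lt_one ?_
        rw [ENNReal.inv_lt_one]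
        exact_mod_cast (Fact.out : p.Prime).one_lt
      have h2 := ENNReal.Tendsto.const_mul (a := (p : ENNReal)) ((ENNReal.Tendsto.const_mul
        (a := (L : ENNReal)) h1 (Or.inr (ENNReal.natCast_ne_top L))).add ih)
        (Or.inr (ENNReal.natCast_ne_top p))
      simpa [unmarkedBound] using h2
  exact Filter.eventually_atTop.mp (key.eventually_le_const hc)

end PadicND

/-! ### Weighted maximal minors -/

namespace PadicND

/-- The largest weighted maximal minor of an `r × ι` matrix, that is, a norm of the wedge product
of its rows. Repeated columns are allowed, as they contribute zero. -/
noncomputable def minorSup {K ι : Type*} [NormedField K] (w : ι → ℝ) {r : ℕ}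
    (M : Matrix (Fin r) ι K) : ℝ :=
  ⨆ J : Fin r → ι, (∏ k, w (J k)) * ‖(M.submatrix id J).det‖

section minorSup

variable {K ι : Type*} [NormedField K] [Finite ι] {w : ι → ℝ} {r : ℕ}

lemma le_minorSup (M : Matrix (Fin r) ι K) (J : Fin r → ι) :
    (∏ k, w (J k)) * ‖(M.submatrix id J).det‖ ≤ minorSup w M :=
  le_ciSup (f := fun J : Fin r → ι => (∏ k, w (J k)) * ‖(M.submatrix id J).det‖)
    (Set.finite_range _).bddAbove J

omit [Finite ι] in
lemma minorSup_nonneg (hw : ∀ k, 0 ≤ w k) (M : Matrix (Fin r) ι K) : 0 ≤ minorSup w M :=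
  Real.iSup_nonneg fun _ => mul_nonneg (Finset.prod_nonneg fun _ _ => hw _) (norm_nonneg _)

omit [Finite ι] in
lemma minorSup_mul (A : Matrix (Fin r) (Fin r) K) (M : Matrix (Fin r) ι K) :
    minorSup w (A * M) = ‖A.det‖ * minorSup w M := by
  unfold minorSup
  rw [Real.mul_iSup_of_nonneg (norm_nonneg _)]
  congr 1 with J
  have : (A * M).submatrix id J = A * M.submatrix id J := by
    ext i j; rfl
  rw [this, Matrix.det_mul, norm_mul]
  ring

omit [Finite ι] in
lemma minorSup_zero (M : Matrix (Fin 0) ι K) : minorSup w M = 1 := by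
  unfold minorSup
  have : ∀ J : Fin 0 → ι, (∏ k, w (J k)) * ‖(M.submatrix id J).det‖ = 1 := fun J => by simp
  simp_rw [this]
  exact ciSup_const

/-- Laplace expansion along the added row. -/
lemma minorSup_cons_le (hw : ∀ k, 0 ≤ w k) {v : ι → K} {M : Matrix (Fin r) ι K} {h : ℝ}
    (h0 : 0 ≤ h) (hv : ∀ k, w k * ‖v k‖ ≤ h) :
    minorSup w (Matrix.of (Fin.cons v M)) ≤ (r + 1) * h * minorSup w M := by
  have hM := minorSup_nonneg hw M
  refine Real.iSup_le (fun J => ?_) (by positivity)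
  rw [Matrix.det_succ_row_zero]
  have hP : 0 ≤ ∏ k, w (J k) := Finset.prod_nonneg fun k _ => hw _
  calc _ ≤ (∏ k, w (J k)) * ∑ j : Fin (r + 1), ‖v (J j)‖ *
        ‖(M.submatrix id (J ∘ j.succAbove)).det‖ := by
        refine mul_le_mul_of_nonneg_left ((norm_sum_le _ _).trans
          (Finset.sum_le_sum fun j _ => ?_)) hP
        rw [norm_mul, norm_mul, norm_pow, norm_neg, norm_one, one_pow, one_mul]
        rfl
    _ = ∑ j : Fin (r + 1), (w (J j) * ‖v (J j)‖) * ((∏ k, w ((J ∘ j.succAbove) k)) *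
        ‖(M.submatrix id (J ∘ j.succAbove)).det‖) := by
        rw [Finset.mul_sum]
        refine Finset.sum_congr rfl fun j _ => ?_
        rw [Fin.prod_univ_succAbove _ j]
        simp only [Function.comp_apply]
        ring
    _ ≤ ∑ j : Fin (r + 1), h * minorSup w M := by
        refine Finset.sum_le_sum fun j _ => mul_le_mul (hv _) (le_minorSup M _)
          (mul_nonneg (Finset.prod_nonneg fun k _ => hw _) (norm_nonneg _)) h0
    _ = _ := by
        rw [Finset.sum_const, Finset.card_univ, Fintype.card_fin, nsmul_eq_mul]
        push_cast; ring

end minorSup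

/-- A Plücker relation: as a function of two of its columns, a determinant is, up to the factor
`det A`, the wedge product of two linear forms. -/
lemma det_mul_det_updateCol {K : Type*} [Field K] {r : ℕ} (A : Matrix (Fin r) (Fin r) K)
    {k₀ k₁ : Fin r} (hk : k₀ ≠ k₁) (Y Z : Fin r → K) :
    A.det * ((A.updateCol k₁ Z).updateCol k₀ Y).det
      = A.cramer Y k₀ * A.cramer Z k₁ - A.cramer Y k₁ * A.cramer Z k₀ := by
  have h1 : A.det • Y = ∑ k, A.cramer Y k • A.col k := by
    rw [← Matrix.mulVec_cramer]
    ext i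
    simp [Matrix.mulVec, dotProduct, mul_comm]
  have h2 : A.det * ((A.updateCol k₁ Z).updateCol k₀ Y).det
      = (A.updateCol k₁ Z).cramer (A.det • Y) k₀ := by
    rw [map_smul, Pi.smul_apply, Matrix.cramer_apply, smul_eq_mul]
  rw [h2, h1, map_sum, Finset.sum_apply]
  have h3 : ∀ k, k ≠ k₀ → k ≠ k₁ →
      (A.updateCol k₁ Z).cramer (A.cramer Y k • A.col k) k₀ = 0 := by
    intro k hk0 hk1
    have h : (A.updateCol k₁ Z).cramer (A.col k) k₀ = 0 := by
      rw [Matrix.cramer_apply]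
      exact Matrix.det_zero_of_column_eq hk0 (by intro i; simp [hk0, hk1])
    rw [map_smul, Pi.smul_apply, h, smul_zero]
  rw [← Finset.sum_subset (Finset.subset_univ {k₀, k₁}) (fun k _ hk' => by
    simp only [Finset.mem_insert, Finset.mem_singleton, not_or] at hk'
    exact h3 k hk'.1 hk'.2), Finset.sum_pair hk]
  have h4 : (A.updateCol k₁ Z).cramer (A.col k₀) k₀ = A.cramer Z k₁ := by
    rw [Matrix.cramer_apply, Matrix.cramer_apply]
    congr 1
    ext i j
    by_cases h : j = k₀
    · subst h; simp [hk]
    · simp [Matrix.updateCol_apply, h]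
  have h5 : (A.updateCol k₁ Z).cramer (A.col k₁) k₀ = - A.cramer Z k₀ := by
    rw [Matrix.cramer_apply, Matrix.cramer_apply]
    have : (A.updateCol k₁ Z).updateCol k₀ (A.col k₁)
        = (A.updateCol k₀ Z).submatrix id (Equiv.swap k₀ k₁) := by
      ext i j
      rcases eq_or_ne j k₀ with rfl | h
      · simp [hk.symm]
      rcases eq_or_ne j k₁ with rfl | h'
      · simp [h]
      · simp [h, h', Equiv.swap_apply_of_ne_of_ne h h']
    rw [this, Matrix.det_permute', Equiv.Perm.sign_swap hk]
    simp
  rw [map_smul, map_smul, Pi.smul_apply, Pi.smul_apply, h4, h5]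
  simp only [smul_eq_mul]
  ring

end PadicND

/-! ### Integral bases of rational subspaces -/

namespace PadicND

/-- The inclusion `ℤ^N → ℚ^N`. -/
def toQ (N : ℕ) : (Fin N → ℤ) →ₗ[ℤ] (Fin N → ℚ) :=
  (Algebra.linearMap ℤ ℚ).compLeft (Fin N)

@[simp] lemma toQ_apply {N : ℕ} (u : Fin N → ℤ) (x : Fin N) : toQ N u x = u x := rfl

lemma toQ_injective (N : ℕ) : Function.Injective (toQ N) := fun u v h => by
  ext x
  have := congrFun h x
  simpa using this

/-- The integer vectors `b` are a `ℚ`-basis of `V` and a `ℤ`-basis of `V ∩ ℤ^N`. -/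
structure IsIntBasis {N r : ℕ} (V : Submodule ℚ (Fin N → ℚ)) (b : Fin r → Fin N → ℤ) : Prop where
  li : LinearIndependent ℚ fun i => toQ N (b i)
  span : Submodule.span ℚ (Set.range fun i => toQ N (b i)) = V
  int : ∀ u : Fin N → ℤ, toQ N u ∈ V → u ∈ Submodule.span ℤ (Set.range b)

lemma IsIntBasis.finrank {N r : ℕ} {V : Submodule ℚ (Fin N → ℚ)} {b : Fin r → Fin N → ℤ}
    (h : IsIntBasis V b) : Module.finrank ℚ V = r := by
  rw [← h.span, finrank_span_eq_card h.li, Fintype.card_fin]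

lemma exists_int_multiple {N : ℕ} (u : Fin N → ℚ) :
    ∃ c : ℤ, c ≠ 0 ∧ ∃ w : Fin N → ℤ, toQ N w = (c : ℚ) • u := by
  obtain ⟨c, hc⟩ := IsLocalization.exist_integer_multiples_of_finite (nonZeroDivisors ℤ) u
  choose w hw using hc
  refine ⟨c, nonZeroDivisors.ne_zero c.2, w, ?_⟩
  ext x
  have := hw x
  simpa [Submonoid.smul_def] using this

lemma exists_isIntBasis {N : ℕ} (V : Submodule ℚ (Fin N → ℚ)) :
    ∃ r, ∃ b : Fin r → Fin N → ℤ, IsIntBasis V b := by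
  let L : Submodule ℤ (Fin N → ℤ) := (V.restrictScalars ℤ).comap (toQ N)
  obtain ⟨r, ⟨β⟩⟩ := Submodule.nonempty_basis_of_pid (Pi.basisFun ℤ (Fin N)) L
  have hspan : Submodule.span ℤ (Set.range fun i => (β i : Fin N → ℤ)) = L := by
    have h1 : (Set.range fun i => (β i : Fin N → ℤ)) = L.subtype '' Set.range β := by
      rw [← Set.range_comp]; rfl
    rw [h1, Submodule.span_image, β.span_eq, Submodule.map_top, Submodule.range_subtype]
  refine ⟨r, fun i => β i, ?_, ?_, ?_⟩
  · rw [← LinearIndependent.iff_fractionRing ℤ ℚ]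
    have h1 := (β.linearIndependent.map' L.subtype (Submodule.ker_subtype L)).map' (toQ N)
      (LinearMap.ker_eq_bot.mpr (toQ_injective N))
    exact h1
  · apply le_antisymm
    · rw [Submodule.span_le]
      rintro _ ⟨i, rfl⟩
      exact (β i).2
    · intro u hu
      obtain ⟨c, hc, w, hw⟩ := exists_int_multiple u
      have hwL : w ∈ L := by
        change toQ N w ∈ V
        rw [hw]; exact V.smul_mem _ hu
      rw [← hspan, Submodule.mem_span_range_iff_exists_fun] at hwL
      obtain ⟨e, he⟩ := hwL
      have hu' : u = (c : ℚ)⁻¹ • toQ N w := by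
        rw [hw, smul_smul, inv_mul_cancel₀ (by exact_mod_cast hc), one_smul]
      rw [hu', ← he, map_sum]
      refine Submodule.smul_mem _ _ (Submodule.sum_mem _ fun i _ => ?_)
      rw [map_smul, ← Int.cast_smul_eq_zsmul ℚ]
      exact Submodule.smul_mem _ _ (Submodule.subset_span ⟨i, rfl⟩)
  · intro u hu
    rw [hspan]
    exact hu

/-- The product formula, for the places `∞` and `p`: the other absolute values of an integer are at
most `1`. -/
lemma one_le_abs_mul_norm {p : ℕ} [Fact p.Prime] {z : ℤ} (hz : z ≠ 0) :
    1 ≤ ‖(z : ℝ)‖ * ‖(z : ℚ_[p])‖ := by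
  have hp : 0 < (p : ℝ) := by exact_mod_cast (Fact.out : p.Prime).pos
  have h1 : ‖(z : ℚ_[p])‖ = ((p : ℝ) ^ padicValInt p z)⁻¹ := by
    rw [Padic.norm_eq_zpow_neg_valuation (by exact_mod_cast hz), Padic.valuation_intCast,
      zpow_neg, zpow_natCast]
  have h2 : (p : ℝ) ^ padicValInt p z ≤ ‖(z : ℝ)‖ := by
    have h3 := Int.natAbs_dvd_natAbs.mpr (padicValInt_dvd (p := p) z)
    have h4 := Nat.le_of_dvd (Int.natAbs_pos.mpr hz) h3
    rw [Int.natAbs_pow, Int.natAbs_natCast] at h4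
    rw [Real.norm_eq_abs, ← Int.cast_abs, ← Nat.cast_natAbs]
    exact_mod_cast h4
  rw [h1, ← div_eq_mul_inv, one_le_div (by positivity)]
  exact h2

/-- Over a field, a matrix with independent rows has a non-vanishing maximal minor. -/
lemma exists_minor_ne_zero {F : Type*} [Field F] {r N : ℕ} (M : Matrix (Fin r) (Fin N) F)
    (h : LinearIndependent F M.row) : ∃ J : Fin r → Fin N, (M.submatrix id J).det ≠ 0 := by
  have hr := h.rank_matrix
  rw [Matrix.rank_eq_finrank_span_cols, Fintype.card_fin] at hr
  obtain ⟨f, hf, _, hli⟩ := Submodule.exists_fun_fin_finrank_span_eq F (Set.range M.col)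
  choose J hJ using hf
  refine ⟨fun k => J (Fin.cast hr.symm k), ?_⟩
  rw [← isUnit_iff_ne_zero, ← Matrix.isUnit_iff_isUnit_det,
    ← Matrix.linearIndependent_cols_iff_isUnit]
  have h2 := hli.comp (Fin.cast hr.symm) (Fin.cast_injective _)
  have e : (M.submatrix id fun k => J (Fin.cast hr.symm k)).col = f ∘ Fin.cast hr.symm := by
    ext k i
    exact congrFun (hJ (Fin.cast hr.symm k)) i
  rw [e]
  exact h2

/-- An integral basis of a rational subspace stays independent modulo `p`, because `V ∩ ℤ^N` is
saturated; so one of its minors is prime to `p`. -/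
lemma IsIntBasis.exists_unit_minor {p : ℕ} [Fact p.Prime] {N r : ℕ}
    {V : Submodule ℚ (Fin N → ℚ)} {b : Fin r → Fin N → ℤ} (h : IsIntBasis V b) :
    ∃ J : Fin r → Fin N, ¬ (p : ℤ) ∣ ((Matrix.of b).submatrix id J).det := by
  have hp0 : (p : ℤ) ≠ 0 := by exact_mod_cast (Fact.out : p.Prime).ne_zero
  have hpQ : (p : ℚ) ≠ 0 := by exact_mod_cast hp0
  let M : Matrix (Fin r) (Fin N) (ZMod p) := Matrix.of fun i x => (b i x : ZMod p)
  have hli : LinearIndependent (ZMod p) M.row := by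
    rw [Fintype.linearIndependent_iff]
    intro g hg
    have hdvd : ∀ x, (p : ℤ) ∣ ∑ i, ((g i).cast : ℤ) * b i x := by
      intro x
      rw [← ZMod.intCast_zmod_eq_zero_iff_dvd]
      have := congrFun hg x
      simpa [M, Matrix.row] using this
    choose u hu using hdvd
    have hQ : ∑ i, ((g i).cast : ℤ) • toQ N (b i) = (p : ℚ) • toQ N u := by
      ext x
      have := hu x
      simp only [Finset.sum_apply, Pi.smul_apply, toQ_apply, smul_eq_mul]
      simp only [zsmul_eq_mul]
      exact_mod_cast this
    have huV : toQ N u ∈ V := by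
      have e : toQ N u = (p : ℚ)⁻¹ • ((p : ℚ) • toQ N u) := by
        rw [smul_smul, inv_mul_cancel₀ hpQ, one_smul]
      rw [e, ← hQ]
      refine V.smul_mem _ (V.sum_mem fun i _ => ?_)
      rw [← Int.cast_smul_eq_zsmul ℚ]
      refine V.smul_mem _ ?_
      rw [← h.span]
      exact Submodule.subset_span ⟨i, rfl⟩
    obtain ⟨e, he⟩ := (Submodule.mem_span_range_iff_exists_fun ℤ).mp (h.int u huV)
    have h0 : ∑ i, (((g i).cast : ℤ) - p * e i : ℚ) • toQ N (b i) = 0 := by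
      simp only [sub_smul, Finset.sum_sub_distrib]
      rw [sub_eq_zero]
      calc _ = ∑ i, ((g i).cast : ℤ) • toQ N (b i) :=
            Finset.sum_congr rfl fun i _ => by rw [← Int.cast_smul_eq_zsmul ℚ]
        _ = _ := by
            rw [hQ, ← he, map_sum, Finset.smul_sum]
            refine Finset.sum_congr rfl fun i _ => ?_
            rw [map_smul, ← Int.cast_smul_eq_zsmul ℚ, smul_smul]
    intro i
    have h1 := Fintype.linearIndependent_iff.mp h.li _ h0 i
    have h2 : ((g i).cast : ℤ) = p * e i := by
      have := sub_eq_zero.mp h1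
      exact_mod_cast this
    rw [← ZMod.intCast_zmod_cast (g i), h2]
    simp
  obtain ⟨J, hJ⟩ := exists_minor_ne_zero M hli
  refine ⟨J, fun hd => hJ ?_⟩
  rw [← ZMod.intCast_zmod_eq_zero_iff_dvd, Int.cast_det] at hd
  exact hd

end PadicND

/-! ### Covolumes and short vectors -/

namespace PadicND

variable {p : ℕ} [Fact p.Prime] {N : ℕ} {ι : Type*} [Finite ι]

/-- The `r × ι` matrix of the values of the forms `ℓ` at the vectors `b`. -/
noncomputable def pairing (ℓ : ι → Fin N → ℚ_[p]) {r : ℕ} (b : Fin r → Fin N → ℤ) :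
    Matrix (Fin r) ι ℚ_[p] :=
  Matrix.of fun i k => ∑ x, ℓ k x * (b i x : ℚ_[p])

/-- The `S`-arithmetic covolume, for the places `∞` and `p`, of the `ℤ[1/p]`-module spanned by `b`
after applying the forms `ℓ` with weights `w` at `p`. -/
noncomputable def covol (ℓ : ι → Fin N → ℚ_[p]) (w : ι → ℝ) {r : ℕ} (b : Fin r → Fin N → ℤ) : ℝ :=
  minorSup (fun _ => 1) (Matrix.of fun i x => (b i x : ℝ)) * minorSup w (pairing ℓ b)

variable {ℓ : ι → Fin N → ℚ_[p]} {w : ι → ℝ} {r : ℕ}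

omit [Finite ι] in
lemma covol_nonneg (hw : ∀ k, 0 ≤ w k) (b : Fin r → Fin N → ℤ) : 0 ≤ covol ℓ w b :=
  mul_nonneg (minorSup_nonneg (fun _ => zero_le_one) _) (minorSup_nonneg hw _)

omit [Finite ι] in
lemma covol_zero (b : Fin 0 → Fin N → ℤ) : covol ℓ w b = 1 := by
  rw [covol, minorSup_zero, minorSup_zero, one_mul]

omit [Finite ι] in
/-- Passing to a sublattice of finite index does not decrease the covolume. -/
lemma covol_le_of_mul (hw : ∀ k, 0 ≤ w k) (b b' : Fin r → Fin N → ℤ)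
    (A : Matrix (Fin r) (Fin r) ℤ) (hA : A.det ≠ 0) (h : ∀ i, b' i = ∑ j, A i j • b j) :
    covol ℓ w b ≤ covol ℓ w b' := by
  have e1 : (Matrix.of fun i x => (b' i x : ℝ)) =
      (A.map fun z => (z : ℝ)) * Matrix.of fun i x => (b i x : ℝ) := by
    ext i x
    simp [Matrix.mul_apply, h]
  have e2 : pairing ℓ b' = (A.map fun z => (z : ℚ_[p])) * pairing ℓ b := by
    ext i k
    simp only [pairing, Matrix.mul_apply, h, Matrix.of_apply, Matrix.map_apply, Finset.sum_apply,
      Pi.smul_apply, smul_eq_mul, Int.cast_sum, Int.cast_mul, Finset.mul_sum]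
    rw [Finset.sum_comm]
    refine Finset.sum_congr rfl fun j _ => Finset.sum_congr rfl fun x _ => by ring
  rw [covol, covol, e1, e2, minorSup_mul, minorSup_mul, ← Int.cast_det, ← Int.cast_det]
  have h1 := one_le_abs_mul_norm (p := p) hA
  have h2 : 0 ≤ covol ℓ w b := covol_nonneg hw b
  rw [covol] at h2
  calc _ ≤ (‖((A.det : ℤ) : ℝ)‖ * ‖((A.det : ℤ) : ℚ_[p])‖) * _ := le_mul_of_one_le_left h2 h1
    _ = _ := by ring

/-- Adding a vector `v` of real size `Q` and weighted `p`-adic size `h` multiplies the covolume by at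
most a constant times `Q h`. -/
lemma covol_cons_le (hw : ∀ k, 0 ≤ w k) {v : Fin N → ℤ} (b : Fin r → Fin N → ℤ) {Q h : ℝ}
    (hQ : 0 ≤ Q) (hh : 0 ≤ h) (hvQ : ∀ x, |(v x : ℝ)| ≤ Q)
    (hv : ∀ k, w k * ‖∑ x, ℓ k x * (v x : ℚ_[p])‖ ≤ h) :
    covol ℓ w (Fin.cons v b : Fin (r + 1) → Fin N → ℤ) ≤ (r + 1) ^ 2 * Q * h * covol ℓ w b := by
  have e1 : (Matrix.of fun i x => ((Fin.cons v b : Fin (r + 1) → Fin N → ℤ) i x : ℝ)) =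
      Matrix.of (Fin.cons (fun x => (v x : ℝ)) (Matrix.of fun i x => (b i x : ℝ))) := by
    ext i x
    refine Fin.cases ?_ (fun i => ?_) i <;> rfl
  have e2 : pairing ℓ (Fin.cons v b : Fin (r + 1) → Fin N → ℤ) =
      Matrix.of (Fin.cons (fun k => ∑ x, ℓ k x * (v x : ℚ_[p])) (pairing ℓ b)) := by
    ext i k
    refine Fin.cases ?_ (fun i => ?_) i <;> rfl
  rw [covol, e1, e2]
  have h1 := minorSup_cons_le (fun _ => zero_le_one) (w := fun _ : Fin N => (1 : ℝ)) hQ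
    (v := fun x => (v x : ℝ)) (M := Matrix.of fun i x => (b i x : ℝ))
    (fun x => by rw [one_mul]; exact hvQ x)
  have h2 := minorSup_cons_le hw hh hv (M := pairing ℓ b)
  refine (mul_le_mul h1 h2 (minorSup_nonneg hw _) ?_).trans_eq ?_
  · have := minorSup_nonneg (fun _ => zero_le_one) (w := fun _ : Fin N => (1 : ℝ))
      (Matrix.of fun i x => (b i x : ℝ))
    positivity
  · rw [covol]; ring

omit [Finite ι] in
/-- An integral basis has the smallest covolume among the bases consisting of integer vectors. -/
lemma IsIntBasis.covol_le (hw : ∀ k, 0 ≤ w k) {V : Submodule ℚ (Fin N → ℚ)}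
    {b b' : Fin r → Fin N → ℤ} (hb : IsIntBasis V b)
    (hli : LinearIndependent ℚ fun i => toQ N (b' i)) (hV : ∀ i, toQ N (b' i) ∈ V) :
    covol ℓ w b ≤ covol ℓ w b' := by
  have h1 : ∀ i, ∃ c : Fin r → ℤ, ∑ j, c j • b j = b' i := fun i =>
    (Submodule.mem_span_range_iff_exists_fun ℤ).mp (hb.int _ (hV i))
  choose A hA using h1
  refine covol_le_of_mul hw b b' (Matrix.of A) ?_ fun i => (hA i).symm
  intro hdet
  obtain ⟨c, hc0, hc⟩ := Matrix.exists_vecMul_eq_zero_iff.mpr hdet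
  apply hc0
  have h2 : ∑ i, (c i : ℚ) • toQ N (b' i) = 0 := by
    have e : ∑ i, c i • b' i = 0 := by
      simp_rw [← hA, Finset.smul_sum, smul_smul]
      rw [Finset.sum_comm]
      refine Finset.sum_eq_zero fun j _ => ?_
      rw [← Finset.sum_smul]
      have := congrFun hc j
      simp only [Matrix.vecMul, dotProduct, Matrix.of_apply, Pi.zero_apply] at this
      rw [this, zero_smul]
    rw [← map_zero (toQ N), ← e, map_sum]
    refine Finset.sum_congr rfl fun i _ => ?_
    rw [map_smul, Int.cast_smul_eq_zsmul]
  ext i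
  exact_mod_cast Fintype.linearIndependent_iff.mp hli _ h2 i

/-- The covolume attached to a rational subspace. -/
noncomputable def psi (ℓ : ι → Fin N → ℚ_[p]) (w : ι → ℝ) (V : Submodule ℚ (Fin N → ℚ)) : ℝ :=
  covol ℓ w (exists_isIntBasis V).choose_spec.choose

omit [Finite ι] in
lemma psi_nonneg (hw : ∀ k, 0 ≤ w k) (V : Submodule ℚ (Fin N → ℚ)) : 0 ≤ psi ℓ w V :=
  covol_nonneg hw _

/-- At a marked point there is no short integer vector. Such a `v` would have to be missed by some
member of the marking chain (or by `⊥`); the largest such `W` and `W ⊔ span v` have comparable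
covolumes by Laplace expansion, which contradicts the marking. -/
theorem Marked.no_short_vector {ℓ : ℤ_[p] → ι → Fin N → ℚ_[p]} (hw : ∀ k, 0 ≤ w k) {ε : ℝ}
    (hε : ε ≤ 1) {t : ℤ_[p]} (hm : Marked ε (fun V t => psi (ℓ t) w V) {V | V ≠ ⊥} t)
    {v : Fin N → ℤ} (hv0 : v ≠ 0) {Q h : ℝ}
    (hQ : 0 ≤ Q) (hh : 0 ≤ h) (hvQ : ∀ x, |(v x : ℝ)| ≤ Q)
    (hv : ∀ k, w k * ‖∑ x, ℓ t k x * (v x : ℚ_[p])‖ ≤ h) : ε ≤ N ^ 2 * Q * h := by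
  obtain ⟨C, hCS, hch, hC, hmax⟩ := hm
  obtain ⟨W, hWv, hW1, hWbig, hWsmall⟩ : ∃ W : Submodule ℚ (Fin N → ℚ), toQ N v ∉ W ∧
      psi (ℓ t) w W ≤ 1 ∧ (∀ c ∈ C, toQ N v ∉ c → c ≤ W) ∧ ∀ c ∈ C, toQ N v ∈ c → W ≤ c := by
    rcases Set.eq_empty_or_nonempty {c | c ∈ C ∧ toQ N v ∉ c} with he | hne
    · refine ⟨⊥, ?_, ?_, ?_, fun _ _ _ => bot_le⟩
      · rw [Submodule.mem_bot, ← map_zero (toQ N)]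
        exact fun e => hv0 (toQ_injective N e)
      · have h0 : (exists_isIntBasis (⊥ : Submodule ℚ (Fin N → ℚ))).choose = 0 := by
          have := (exists_isIntBasis (⊥ : Submodule ℚ (Fin N → ℚ))).choose_spec.choose_spec.finrank
          rw [← this, finrank_bot]
        rw [psi]
        generalize (exists_isIntBasis (⊥ : Submodule ℚ (Fin N → ℚ))).choose_spec.choose = b
        revert b
        rw [h0]
        exact fun b => (covol_zero b).le
      · intro c hc hcv
        exact absurd (show c ∈ {c | c ∈ C ∧ toQ N v ∉ c} from ⟨hc, hcv⟩) (by rw [he]; simp)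
    · obtain ⟨W, hW, hWm⟩ := wellFounded_gt.has_min _ hne
      refine ⟨W, hW.2, (hC W hW.1).2.le, fun c hc hcv => ?_, fun c hc hcv =>
        (hch W hW.1 c hc).resolve_right fun h => hW.2 (h hcv)⟩
      rcases hch c hc W hW.1 with h | h
      · exact h
      · by_contra hne'
        exact hWm c ⟨hc, hcv⟩ (lt_of_le_not_ge h hne')
  set V := W ⊔ Submodule.span ℚ {toQ N v} with hVdef
  have hvV : toQ N v ∈ V := Submodule.mem_sup_right (Submodule.mem_span_singleton_self _)
  have hVne : V ≠ ⊥ := fun e => by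
    rw [e, Submodule.mem_bot, ← map_zero (toQ N)] at hvV
    exact hv0 (toQ_injective N hvV)
  have hVε : ε ≤ psi (ℓ t) w V := by
    by_cases hVC : V ∈ C
    · exact (hC V hVC).1
    · refine hε.trans (hmax V hVne hVC fun c hc => ?_)
      by_cases hcv : toQ N v ∈ c
      · left
        exact sup_le (hWsmall c hc hcv) ((Submodule.span_singleton_le_iff_mem _ _).mpr hcv)
      · right
        exact (hWbig c hc hcv).trans le_sup_left
  have hbW := (exists_isIntBasis W).choose_spec.choose_spec
  have hbV := (exists_isIntBasis V).choose_spec.choose_spec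
  rw [psi] at hW1 hVε
  generalize (exists_isIntBasis W).choose_spec.choose = bW at hbW hW1
  generalize (exists_isIntBasis V).choose_spec.choose = bV at hbV hVε
  generalize (exists_isIntBasis W).choose = r at bW hbW hW1
  generalize (exists_isIntBasis V).choose = r' at bV hbV hVε
  have hfun : (fun i => toQ N ((Fin.cons v bW : Fin (r + 1) → Fin N → ℤ) i)) =
      Fin.cons (toQ N v) fun i => toQ N (bW i) := by
    ext i x
    refine Fin.cases ?_ (fun i => ?_) i <;> rfl
  have hli : LinearIndependent ℚ fun i => toQ N ((Fin.cons v bW : Fin (r + 1) → Fin N → ℤ) i) := by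
    rw [hfun, linearIndependent_finCons, hbW.span]
    exact ⟨hbW.li, hWv⟩
  have hr : r' = r + 1 := by
    have h1 := finrank_span_eq_card hli
    rw [hfun, Fin.range_cons, Set.insert_eq, Submodule.span_union, hbW.span, sup_comm, ← hVdef,
      hbV.finrank, Fintype.card_fin] at h1
    exact h1
  subst hr
  have h1 := hbV.covol_le (ℓ := ℓ t) hw hli (fun i => by
    refine Fin.cases ?_ (fun i => ?_) i
    · exact hvV
    · refine Submodule.mem_sup_left ?_
      change toQ N (bW i) ∈ W
      rw [← hbW.span]
      exact Submodule.subset_span ⟨i, rfl⟩)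
  have h2 := covol_cons_le hw bW hQ hh hvQ hv
  have hrN : ((r : ℝ) + 1) ≤ N := by
    have := hli.fintype_card_le_finrank
    rw [Fintype.card_fin, Module.finrank_fin_fun] at this
    exact_mod_cast this
  calc ε ≤ _ := hVε.trans (h1.trans h2)
    _ ≤ (r + 1) ^ 2 * Q * h * 1 := by gcongr
    _ ≤ N ^ 2 * Q * h := by rw [mul_one]; gcongr

end PadicND

/-! ### Wronskians and minors as power series -/

namespace PadicND

open PowerSeries

variable {p : ℕ} [Fact p.Prime]

/-- The linear combination `∑ aₓ Φₓ`. -/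
noncomputable def lin {N : ℕ} (Φ : Fin N → PowerSeries ℚ_[p]) (a : Fin N → ℚ_[p]) :
    PowerSeries ℚ_[p] := ∑ x, C (a x) * Φ x

/-- The Wronskian of two linear combinations of the `Φₓ`. -/
noncomputable def wr {N : ℕ} (Φ : Fin N → PowerSeries ℚ_[p]) (a b : Fin N → ℚ_[p]) :
    PowerSeries ℚ_[p] :=
  lin Φ a * derivative ℚ_[p] (lin Φ b) - lin Φ b * derivative ℚ_[p] (lin Φ a)

/-- Uniform non-degeneracy of a family of power series: normalized linear combinations and
Wronskians of normalized pairs have a coefficient of bounded index and size at least `A₀` which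
dominates the later ones. -/
structure GoodFam {N : ℕ} (L : ℕ) (A₀ : ℝ) (Φ : Fin N → PowerSeries ℚ_[p]) : Prop where
  lin : ∀ a, ‖a‖ = 1 → ∃ l ≤ L, ∃ A, A₀ ≤ A ∧ DDc l A (lin Φ a)
  wr : ∀ i a b, a i = 1 → ‖a‖ ≤ 1 → b i = 0 → ‖b‖ = 1 → ∃ l ≤ L, ∃ A, A₀ ≤ A ∧ DDc l A (wr Φ a b)

/-- Some coefficient of index at most `L` dominates the later ones. -/
def Nice (L : ℕ) (φ : PowerSeries ℚ_[p]) : Prop := ∃ l ≤ L, ∃ A, DDc l A φ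

lemma Nice.C (L : ℕ) (c : ℚ_[p]) : Nice L (PowerSeries.C c) :=
  ⟨0, Nat.zero_le L, ‖c‖, by simp, fun k hk => by
    rw [coeff_C, if_neg hk.ne', norm_zero]
    have := (pinv_pos (p := p)).le
    positivity⟩

lemma Nice.zero (L : ℕ) : Nice L (0 : PowerSeries ℚ_[p]) := by
  simpa using Nice.C L (0 : ℚ_[p])

lemma Nice.C_mul {L : ℕ} {φ : PowerSeries ℚ_[p]} (h : Nice L φ) (c : ℚ_[p]) :
    Nice L (PowerSeries.C c * φ) := by
  obtain ⟨l, hl, A, h1, h2⟩ := h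
  refine ⟨l, hl, ‖c‖ * A, ?_, fun k hk => ?_⟩
  · rw [coeff_C_mul, norm_mul, h1]
  · rw [coeff_C_mul, norm_mul, mul_assoc]
    exact mul_le_mul_of_nonneg_left (h2 k hk) (norm_nonneg _)

section fam

variable {N : ℕ} {Φ : Fin N → PowerSeries ℚ_[p]}

lemma lin_smul (c : ℚ_[p]) (a : Fin N → ℚ_[p]) : lin Φ (c • a) = C c * lin Φ a := by
  simp [lin, Finset.mul_sum, mul_assoc]

lemma lin_sub (a b : Fin N → ℚ_[p]) : lin Φ (a - b) = lin Φ a - lin Φ b := by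
  simp [lin, sub_mul]

lemma lin_zero : lin Φ 0 = 0 := by simp [lin]

lemma lin_single (i : Fin N) : lin Φ (Pi.single i 1) = Φ i := by
  rw [lin, Finset.sum_eq_single i]
  · simp
  · intro j _ hj; simp [hj]
  · simp

lemma deriv_C_mul (c : ℚ_[p]) (φ : PowerSeries ℚ_[p]) :
    derivative ℚ_[p] (C c * φ) = C c * derivative ℚ_[p] φ := by
  rw [← smul_eq_C_mul, ← smul_eq_C_mul, Derivation.map_smul]

lemma wr_smul_left (c : ℚ_[p]) (a b : Fin N → ℚ_[p]) : wr Φ (c • a) b = C c * wr Φ a b := by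
  rw [wr, wr, lin_smul, deriv_C_mul]; ring

lemma wr_smul_right (c : ℚ_[p]) (a b : Fin N → ℚ_[p]) : wr Φ a (c • b) = C c * wr Φ a b := by
  rw [wr, wr, lin_smul, deriv_C_mul]; ring

lemma wr_sub_smul (c : ℚ_[p]) (a b : Fin N → ℚ_[p]) : wr Φ a (b - c • a) = wr Φ a b := by
  rw [wr, wr, lin_sub, lin_smul, map_sub, deriv_C_mul]; ring

lemma Bd.lin {M : ℝ} (hM : 0 ≤ M) (hΦ : ∀ x, Bd M (Φ x)) (a : Fin N → ℚ_[p]) :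
    Bd (‖a‖ * M) (lin Φ a) :=
  Bd.sum (by positivity) _ fun x _ => ((hΦ x).C_mul (a x)).mono (by
    gcongr; exact norm_le_pi_norm a x)

lemma Bd.wr {M : ℝ} (hM : 0 ≤ M) (hΦ : ∀ x, Bd M (Φ x)) (a b : Fin N → ℚ_[p]) :
    Bd (‖a‖ * M * (‖b‖ * M)) (PadicND.wr Φ a b) := by
  have ha := Bd.lin hM hΦ a
  have hb := Bd.lin hM hΦ b
  have h1 := ha.mul hb.deriv
  have h2 := hb.mul ha.deriv
  rw [mul_comm (‖b‖ * M)] at h2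
  rw [PadicND.wr]
  exact h1.sub h2

lemma ev_lin {M : ℝ} (hM : 0 ≤ M) (hΦ : ∀ x, Bd M (Φ x)) (a : Fin N → ℚ_[p]) (t : ℤ_[p]) :
    ev (lin Φ a) t = ∑ x, a x * ev (Φ x) t := by
  rw [lin, ev_sum (M := ‖a‖ * M) (by positivity) _ fun x _ => ((hΦ x).C_mul (a x)).mono (by
    gcongr; exact norm_le_pi_norm a x)]
  exact Finset.sum_congr rfl fun x _ => ev_C_mul _ (hΦ x) t

lemma deriv_lin (a : Fin N → ℚ_[p]) :
    derivative ℚ_[p] (lin Φ a) = lin (fun x => derivative ℚ_[p] (Φ x)) a := by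
  rw [lin, lin, map_sum]
  exact Finset.sum_congr rfl fun x _ => deriv_C_mul _ _

lemma exists_smul_eq {a : Fin N → ℚ_[p]} (ha : a ≠ 0) :
    ∃ i, ∃ c : ℚ_[p], ∃ a', a = c • a' ∧ a' i = 1 ∧ ‖a'‖ = 1 := by
  have hne : Nonempty (Fin N) := by
    by_contra h
    rw [not_nonempty_iff] at h
    exact ha (Subsingleton.elim _ _)
  obtain ⟨i, hi⟩ := Finite.exists_max fun i => ‖a i‖
  have hi0 : a i ≠ 0 := fun h => ha (by
    ext j
    have := hi j
    rw [h, norm_zero] at this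
    simpa using this)
  have h1 : ((a i)⁻¹ • a) i = 1 := by simp [hi0]
  refine ⟨i, a i, (a i)⁻¹ • a, by rw [smul_smul, mul_inv_cancel₀ hi0, one_smul], h1, ?_⟩
  apply le_antisymm
  · refine (pi_norm_le_iff_of_nonneg zero_le_one).mpr fun j => ?_
    rw [Pi.smul_apply, smul_eq_mul, norm_mul, norm_inv, inv_mul_le_iff₀ (norm_pos_iff.mpr hi0),
      mul_one]
    exact hi j
  · simpa [h1] using norm_le_pi_norm ((a i)⁻¹ • a) i

variable {L : ℕ} {A₀ : ℝ}

lemma GoodFam.nice_lin (h : GoodFam L A₀ Φ) (a : Fin N → ℚ_[p]) : Nice L (PadicND.lin Φ a) := by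
  rcases eq_or_ne a 0 with rfl | ha
  · rw [lin_zero]; exact Nice.zero L
  · obtain ⟨_, c, a', rfl, _, h1⟩ := exists_smul_eq ha
    rw [lin_smul]
    obtain ⟨l, hl, A, _, hD⟩ := h.lin a' h1
    exact Nice.C_mul ⟨l, hl, A, hD⟩ c

lemma GoodFam.nice_wr (h : GoodFam L A₀ Φ) (a b : Fin N → ℚ_[p]) : Nice L (PadicND.wr Φ a b) := by
  rcases eq_or_ne a 0 with rfl | ha
  · rw [PadicND.wr, lin_zero, map_zero, mul_zero, zero_mul, sub_zero]; exact Nice.zero L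
  obtain ⟨i, c, a', rfl, hi, ha'⟩ := exists_smul_eq ha
  rw [wr_smul_left, ← wr_sub_smul (b i)]
  refine Nice.C_mul ?_ c
  rcases eq_or_ne (b - b i • a') 0 with hb | hb
  · rw [hb, PadicND.wr, lin_zero, map_zero, mul_zero, zero_mul, sub_zero]; exact Nice.zero L
  have hbi : (b - b i • a') i = 0 := by simp [hi]
  obtain ⟨j, c', b', hbb, hj, hb'⟩ := exists_smul_eq hb
  rw [hbb, Pi.smul_apply, smul_eq_mul] at hbi
  have hc' : c' ≠ 0 := fun h0 => hb (by rw [hbb, h0, zero_smul])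
  rw [hbb, wr_smul_right]
  obtain ⟨l, hl, A, _, hD⟩ := h.wr i a' b' hi ha'.le ((mul_eq_zero.mp hbi).resolve_left hc') hb'
  exact Nice.C_mul ⟨l, hl, A, hD⟩ c'

end fam

/-- As `Φ 0 = 1`, a derivative is a Wronskian with `Φ 0`. -/
lemma GoodFam.nice_deriv {n L : ℕ} {A₀ : ℝ} {Φ : Fin (n + 1) → PowerSeries ℚ_[p]} (h0 : Φ 0 = 1)
    (h : GoodFam L A₀ Φ) (a : Fin (n + 1) → ℚ_[p]) :
    Nice L (derivative ℚ_[p] (PadicND.lin Φ a)) := by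
  have := h.nice_wr (Pi.single 0 1) a
  rw [PadicND.wr, lin_single, h0, one_mul, ← map_one (C : ℚ_[p] →+* PowerSeries ℚ_[p]),
    derivative_C, mul_zero, sub_zero] at this
  exact this

section minors

/-- The linear forms `y ↦ y · F(t)`, `y ↦ y · F'(t)` and the coordinates. -/
noncomputable def forms {N : ℕ} (Φ : Fin N → PowerSeries ℚ_[p]) (t : ℤ_[p]) :
    Option (Option (Fin N)) → Fin N → ℚ_[p]
  | none => fun x => ev (Φ x) t
  | some none => fun x => ev (derivative ℚ_[p] (Φ x)) t
  | some (some i) => Pi.single i 1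

variable {N r : ℕ} {Φ : Fin N → PowerSeries ℚ_[p]}

/-- The integer matrix `b` over `ℚ_p`. -/
noncomputable def bmat (b : Fin r → Fin N → ℤ) : Matrix (Fin r) (Fin N) ℚ_[p] :=
  Matrix.of fun i x => (b i x : ℚ_[p])

/-- The coefficients of the linear form `y ↦ det (A with column k replaced by b y)`. -/
noncomputable def coef (A : Matrix (Fin r) (Fin r) ℚ_[p]) (b : Fin r → Fin N → ℤ) (k : Fin r) :
    Fin N → ℚ_[p] := fun x => A.cramer ((bmat b).col x) k

lemma cramer_mulVec (A : Matrix (Fin r) (Fin r) ℚ_[p]) (b : Fin r → Fin N → ℤ) (k : Fin r)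
    (y : Fin N → ℚ_[p]) : A.cramer ((bmat b).mulVec y) k = ∑ x, coef A b k x * y x := by
  have : (bmat b).mulVec y = ∑ x, y x • (bmat b).col x := by
    ext i
    simp [Matrix.mulVec, dotProduct, mul_comm]
  rw [this, map_sum, Finset.sum_apply]
  refine Finset.sum_congr rfl fun x _ => ?_
  rw [map_smul, Pi.smul_apply, smul_eq_mul, mul_comm, coef]

lemma pairing_eq {ι : Type*} (ℓ : ι → Fin N → ℚ_[p]) (b : Fin r → Fin N → ℤ) (i : Fin r) (k : ι) :
    pairing ℓ b i k = (bmat b).mulVec (ℓ k) i := by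
  simp [pairing, bmat, Matrix.mulVec, dotProduct, mul_comm]

variable {M : ℝ}

lemma cramer_none (hM : 0 ≤ M) (hΦ : ∀ x, Bd M (Φ x)) (A : Matrix (Fin r) (Fin r) ℚ_[p])
    (b : Fin r → Fin N → ℤ) (k : Fin r) (t : ℤ_[p]) :
    A.cramer ((bmat b).mulVec (forms Φ t none)) k = ev (lin Φ (coef A b k)) t := by
  rw [cramer_mulVec, ev_lin hM hΦ]; rfl

lemma cramer_some_none (hM : 0 ≤ M) (hΦ : ∀ x, Bd M (Φ x)) (A : Matrix (Fin r) (Fin r) ℚ_[p])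
    (b : Fin r → Fin N → ℤ) (k : Fin r) (t : ℤ_[p]) :
    A.cramer ((bmat b).mulVec (forms Φ t (some none))) k
      = ev (derivative ℚ_[p] (lin Φ (coef A b k))) t := by
  rw [cramer_mulVec, deriv_lin, ev_lin hM fun x => (hΦ x).deriv]; rfl

lemma ev_wr (hM : 0 ≤ M) (hΦ : ∀ x, Bd M (Φ x)) (a b : Fin N → ℚ_[p]) (t : ℤ_[p]) :
    ev (wr Φ a b) t = ev (lin Φ a) t * ev (derivative ℚ_[p] (lin Φ b)) t
      - ev (lin Φ b) t * ev (derivative ℚ_[p] (lin Φ a)) t := by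
  have ha := Bd.lin hM hΦ a
  have hb := Bd.lin hM hΦ b
  rw [wr, ev_sub (ha.mul hb.deriv) (hb.mul ha.deriv), ev_mul ha hb.deriv, ev_mul hb ha.deriv]

/-- A minor involving both `F` and `F'` is, up to the factor `det A`, a Wronskian. -/
lemma det_mul_minor (hM : 0 ≤ M) (hΦ : ∀ x, Bd M (Φ x)) (A : Matrix (Fin r) (Fin r) ℚ_[p])
    (b : Fin r → Fin N → ℤ) {k₀ k₁ : Fin r} (hk : k₀ ≠ k₁) (t : ℤ_[p]) :
    A.det * ((A.updateCol k₁ ((bmat b).mulVec (forms Φ t (some none)))).updateCol k₀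
      ((bmat b).mulVec (forms Φ t none))).det = ev (wr Φ (coef A b k₀) (coef A b k₁)) t := by
  rw [det_mul_det_updateCol A hk, cramer_none hM hΦ, cramer_none hM hΦ, cramer_some_none hM hΦ,
    cramer_some_none hM hΦ, ev_wr hM hΦ]

end minors

/-- Each minor is the value of a power series with a dominant coefficient of bounded index. -/
lemma exists_minor_eq_ev {n r L : ℕ} {A₀ M : ℝ} {Φ : Fin (n + 1) → PowerSeries ℚ_[p]}
    (h0 : Φ 0 = 1) (hΦ : ∀ x, Bd M (Φ x)) (hG : GoodFam L A₀ Φ) (b : Fin r → Fin (n + 1) → ℤ)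
    (J : Fin r → Option (Option (Fin (n + 1)))) :
    ∃ φ : PowerSeries ℚ_[p], (∃ M', Bd M' φ) ∧ Nice L φ ∧
      ∀ t, ((pairing (forms Φ t) b).submatrix id J).det = ev φ t := by
  have hM : 0 ≤ M := (hΦ 0).nonneg
  have hz : (∃ M', Bd M' (0 : PowerSeries ℚ_[p])) := ⟨0, Bd.zero le_rfl⟩
  by_cases hinj : Function.Injective J
  swap
  · simp only [Function.Injective, not_forall] at hinj
    obtain ⟨k, k', hk, hne⟩ := hinj
    refine ⟨0, hz, Nice.zero L, fun t => ?_⟩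
    rw [ev_zero]
    exact Matrix.det_zero_of_column_eq hne fun i => by simp [hk]
  have hconst : ∀ t k i, J k ≠ none → J k ≠ some none →
      ((pairing (forms Φ t) b).submatrix id J) i k = ((pairing (forms Φ 0) b).submatrix id J) i k := by
    intro t k i h1 h2
    simp only [Matrix.submatrix_apply, id_eq, pairing_eq]
    match hJ : J k with
    | none => exact absurd hJ h1
    | some none => exact absurd hJ h2
    | some (some x) => rfl
  by_cases hk₀ : ∃ k₀, J k₀ = none <;> by_cases hk₁ : ∃ k₁, J k₁ = some none
  · obtain ⟨k₀, hk₀⟩ := hk₀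
    obtain ⟨k₁, hk₁⟩ := hk₁
    have hk : k₀ ≠ k₁ := by rintro rfl; rw [hk₀] at hk₁; cases hk₁
    by_cases hD : ∀ t, ((pairing (forms Φ t) b).submatrix id J).det = 0
    · exact ⟨0, hz, Nice.zero L, fun t => by rw [ev_zero, hD]⟩
    push Not at hD
    obtain ⟨t₁, ht₁⟩ := hD
    set A := (pairing (forms Φ t₁) b).submatrix id J with hA
    refine ⟨C A.det⁻¹ * wr Φ (coef A b k₀) (coef A b k₁), ⟨_, (Bd.wr hM hΦ _ _).C_mul _⟩,
      (hG.nice_wr _ _).C_mul _, fun t => ?_⟩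
    rw [ev_C_mul _ (Bd.wr hM hΦ _ _), ← det_mul_minor hM hΦ A b hk, inv_mul_cancel_left₀ ht₁]
    congr 1
    ext i k
    rcases eq_or_ne k k₀ with rfl | h
    · simp [hk₀, pairing_eq]
    rcases eq_or_ne k k₁ with rfl | h'
    · simp [h, hk₁, pairing_eq]
    rw [Matrix.updateCol_ne h, Matrix.updateCol_ne h', hA,
      hconst t k i (fun e => h (hinj (e.trans hk₀.symm))) (fun e => h' (hinj (e.trans hk₁.symm))),
      hconst t₁ k i (fun e => h (hinj (e.trans hk₀.symm))) (fun e => h' (hinj (e.trans hk₁.symm)))]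
  · obtain ⟨k₀, hk₀⟩ := hk₀
    push Not at hk₁
    set A := (pairing (forms Φ 0) b).submatrix id J with hA
    refine ⟨lin Φ (coef A b k₀), ⟨_, Bd.lin hM hΦ _⟩, hG.nice_lin _, fun t => ?_⟩
    rw [← cramer_none hM hΦ, Matrix.cramer_apply]
    congr 1
    ext i k
    rcases eq_or_ne k k₀ with rfl | h
    · simp [hk₀, pairing_eq]
    rw [Matrix.updateCol_ne h, hconst t k i (fun e => h (hinj (e.trans hk₀.symm))) (hk₁ k)]
  · obtain ⟨k₁, hk₁⟩ := hk₁
    push Not at hk₀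
    set A := (pairing (forms Φ 0) b).submatrix id J with hA
    refine ⟨derivative ℚ_[p] (lin Φ (coef A b k₁)), ⟨_, (Bd.lin hM hΦ _).deriv⟩,
      hG.nice_deriv h0 _, fun t => ?_⟩
    rw [← cramer_some_none hM hΦ, Matrix.cramer_apply]
    congr 1
    ext i k
    rcases eq_or_ne k k₁ with rfl | h
    · simp [hk₁, pairing_eq]
    rw [Matrix.updateCol_ne h, hconst t k i (hk₀ k) (fun e => h (hinj (e.trans hk₁.symm)))]
  · push Not at hk₀ hk₁
    refine ⟨C ((pairing (forms Φ 0) b).submatrix id J).det, ⟨_, Bd.C _⟩, Nice.C L _, fun t => ?_⟩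
    rw [ev_C]
    congr 1
    ext i k
    exact hconst t k i (hk₀ k) (hk₁ k)

end PadicND

/-! ### Small derivative -/

namespace PadicND

open PowerSeries

variable {p : ℕ} [Fact p.Prime]

section coef

variable {N r : ℕ} {b : Fin r → Fin N → ℤ} {J : Fin r → Fin N}

lemma bmat_submatrix_det (b : Fin r → Fin N → ℤ) (J : Fin r → Fin N) :
    ((bmat b).submatrix id J).det = ((((Matrix.of b).submatrix id J).det : ℤ) : ℚ_[p]) := by
  rw [Int.cast_det]; rfl

lemma coef_eq (b : Fin r → Fin N → ℤ) (J : Fin r → Fin N) (k : Fin r) (x : Fin N) :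
    coef ((bmat b).submatrix id J) b k x
      = ((((Matrix.of b).submatrix id (Function.update J k x)).det : ℤ) : ℚ_[p]) := by
  rw [coef, Matrix.cramer_apply, ← bmat_submatrix_det]
  congr 1
  ext i l
  rcases eq_or_ne l k with rfl | h
  · simp
  · simp [h]

lemma norm_coef_le (b : Fin r → Fin N → ℤ) (J : Fin r → Fin N) (k : Fin r) :
    ‖coef (p := p) ((bmat b).submatrix id J) b k‖ ≤ 1 := by
  refine (pi_norm_le_iff_of_nonneg zero_le_one).mpr fun x => ?_
  rw [coef_eq]
  exact Padic.norm_int_le_one _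

lemma coef_self (b : Fin r → Fin N → ℤ) (J : Fin r → Fin N) (k : Fin r) :
    coef (p := p) ((bmat b).submatrix id J) b k (J k) = ((bmat b).submatrix id J).det := by
  rw [coef_eq, Function.update_eq_self, bmat_submatrix_det]

lemma coef_of_ne (b : Fin r → Fin N → ℤ) (J : Fin r → Fin N) {k l : Fin r} (h : k ≠ l) :
    coef (p := p) ((bmat b).submatrix id J) b k (J l) = 0 := by
  rw [coef_eq, Int.cast_eq_zero]
  exact Matrix.det_zero_of_column_eq h fun i => by simp [h.symm]

lemma norm_coef (b : Fin r → Fin N → ℤ) (J : Fin r → Fin N) (k : Fin r)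
    (h : ‖((bmat (p := p) b).submatrix id J).det‖ = 1) :
    ‖coef (p := p) ((bmat b).submatrix id J) b k‖ = 1 := by
  apply le_antisymm (norm_coef_le b J k)
  rw [← h, ← coef_self b J k]
  exact norm_le_pi_norm _ (J k)

end coef

/-- The weights attached to the linear forms `forms Φ t`: `T₀` for the value, `T₁` for the
derivative, `T₂` for each coordinate. -/
def wts {N : ℕ} (T₀ T₁ T₂ : ℝ) : Option (Option (Fin N)) → ℝ
  | none => T₀
  | some none => T₁
  | some (some _) => T₂

variable [MeasurableSpace ℤ_[p]] {ν : Measure ℤ_[p]}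

/-- The covolume of a nonzero rational subspace is at least one somewhere on each ball. -/
lemma exists_one_le_covol (hν : IsUnif ν) {n L m : ℕ} (hn : 1 ≤ n) {A₀ M : ℝ}
    {Φ : Fin (n + 1) → PowerSeries ℚ_[p]} (hΦ : ∀ x, Bd M (Φ x)) (hG : GoodFam L A₀ Φ)
    (hm : (L : ℝ) * (p : ℝ)⁻¹ ^ m < 1) {T₀ T₁ T₂ : ℝ} (hT₀ : 0 ≤ T₀) (hT₁ : 0 ≤ T₁) (hT₂ : 0 < T₂)
    (hT₂' : T₂ ≤ 1) (t₀ : ℤ_[p]) (j : ℕ)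
    (h1 : 1 ≤ T₀ * T₂ ^ (n - 1) * (A₀ * ((p : ℝ)⁻¹ ^ (j + m)) ^ L))
    (h2 : 1 ≤ T₀ * T₁ * T₂ ^ (n - 1) * (A₀ * ((p : ℝ)⁻¹ ^ (j + m)) ^ L))
    {V : Submodule ℚ (Fin (n + 1) → ℚ)} (hV : V ≠ ⊥) {r : ℕ} {b : Fin r → Fin (n + 1) → ℤ}
    (hb : IsIntBasis V b) : ∃ t ∈ bl t₀ j, 1 ≤ covol (forms Φ t) (wts T₀ T₁ T₂) b := by
  have hM : 0 ≤ M := (hΦ 0).nonneg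
  have hw : ∀ k : Option (Option (Fin (n + 1))), 0 ≤ wts T₀ T₁ T₂ k := by
    rintro (_ | _ | _) <;> simp only [wts] <;> first | assumption | exact hT₂.le
  obtain ⟨J, hJ⟩ := hb.exists_unit_minor (p := p)
  have hdet : ‖((bmat (p := p) b).submatrix id J).det‖ = 1 := by
    rw [bmat_submatrix_det]
    refine le_antisymm (Padic.norm_int_le_one _) (not_lt.mp fun h => hJ ?_)
    exact Padic.norm_intCast_lt_one_iff.mp h
  have hreal : 1 ≤ minorSup (fun _ => 1) (Matrix.of fun i x => (b i x : ℝ)) := by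
    refine le_trans ?_ (le_minorSup _ J)
    have : ((Matrix.of fun i x => (b i x : ℝ)).submatrix id J).det
        = ((((Matrix.of b).submatrix id J).det : ℤ) : ℝ) := by rw [Int.cast_det]; rfl
    rw [this, Finset.prod_const_one, one_mul, Real.norm_eq_abs]
    have : ((Matrix.of b).submatrix id J).det ≠ 0 := fun h => hJ (by rw [h]; exact dvd_zero _)
    exact_mod_cast Int.one_le_abs this
  have key : ∀ t, ∀ J' : Fin r → Option (Option (Fin (n + 1))),
      1 ≤ (∏ k, wts T₀ T₁ T₂ (J' k)) * ‖((pairing (forms Φ t) b).submatrix id J').det‖ →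
      1 ≤ covol (forms Φ t) (wts T₀ T₁ T₂) b := fun t J' h =>
    one_le_mul_of_one_le_of_one_le hreal (h.trans (le_minorSup _ J'))
  have hr1 : 1 ≤ r := by
    rw [Nat.one_le_iff_ne_zero]
    intro h0
    apply hV
    have := hb.finrank
    rw [h0] at this
    exact Submodule.finrank_eq_zero.mp this
  have hr2 : r ≤ n + 1 := by
    have := Submodule.finrank_le V
    rw [hb.finrank] at this
    simpa using this
  set A := (bmat (p := p) b).submatrix id J with hA
  rcases Nat.lt_or_ge n r with hr | hr
  -- Full rank: use the minor built from `F`, the derivative of `F` and `n - 1` coordinates.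
  · obtain rfl : r = n + 1 := by omega
    obtain ⟨k₀, k₁, hk⟩ : ∃ k₀ k₁ : Fin (n + 1), k₀ ≠ k₁ :=
      ⟨0, ⟨1, by omega⟩, by simp [Fin.ext_iff]⟩
    set a := coef A b k₀
    set a' := coef A b k₁
    have hdet0 : A.det ≠ 0 := norm_ne_zero_iff.mp (by rw [hdet]; exact one_ne_zero)
    obtain ⟨l, hl, D, hD, hDD⟩ := hG.wr (J k₀) (A.det⁻¹ • a) a'
      (by
        have h : a (J k₀) = A.det := coef_self b J k₀
        rw [Pi.smul_apply, h, smul_eq_mul, inv_mul_cancel₀ hdet0])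
      (by rw [norm_smul, norm_inv, hdet, inv_one, one_mul]; exact norm_coef_le b J k₀)
      (coef_of_ne b J hk.symm) (norm_coef b J k₁ hdet)
    obtain ⟨t, ht, hle⟩ := hDD.exists_large hν hl (Bd.wr hM hΦ _ _) hm t₀ j
    refine ⟨t, ht, key t (Function.update (Function.update (fun k => some (some (J k))) k₁ (some none))
      k₀ none) ?_⟩
    have e1 : ∏ k, wts T₀ T₁ T₂ (Function.update (Function.update (fun k => some (some (J k))) k₁
        (some none)) k₀ none k) = T₀ * T₁ * T₂ ^ (n - 1) := by
      rw [← Finset.mul_prod_erase _ _ (Finset.mem_univ k₀),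
        ← Finset.mul_prod_erase _ _ (Finset.mem_erase.mpr ⟨hk.symm, Finset.mem_univ k₁⟩), ← mul_assoc]
      congr 1
      · simp [wts, hk.symm]
      · rw [Finset.prod_congr rfl (g := fun _ => T₂), Finset.prod_const]
        · congr 1
          rw [Finset.card_erase_of_mem (Finset.mem_erase.mpr ⟨hk.symm, Finset.mem_univ k₁⟩),
            Finset.card_erase_of_mem (Finset.mem_univ k₀)]
          simp
        · intro k hk
          rw [Finset.mem_erase, Finset.mem_erase] at hk
          simp [wts, hk.1, hk.2.1]
    have e2 : (pairing (forms Φ t) b).submatrix id (Function.update (Function.update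
        (fun k => some (some (J k))) k₁ (some none)) k₀ none) =
        (A.updateCol k₁ ((bmat b).mulVec (forms Φ t (some none)))).updateCol k₀
          ((bmat b).mulVec (forms Φ t none)) := by
      ext i k
      rcases eq_or_ne k k₀ with rfl | h
      · simp [pairing_eq]
      rcases eq_or_ne k k₁ with rfl | h'
      · simp [h, pairing_eq]
      simp [h, h', pairing_eq, hA, forms]
    have e3 := congrArg norm (det_mul_minor hM hΦ A b hk t)
    rw [norm_mul, hdet, one_mul] at e3
    rw [wr_smul_left, ev_C_mul _ (Bd.wr hM hΦ _ _), norm_mul, norm_inv, hdet, inv_one, one_mul] at hle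
    rw [e1, e2, e3]
    refine h2.trans (mul_le_mul_of_nonneg_left (le_trans ?_ hle) (by positivity))
    have := (pinv_pos (p := p)).le
    gcongr
  · obtain ⟨k₀⟩ : Nonempty (Fin r) := ⟨⟨0, hr1⟩⟩
    obtain ⟨l, hl, D, hD, hDD⟩ := hG.lin (coef A b k₀) (norm_coef b J k₀ hdet)
    obtain ⟨t, ht, hle⟩ := hDD.exists_large hν hl (Bd.lin hM hΦ _) hm t₀ j
    refine ⟨t, ht, key t (Function.update (fun k => some (some (J k))) k₀ none) ?_⟩
    have e1 : ∏ k, wts T₀ T₁ T₂ (Function.update (fun k => some (some (J k))) k₀ none k)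
        = T₀ * T₂ ^ (r - 1) := by
      rw [← Finset.mul_prod_erase _ _ (Finset.mem_univ k₀)]
      congr 1
      · simp [wts]
      · rw [Finset.prod_congr rfl (g := fun _ => T₂), Finset.prod_const]
        · congr 1
          rw [Finset.card_erase_of_mem (Finset.mem_univ k₀)]
          simp
        · intro k hk
          simp [wts, Finset.ne_of_mem_erase hk]
    have e2 : (pairing (forms Φ t) b).submatrix id (Function.update
        (fun k => some (some (J k))) k₀ none) =
        A.updateCol k₀ ((bmat b).mulVec (forms Φ t none)) := by
      ext i k
      rcases eq_or_ne k k₀ with rfl | h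
      · simp [pairing_eq]
      simp [h, pairing_eq, hA, forms]
    rw [e1, e2, ← Matrix.cramer_apply, cramer_none hM hΦ]
    refine h1.trans ?_
    have hp := (pinv_pos (p := p)).le
    have hc : 0 ≤ A₀ * ((p : ℝ)⁻¹ ^ (j + m)) ^ L := by
      by_contra hneg
      push Not at hneg
      have : T₀ * T₂ ^ (n - 1) * (A₀ * ((p : ℝ)⁻¹ ^ (j + m)) ^ L) ≤ 0 :=
        mul_nonpos_of_nonneg_of_nonpos (by positivity) hneg.le
      linarith
    refine mul_le_mul (mul_le_mul_of_nonneg_left ?_ hT₀) (le_trans ?_ hle) hc (by positivity)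
    · exact pow_le_pow_of_le_one hT₂.le hT₂' (by omega)
    · gcongr

omit [MeasurableSpace ℤ_[p]] in
lemma continuous_covol {n r L : ℕ} {A₀ M : ℝ} {Φ : Fin (n + 1) → PowerSeries ℚ_[p]}
    (h0 : Φ 0 = 1) (hΦ : ∀ x, Bd M (Φ x)) (hG : GoodFam L A₀ Φ) (b : Fin r → Fin (n + 1) → ℤ)
    (w : Option (Option (Fin (n + 1))) → ℝ) : Continuous fun t => covol (forms Φ t) w b := by
  unfold covol minorSup
  refine continuous_const.mul ?_
  have : ∀ t, ⨆ J : Fin r → Option (Option (Fin (n + 1))),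
      (∏ k, w (J k)) * ‖((pairing (forms Φ t) b).submatrix id J).det‖ =
      Finset.univ.sup' Finset.univ_nonempty fun J : Fin r → Option (Option (Fin (n + 1))) =>
      (∏ k, w (J k)) * ‖((pairing (forms Φ t) b).submatrix id J).det‖ := fun t => by
    rw [Finset.sup'_univ_eq_ciSup]
  simp_rw [this]
  refine Continuous.finset_sup'_apply _ fun J _ => ?_
  obtain ⟨φ, ⟨M', hB⟩, _, he⟩ := exists_minor_eq_ev h0 hΦ hG b J
  simp_rw [he]
  exact continuous_const.mul hB.continuous.norm

lemma good_covol (hν : IsUnif ν) {n r L : ℕ} {A₀ M : ℝ} {Φ : Fin (n + 1) → PowerSeries ℚ_[p]}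
    (h0 : Φ 0 = 1) (hΦ : ∀ x, Bd M (Φ x)) (hG : GoodFam L A₀ Φ) (b : Fin r → Fin (n + 1) → ℤ)
    {w : Option (Option (Fin (n + 1))) → ℝ} (hw : ∀ k, 0 ≤ w k) (m : ℕ) :
    Good ν L m fun t => covol (forms Φ t) w b := by
  unfold covol
  refine Good.const_mul ?_ (minorSup_nonneg (fun _ => zero_le_one) _)
  refine Good.iSup fun J => Good.const_mul ?_ (Finset.prod_nonneg fun _ _ => hw _)
  obtain ⟨φ, ⟨M', hB⟩, ⟨l, hl, A, hD⟩, he⟩ := exists_minor_eq_ev h0 hΦ hG b J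
  simp_rw [he]
  exact hD.good hν hl hB m

/-- The points where some nonzero integer vector of size at most `Q` satisfies
`|q · F(t)| < ε₀` and `|q · F'(t)| < η` form a small set, quantified by `unmarkedBound`. -/
lemma measure_smallGrad_le [BorelSpace ℤ_[p]] (hν : IsUnif ν) {n L m : ℕ} (hn : 1 ≤ n) {A₀ M : ℝ}
    {Φ : Fin (n + 1) → PowerSeries ℚ_[p]} (h0 : Φ 0 = 1) (hΦ : ∀ x, Bd M (Φ x))
    (hG : GoodFam L A₀ Φ) (hm : (L : ℝ) * (p : ℝ)⁻¹ ^ m < 1) {κ Q ε₀ η : ℝ} (hκ : 0 < κ)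
    (hκ' : ((n + 1 : ℕ) : ℝ) ^ 2 * κ < ((p : ℝ) ^ (m * L))⁻¹)
    (hQ : 1 ≤ Q) (hε₀ : 0 < ε₀) (hη : 0 < η) (t₀ : ℤ_[p]) (j : ℕ)
    (h1 : 1 ≤ κ / (Q * ε₀) * (κ / Q) ^ (n - 1) * (A₀ * ((p : ℝ)⁻¹ ^ (j + m)) ^ L))
    (h2 : 1 ≤ κ / (Q * ε₀) * (κ / (Q * η)) * (κ / Q) ^ (n - 1)
      * (A₀ * ((p : ℝ)⁻¹ ^ (j + m)) ^ L)) :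
    ν {t | t ∈ bl t₀ j ∧ ∃ v : Fin (n + 1) → ℤ, v ≠ 0 ∧ (∀ x, |(v x : ℝ)| ≤ Q) ∧
      ‖∑ x, ev (Φ x) t * (v x : ℚ_[p])‖ < ε₀ ∧
      ‖∑ x, ev (derivative ℚ_[p] (Φ x)) t * (v x : ℚ_[p])‖ < η}
      ≤ unmarkedBound p L m (n + 2) * ν (bl t₀ j) := by
  have hQ0 : 0 < Q := by linarith
  set w : Option (Option (Fin (n + 1))) → ℝ := wts (κ / (Q * ε₀)) (κ / (Q * η)) (κ / Q) with hwdef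
  set ε : ℝ := ((p : ℝ) ^ (m * L))⁻¹ with hε
  have hpm : (1 : ℝ) ≤ (p : ℝ) ^ (m * L) := one_le_pow₀ (one_le_p (p := p))
  have hε1 : ε ≤ 1 := inv_le_one_of_one_le₀ hpm
  have hw : ∀ k, 0 ≤ w k := by
    rintro (_ | _ | _) <;> simp only [hwdef, wts] <;> positivity
  have hκ1 : κ ≤ 1 := by
    have : (1 : ℝ) ≤ ((n + 1 : ℕ) : ℝ) ^ 2 := one_le_pow₀ (by norm_cast; omega)
    nlinarith
  have hmeas := measure_unmarked_le hν (L := L) (m := m) (ε := ε)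
    (by rw [hε, inv_mul_cancel₀ (by positivity)])
    (P := Submodule ℚ (Fin (n + 1) → ℚ)) (rk := fun V => Module.finrank ℚ V)
    (fun V W h => Submodule.finrank_lt_finrank_of_lt h)
    (ψ := fun V t => psi (forms Φ t) w V) (n + 2) {V | V ≠ ⊥} (Finset.range (n + 2))
    (Finset.card_range _)
    (fun V _ => by
      rw [Finset.mem_range]
      have := Submodule.finrank_le V
      simp at this
      omega)
    (fun V _ => continuous_covol h0 hΦ hG _ _)
    (fun V _ => good_covol hν h0 hΦ hG _ hw m) t₀ j
    (fun V hV => exists_one_le_covol hν hn hΦ hG hm (by positivity) (by positivity) (by positivity)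
      ((div_le_one hQ0).mpr (hκ1.trans hQ)) t₀ j h1 h2 hV
      (exists_isIntBasis V).choose_spec.choose_spec)
  refine (measure_mono ?_).trans hmeas
  rintro t ⟨ht, v, hv0, hvQ, hv1, hv2⟩
  refine ⟨ht, fun hm => ?_⟩
  have := hm.no_short_vector hw hε1 hv0 hQ0.le (h := κ / Q) (by positivity) hvQ (by
    rintro (_ | _ | x)
    · simp only [hwdef, wts, forms]
      calc _ ≤ κ / (Q * ε₀) * ε₀ := by gcongr
        _ = κ / Q := by field_simp
    · simp only [hwdef, wts, forms]
      calc _ ≤ κ / (Q * η) * η := by gcongr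
        _ = κ / Q := by field_simp
    · simp only [hwdef, wts, forms]
      refine mul_le_of_le_one_right (by positivity) ?_
      rw [Finset.sum_eq_single x]
      · simpa using Padic.norm_int_le_one (v x)
      · intro y _ hy; simp [hy]
      · simp)
  have e : ((n + 1 : ℕ) : ℝ) ^ 2 * Q * (κ / Q) = ((n + 1 : ℕ) : ℝ) ^ 2 * κ := by field_simp
  rw [e] at this
  linarith

end PadicND

/-! ### Large derivative -/

namespace PadicND

open PowerSeries

variable {p : ℕ} [Fact p.Prime]

/-- Integers of absolute value at most `Q` that are pairwise `p`-adically close are well spaced in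
the real sense, so there are few of them. -/
lemma card_le_of_close {Z : Finset ℤ} {Q R : ℝ} (hR : 0 < R) (hQ : 1 ≤ Q * R)
    (hZ : ∀ z ∈ Z, |(z : ℝ)| ≤ Q) (hc : ∀ z ∈ Z, ∀ w ∈ Z, ‖((z - w : ℤ) : ℚ_[p])‖ ≤ R) :
    (Z.card : ℝ) ≤ 3 * (Q * R) := by
  have hinj : Set.InjOn (fun z : ℤ => ⌊((z : ℝ) + Q) * R⌋₊) Z := by
    intro z hz w hw hzw
    by_contra hne
    have hz0 : z - w ≠ 0 := sub_ne_zero.mpr hne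
    have h1 := one_le_abs_mul_norm (p := p) hz0
    have h2 := hc z hz w hw
    have h3 : 1 ≤ |(z : ℝ) - w| * R := by
      calc (1 : ℝ) ≤ _ := h1
        _ ≤ |(z : ℝ) - w| * R := by
          rw [Real.norm_eq_abs, show ((z - w : ℤ) : ℝ) = (z : ℝ) - w from Int.cast_sub z w]
          exact mul_le_mul_of_nonneg_left h2 (abs_nonneg _)
    have hz1 : 0 ≤ ((z : ℝ) + Q) * R := mul_nonneg (by linarith [(abs_le.mp (hZ z hz)).1]) hR.le
    have hw1 : 0 ≤ ((w : ℝ) + Q) * R := mul_nonneg (by linarith [(abs_le.mp (hZ w hw)).1]) hR.le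
    have a1 := Nat.floor_le hz1
    have a2 := Nat.lt_floor_add_one (((z : ℝ) + Q) * R)
    have b1 := Nat.floor_le hw1
    have b2 := Nat.lt_floor_add_one (((w : ℝ) + Q) * R)
    simp only at hzw
    rw [hzw] at a1 a2
    have h4 : |((z : ℝ) - w) * R| < 1 := abs_lt.mpr ⟨by linarith, by linarith⟩
    rw [abs_mul, abs_of_pos hR] at h4
    linarith
  have hcard : Z.card ≤ (Finset.range (⌊2 * (Q * R)⌋₊ + 1)).card := by
    refine Finset.card_le_card_of_injOn _ (fun z hz => ?_) hinj
    rw [Finset.coe_range, Set.mem_Iio, Nat.lt_succ_iff]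
    refine Nat.floor_le_floor ?_
    have := (abs_le.mp (hZ z hz)).2
    nlinarith
  rw [Finset.card_range] at hcard
  have h1 := Nat.floor_le (show 0 ≤ 2 * (Q * R) by linarith)
  have h2 : (Z.card : ℝ) ≤ (⌊2 * (Q * R)⌋₊ : ℝ) + 1 := by exact_mod_cast hcard
  linarith

variable [MeasurableSpace ℤ_[p]] {ν : Measure ℤ_[p]}

lemma IsUnif.measure_lt_le (hν : IsUnif ν) (t : ℤ_[p]) {R : ℝ} (hR : 0 < R) :
    ν {u | ‖u - t‖ < R} ≤ ENNReal.ofReal R := by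
  have hex : ∃ i : ℕ, (p : ℝ)⁻¹ ^ i ≤ R := by
    obtain ⟨i, hi⟩ := exists_pow_lt_of_lt_one hR (pinv_lt_one (p := p))
    exact ⟨i, hi.le⟩
  classical
  obtain hi := Nat.find_spec hex
  refine (measure_mono fun u hu => ?_).trans ((hν t (Nat.find hex)).trans_le
    (ENNReal.ofReal_le_ofReal hi))
  rw [Set.mem_ofPred_eq] at hu
  change ‖u - t‖ ≤ _
  rcases Nat.eq_zero_or_pos (Nat.find hex) with h0 | h0
  · rw [h0, pow_zero]; exact PadicInt.norm_le_one _
  · have hmin := Nat.find_min hex (Nat.sub_one_lt h0.ne')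
    push Not at hmin
    have h1 := hu.trans hmin
    have h2 := (PadicInt.norm_lt_pow_iff_norm_le_pow_sub_one (u - t)
      (-((Nat.find hex - 1 : ℕ) : ℤ))).mp (by
        rw [zpow_neg, zpow_natCast, ← inv_pow]; exact h1)
    convert h2 using 1
    rw [show -((Nat.find hex - 1 : ℕ) : ℤ) - 1 = -(Nat.find hex : ℤ) by omega, zpow_neg,
      zpow_natCast, inv_pow]

/-- On a ball where the derivative is not small, `φ` scales distances by a constant factor `G`, so
few integers `z` come within `ε₀` of `-φ`, each on a set of measure at most `ε₀ / G`. -/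
lemma measure_largeGrad_single_le (hν : IsUnif ν) {M η ε₀ Q : ℝ} {φ : PowerSeries ℚ_[p]}
    (hφ : Bd M φ) (hη : 0 < η) (hε₀ : 0 < ε₀) {k : ℕ} (hk : M * (p : ℝ)⁻¹ ^ k < η)
    (hQ : 1 ≤ Q * (η * (p : ℝ)⁻¹ ^ k)) (hε : ε₀ ≤ η * (p : ℝ)⁻¹ ^ k) (t₁ : ℤ_[p]) :
    ν {t | t ∈ bl t₁ k ∧ η ≤ ‖ev (derivative ℚ_[p] φ) t‖ ∧
      ∃ z : ℤ, |(z : ℝ)| ≤ Q ∧ ‖ev φ t + z‖ < ε₀} ≤ ENNReal.ofReal (3 * Q * ε₀) * ν (bl t₁ k) := by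
  classical
  have hM := hφ.nonneg
  have hpk : 0 < (p : ℝ)⁻¹ ^ k := pow_pos (pinv_pos (p := p)) k
  rcases Set.eq_empty_or_nonempty {t | t ∈ bl t₁ k ∧ η ≤ ‖ev (derivative ℚ_[p] φ) t‖ ∧
      ∃ z : ℤ, |(z : ℝ)| ≤ Q ∧ ‖ev φ t + z‖ < ε₀} with hemp | ⟨s, hs, hsη, z₀, hz₀, -⟩
  · rw [hemp, measure_empty]; exact zero_le
  have hQ0 : 0 < Q := by
    by_contra h
    push Not at h
    have : Q * (η * (p : ℝ)⁻¹ ^ k) ≤ 0 := mul_nonpos_of_nonpos_of_nonneg h (by positivity)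
    linarith
  set G := ‖ev (derivative ℚ_[p] φ) s‖ with hG
  have hG0 : 0 < G := hη.trans_le hsη
  have hconst : ∀ t ∈ bl t₁ k, ‖ev (derivative ℚ_[p] φ) t‖ = G := by
    intro t ht
    have h1 : ‖ev (derivative ℚ_[p] φ) t - ev (derivative ℚ_[p] φ) s‖ < G :=
      calc _ ≤ M * ‖t - s‖ := hφ.deriv.lipschitz t s
        _ ≤ M * (p : ℝ)⁻¹ ^ k := by gcongr; exact bl_diam ht hs
        _ < G := hk.trans_le hsη
    have := IsUltrametricDist.norm_add_eq_max_of_norm_ne_norm h1.ne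
    rw [sub_add_cancel, max_eq_right h1.le] at this
    exact this
  have hscale : ∀ t ∈ bl t₁ k, ∀ u ∈ bl t₁ k, ‖ev φ u - ev φ t‖ = G * ‖u - t‖ := by
    intro t ht u hu
    rcases eq_or_ne u t with rfl | hne
    · simp
    have hpos : 0 < ‖u - t‖ := norm_pos_iff.mpr (sub_ne_zero.mpr hne)
    have h1 := hφ.taylor t (u - t)
    rw [add_sub_cancel] at h1
    have h2 : ‖((u - t : ℤ_[p]) : ℚ_[p]) * ev (derivative ℚ_[p] φ) t‖ = G * ‖u - t‖ := by
      rw [norm_mul, hconst t ht, mul_comm]; rfl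
    have h3 : ‖ev φ u - ev φ t - ((u - t : ℤ_[p]) : ℚ_[p]) * ev (derivative ℚ_[p] φ) t‖
        < G * ‖u - t‖ := by
      refine h1.trans_lt ?_
      rw [sq, ← mul_assoc]
      refine mul_lt_mul_of_pos_right ?_ hpos
      calc M * ‖u - t‖ ≤ M * (p : ℝ)⁻¹ ^ k := by gcongr; exact bl_diam hu ht
        _ < G := hk.trans_le hsη
    have := IsUltrametricDist.norm_add_eq_max_of_norm_ne_norm (h3.trans_eq h2.symm).ne
    rw [sub_add_cancel, h2, max_eq_right h3.le] at this
    exact this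
  set T : ℤ → Set ℤ_[p] := fun z => {t | t ∈ bl t₁ k ∧ ‖ev φ t + z‖ < ε₀} with hT
  set Z := (Finset.Icc (-⌊Q⌋) ⌊Q⌋).filter fun z => (T z).Nonempty with hZ
  have hZQ : ∀ z ∈ Z, |(z : ℝ)| ≤ Q := by
    intro z hz
    have := Finset.mem_Icc.mp (Finset.mem_filter.mp hz).1
    rw [abs_le]
    constructor
    · have h1 : (-⌊Q⌋ : ℝ) ≤ z := by exact_mod_cast this.1
      linarith [Int.floor_le Q]
    · have h1 : (z : ℝ) ≤ ⌊Q⌋ := by exact_mod_cast this.2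
      linarith [Int.floor_le Q]
  have hcard : (Z.card : ℝ) ≤ 3 * (Q * (G * (p : ℝ)⁻¹ ^ k)) := by
    refine card_le_of_close (p := p) (by positivity) (hQ.trans (by gcongr)) hZQ ?_
    intro z hz w hw
    obtain ⟨t, ht, htz⟩ := (Finset.mem_filter.mp hz).2
    obtain ⟨u, hu, huw⟩ := (Finset.mem_filter.mp hw).2
    have hεG : ε₀ ≤ G * (p : ℝ)⁻¹ ^ k := hε.trans (by gcongr)
    have e : ((z - w : ℤ) : ℚ_[p]) = (ev φ t + z) - (ev φ u + w) + (ev φ u - ev φ t) := by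
      push_cast; ring
    rw [e]
    refine (IsUltrametricDist.norm_add_le_max _ _).trans (max_le ?_ ?_)
    · exact (norm_sub_le_max_ultra _ _).trans (max_le (htz.le.trans hεG) (huw.le.trans hεG))
    · rw [hscale t ht u hu]
      gcongr
      exact bl_diam hu ht
  have hmeas : ∀ z ∈ Z, ν (T z) ≤ ENNReal.ofReal (ε₀ / G) := by
    intro z hz
    obtain ⟨t, ht, htz⟩ := (Finset.mem_filter.mp hz).2
    refine (measure_mono fun u hu => ?_).trans (hν.measure_lt_le t (by positivity))
    rw [Set.mem_ofPred_eq, lt_div_iff₀ hG0, mul_comm, ← hscale t ht u hu.1]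
    have e : ev φ u - ev φ t = (ev φ u + z) - (ev φ t + z) := by ring
    rw [e]
    exact (norm_sub_le_max_ultra _ _).trans_lt (max_lt hu.2 htz)
  calc _ ≤ ν (⋃ z ∈ Z, T z) := by
        refine measure_mono ?_
        rintro t ⟨ht, -, z, hz, hzt⟩
        have hzZ : z ∈ Z := by
          refine Finset.mem_filter.mpr ⟨Finset.mem_Icc.mpr ?_, ⟨t, ht, hzt⟩⟩
          rw [abs_le] at hz
          refine ⟨?_, Int.le_floor.mpr hz.2⟩
          rw [neg_le]
          exact Int.le_floor.mpr (by push_cast; linarith)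
        exact Set.mem_biUnion hzZ ⟨ht, hzt⟩
    _ ≤ ∑ z ∈ Z, ν (T z) := measure_biUnion_finset_le _ _
    _ ≤ ∑ _z ∈ Z, ENNReal.ofReal (ε₀ / G) := Finset.sum_le_sum hmeas
    _ = ENNReal.ofReal (Z.card * (ε₀ / G)) := by
        rw [Finset.sum_const, nsmul_eq_mul, ENNReal.ofReal_mul (by positivity),
          ENNReal.ofReal_natCast]
    _ ≤ ENNReal.ofReal (3 * Q * ε₀ * (p : ℝ)⁻¹ ^ k) := by
        refine ENNReal.ofReal_le_ofReal ?_
        calc (Z.card : ℝ) * (ε₀ / G) ≤ 3 * (Q * (G * (p : ℝ)⁻¹ ^ k)) * (ε₀ / G) := by gcongr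
          _ = 3 * Q * ε₀ * (p : ℝ)⁻¹ ^ k := by field_simp
    _ = ENNReal.ofReal (3 * Q * ε₀) * ν (bl t₁ k) := by
        rw [hν t₁ k, ENNReal.ofReal_mul (by positivity)]

omit [MeasurableSpace ℤ_[p]] in
lemma sum_ev_eq {n : ℕ} {M : ℝ} {Φ : Fin (n + 1) → PowerSeries ℚ_[p]} (h0 : Φ 0 = 1)
    (hΦ : ∀ x, Bd M (Φ x)) (v : Fin (n + 1) → ℤ) (t : ℤ_[p]) :
    ∑ x, ev (Φ x) t * (v x : ℚ_[p])
      = ev (lin Φ (Fin.cons 0 fun i => (v i.succ : ℚ_[p]))) t + v 0 := by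
  rw [ev_lin (hΦ 0).nonneg hΦ, Fin.sum_univ_succ, Fin.sum_univ_succ]
  have : ev (Φ 0) t = 1 := by rw [h0, ← map_one (C : ℚ_[p] →+* PowerSeries ℚ_[p]), ev_C]
  simp only [this, one_mul, Fin.cons_zero, zero_mul, zero_add, Fin.cons_succ]
  rw [add_comm]
  congr 1
  exact Finset.sum_congr rfl fun i _ => mul_comm _ _

omit [MeasurableSpace ℤ_[p]] in
lemma sum_ev_deriv_eq {n : ℕ} {M : ℝ} {Φ : Fin (n + 1) → PowerSeries ℚ_[p]} (h0 : Φ 0 = 1)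
    (hΦ : ∀ x, Bd M (Φ x)) (v : Fin (n + 1) → ℤ) (t : ℤ_[p]) :
    ∑ x, ev (derivative ℚ_[p] (Φ x)) t * (v x : ℚ_[p])
      = ev (derivative ℚ_[p] (lin Φ (Fin.cons 0 fun i => (v i.succ : ℚ_[p])))) t := by
  rw [deriv_lin, ev_lin (hΦ 0).nonneg fun x => (hΦ x).deriv, Fin.sum_univ_succ, Fin.sum_univ_succ]
  have : derivative ℚ_[p] (Φ 0) = 0 := by
    rw [h0, ← map_one (C : ℚ_[p] →+* PowerSeries ℚ_[p]), derivative_C]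
  simp only [this, ev_zero, zero_mul, mul_zero, zero_add, Fin.cons_succ]
  exact Finset.sum_congr rfl fun i _ => mul_comm _ _

/-- The points where some integer vector of size at most `Q` satisfies `|q · F(t)| < ε₀` although
`|q · F'(t)| ≥ η`. -/
lemma measure_largeGrad_le [BorelSpace ℤ_[p]] (hν : IsUnif ν) {n : ℕ} {M η ε₀ Q : ℝ}
    {Φ : Fin (n + 1) → PowerSeries ℚ_[p]} (h0 : Φ 0 = 1) (hΦ : ∀ x, Bd M (Φ x))
    (hη : 0 < η) (hε₀ : 0 < ε₀) {j k : ℕ} (hjk : j ≤ k) (hk : M * (p : ℝ)⁻¹ ^ k < η)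
    (hQ1 : 1 ≤ Q) (hQ : 1 ≤ Q * (η * (p : ℝ)⁻¹ ^ k)) (hε : ε₀ ≤ η * (p : ℝ)⁻¹ ^ k) (t₀ : ℤ_[p]) :
    ν {t | t ∈ bl t₀ j ∧ ∃ v : Fin (n + 1) → ℤ, (∀ x, |(v x : ℝ)| ≤ Q) ∧
      ‖∑ x, ev (Φ x) t * (v x : ℚ_[p])‖ < ε₀ ∧
      η ≤ ‖∑ x, ev (derivative ℚ_[p] (Φ x)) t * (v x : ℚ_[p])‖}
      ≤ ENNReal.ofReal (3 ^ (n + 1) * Q ^ (n + 1) * ε₀) * ν (bl t₀ j) := by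
  classical
  have hM : 0 ≤ M := (hΦ 0).nonneg
  refine measure_le_of_local (fun t ht => ht.1) fun t _ => ⟨k, hjk, ?_⟩
  set S : (Fin n → ℤ) → Set ℤ_[p] := fun q =>
    {u | u ∈ bl t k ∧ η ≤ ‖ev (derivative ℚ_[p] (lin Φ (Fin.cons 0 fun i => (q i : ℚ_[p])))) u‖ ∧
      ∃ z : ℤ, |(z : ℝ)| ≤ Q ∧ ‖ev (lin Φ (Fin.cons 0 fun i => (q i : ℚ_[p]))) u + z‖ < ε₀} with hS
  set P : Finset (Fin n → ℤ) := Fintype.piFinset fun _ => Finset.Icc (-⌊Q⌋) ⌊Q⌋ with hP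
  have hcard : (P.card : ℝ) ≤ (3 * Q) ^ n := by
    rw [hP, Fintype.card_piFinset, Finset.prod_const, Finset.card_univ, Fintype.card_fin, Int.card_Icc]
    push_cast
    gcongr
    have h1 : (0 : ℤ) ≤ ⌊Q⌋ := Int.floor_nonneg.mpr (by linarith)
    have h2 : (((⌊Q⌋ + 1 - -⌊Q⌋).toNat : ℤ) : ℝ) = 2 * ⌊Q⌋ + 1 := by
      rw [Int.toNat_of_nonneg (by omega)]; push_cast; ring
    rw [Int.cast_natCast] at h2
    rw [h2]
    linarith [Int.floor_le Q]
  have hB : ∀ q : Fin n → ℤ, Bd M (lin Φ (Fin.cons 0 fun i => (q i : ℚ_[p]))) := fun q => by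
    refine (Bd.lin hM hΦ _).mono (mul_le_of_le_one_left hM ?_)
    refine (pi_norm_le_iff_of_nonneg zero_le_one).mpr fun x => ?_
    refine Fin.cases ?_ (fun i => ?_) x
    · simp
    · rw [Fin.cons_succ]; exact Padic.norm_int_le_one _
  calc _ ≤ ν (⋃ q ∈ P, S q) := by
        refine measure_mono ?_
        rintro u ⟨⟨-, v, hvQ, hv1, hv2⟩, hu⟩
        rw [sum_ev_eq h0 hΦ] at hv1
        rw [sum_ev_deriv_eq h0 hΦ] at hv2
        have hP : (fun i => v i.succ) ∈ P := by
          refine Fintype.mem_piFinset.mpr fun i => Finset.mem_Icc.mpr ?_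
          have := abs_le.mp (hvQ i.succ)
          refine ⟨?_, Int.le_floor.mpr this.2⟩
          rw [neg_le]
          exact Int.le_floor.mpr (by push_cast; linarith)
        exact Set.mem_biUnion hP ⟨hu, hv2, v 0, hvQ 0, hv1⟩
    _ ≤ ∑ q ∈ P, ν (S q) := measure_biUnion_finset_le _ _
    _ ≤ ∑ _q ∈ P, ENNReal.ofReal (3 * Q * ε₀) * ν (bl t k) := Finset.sum_le_sum fun q _ =>
        measure_largeGrad_single_le hν (hB q) hη hε₀ hk hQ hε t
    _ = ENNReal.ofReal (P.card * (3 * Q * ε₀)) * ν (bl t k) := by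
        rw [Finset.sum_const, nsmul_eq_mul, ENNReal.ofReal_mul (p := (P.card : ℝ)) (by positivity),
          ENNReal.ofReal_natCast, ← mul_assoc]
    _ ≤ ENNReal.ofReal (3 ^ (n + 1) * Q ^ (n + 1) * ε₀) * ν (bl t k) := by
        refine mul_le_mul_left (ENNReal.ofReal_le_ofReal ?_) _
        calc (P.card : ℝ) * (3 * Q * ε₀) ≤ (3 * Q) ^ n * (3 * Q * ε₀) := by gcongr
          _ = 3 ^ (n + 1) * Q ^ (n + 1) * ε₀ := by ring

end PadicND

/-! ### The one-variable estimate -/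

namespace PadicND

open PowerSeries

variable {p : ℕ} [Fact p.Prime]

/-- The one-variable estimate, uniform over all families of power series with the same constants. -/
theorem one_dim_bound [MeasurableSpace ℤ_[p]] [BorelSpace ℤ_[p]] {ν : Measure ℤ_[p]}
    (hν : IsUnif ν) {n : ℕ} (hn : 1 ≤ n) (L : ℕ) (M : ℝ) {A₀ : ℝ} (hA₀ : 0 < A₀) (j : ℕ) {δ : ℝ}
    (hδ : 0 < δ) : ∃ Q₀ : ℝ, 0 < Q₀ ∧ ∀ Q, Q₀ ≤ Q → ∀ Φ : Fin (n + 1) → PowerSeries ℚ_[p], Φ 0 = 1 →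
      (∀ x, Bd M (Φ x)) → GoodFam L A₀ Φ →
      ν {t | t ∈ bl 0 j ∧ ∃ v : Fin (n + 1) → ℤ, v ≠ 0 ∧ (∀ x, |(v x : ℝ)| ≤ Q) ∧
        ‖∑ x, ev (Φ x) t * (v x : ℚ_[p])‖ < δ / Q ^ (n + 1)}
        ≤ ENNReal.ofReal ((3 ^ (n + 1) + 1) * δ) * ν (bl 0 j) := by
  -- The scale `m` makes the bound for the case of small derivative at most `δ`.
  obtain ⟨m₀, hm₀⟩ := unmarkedBound_le (p := p) L (n + 2) (ENNReal.ofReal_pos.mpr hδ)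
  have hp0 := pinv_pos (p := p)
  have hpp := p_pos (p := p)
  obtain ⟨m₁, hm₁⟩ := exists_pow_lt_of_lt_one (show 0 < (1 : ℝ) / (L + 1) by positivity)
    (pinv_lt_one (p := p))
  set m := max m₀ m₁ with hm
  have hmL : (L : ℝ) * (p : ℝ)⁻¹ ^ m < 1 := by
    have h1 : (p : ℝ)⁻¹ ^ m ≤ (p : ℝ)⁻¹ ^ m₁ :=
      pow_le_pow_of_le_one hp0.le (pinv_le_one (p := p)) (le_max_right _ _)
    have h2 : (p : ℝ)⁻¹ ^ m < 1 / (L + 1) := h1.trans_lt hm₁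
    rw [lt_div_iff₀ (by positivity)] at h2
    have : 0 < (p : ℝ)⁻¹ ^ m := by positivity
    nlinarith
  -- With this `κ`, a vector of weighted size `κ / Q` is too short to exist at a marked point.
  set κ : ℝ := ((p : ℝ) ^ (m * L))⁻¹ / (2 * ((n + 1 : ℕ) : ℝ) ^ 2) with hκdef
  have hκ : 0 < κ := by positivity
  have hκ' : ((n + 1 : ℕ) : ℝ) ^ 2 * κ < ((p : ℝ) ^ (m * L))⁻¹ := by
    have e : ((n + 1 : ℕ) : ℝ) ^ 2 * κ = ((p : ℝ) ^ (m * L))⁻¹ / 2 := by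
      rw [hκdef]; field_simp
    rw [e]
    exact half_lt_self (by positivity)
  clear_value κ
  set c₁ := A₀ * ((p : ℝ)⁻¹ ^ (j + m)) ^ L with hc₁
  have hc₁0 : 0 < c₁ := by positivity
  clear_value c₁
  -- The threshold `η` for the derivative makes the full-rank condition on covolumes an equality;
  -- it does not depend on `Q`. The lower ranks only require `Q` to be large.
  set η := κ ^ (n + 1) * c₁ / δ with hη
  have hη0 : 0 < η := by positivity
  obtain ⟨k₁, hk₁⟩ := exists_pow_lt_of_lt_one (show 0 < η / (|M| + 1) by positivity)
    (pinv_lt_one (p := p))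
  set k := max j k₁ with hkdef
  have hk : M * (p : ℝ)⁻¹ ^ k < η := by
    have h1 : (p : ℝ)⁻¹ ^ k ≤ (p : ℝ)⁻¹ ^ k₁ :=
      pow_le_pow_of_le_one hp0.le (pinv_le_one (p := p)) (le_max_right _ _)
    have h2 : (p : ℝ)⁻¹ ^ k < η / (|M| + 1) := h1.trans_lt hk₁
    rw [lt_div_iff₀ (by positivity)] at h2
    have h3 : 0 < (p : ℝ)⁻¹ ^ k := by positivity
    have h4 := le_abs_self M
    nlinarith
  have hηk : 0 < η * (p : ℝ)⁻¹ ^ k := by positivity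
  refine ⟨max 1 (max (δ / (κ ^ n * c₁)) (max (1 / (η * (p : ℝ)⁻¹ ^ k)) (δ / (η * (p : ℝ)⁻¹ ^ k)))),
    by positivity, fun Q hQ Φ h0 hΦ hG => ?_⟩
  simp only [max_le_iff] at hQ
  obtain ⟨hQ1, hQ2, hQ3, hQ4⟩ := hQ
  rw [div_le_iff₀ (by positivity)] at hQ2 hQ3 hQ4
  have hQ0 : 0 < Q := by linarith
  set ε₀ := δ / Q ^ (n + 1) with hε₀
  have hε₀0 : 0 < ε₀ := by positivity
  have hε₀k : ε₀ ≤ η * (p : ℝ)⁻¹ ^ k := by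
    rw [hε₀, div_le_iff₀ (by positivity)]
    calc δ ≤ Q * (η * (p : ℝ)⁻¹ ^ k) := hQ4
      _ ≤ Q ^ (n + 1) * (η * (p : ℝ)⁻¹ ^ k) := by
        gcongr
        exact le_self_pow₀ hQ1 (by omega)
      _ = _ := mul_comm _ _
  have h1 : 1 ≤ κ / (Q * ε₀) * (κ / Q) ^ (n - 1) * c₁ := by
    have e : κ / (Q * ε₀) * (κ / Q) ^ (n - 1) * c₁ = Q * (κ ^ n * c₁) / δ := by
      obtain ⟨n', rfl⟩ : ∃ n', n = n' + 1 := ⟨n - 1, by omega⟩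
      rw [hε₀, Nat.add_sub_cancel, div_pow]
      field_simp
      ring
    rw [e, one_le_div hδ]
    exact hQ2
  have h2 : 1 ≤ κ / (Q * ε₀) * (κ / (Q * η)) * (κ / Q) ^ (n - 1) * c₁ := by
    have e : κ / (Q * ε₀) * (κ / (Q * η)) * (κ / Q) ^ (n - 1) * c₁ = 1 := by
      obtain ⟨n', rfl⟩ : ∃ n', n = n' + 1 := ⟨n - 1, by omega⟩
      rw [hε₀, hη, Nat.add_sub_cancel, div_pow]
      field_simp
      ring
    exact e.ge
  have hs := measure_smallGrad_le hν hn h0 hΦ hG hmL hκ hκ' hQ1 hε₀0 hη0 0 j (hc₁ ▸ h1) (hc₁ ▸ h2)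
  have hl := measure_largeGrad_le hν h0 hΦ hη0 hε₀0 (le_max_left j k₁) hk hQ1 (by linarith) hε₀k 0
  have e : 3 ^ (n + 1) * Q ^ (n + 1) * ε₀ = 3 ^ (n + 1) * δ := by
    rw [hε₀]; field_simp
  rw [e] at hl
  calc _ ≤ _ := measure_mono (by
        rintro t ⟨ht, v, hv0, hvQ, hv⟩
        rcases lt_or_ge ‖∑ x, ev (derivative ℚ_[p] (Φ x)) t * (v x : ℚ_[p])‖ η with h | h
        · exact Or.inl ⟨ht, v, hv0, hvQ, hv, h⟩
        · exact Or.inr ⟨ht, v, hvQ, hv, h⟩)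
    _ ≤ _ := measure_union_le _ _
    _ ≤ ENNReal.ofReal δ * ν (bl 0 j) + ENNReal.ofReal (3 ^ (n + 1) * δ) * ν (bl 0 j) :=
        add_le_add (hs.trans (mul_le_mul_left (hm₀ m (le_max_left _ _)) _)) hl
    _ = _ := by
        rw [← add_mul, ← ENNReal.ofReal_add hδ.le (by positivity)]
        congr 2
        ring

end PadicND

/-! ### Haar measure on `ℤ_p` -/

namespace PadicND

variable {p : ℕ} [Fact p.Prime]

/-- The Haar probability measure on `ℤ_p` gives balls of radius `p⁻ʲ` the mass `p⁻ʲ`. -/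
lemma exists_isUnif [MeasurableSpace ℤ_[p]] [BorelSpace ℤ_[p]] :
    ∃ ν : Measure ℤ_[p], IsProbabilityMeasure ν ∧ IsUnif ν := by
  set ν : Measure ℤ_[p] := Measure.addHaarMeasure ⊤ with hν
  have huniv : ν Set.univ = 1 := by
    have := Measure.addHaarMeasure_self (K₀ := (⊤ : TopologicalSpace.PositiveCompacts ℤ_[p]))
    simpa using this
  refine ⟨ν, ⟨huniv⟩, fun t j => ?_⟩
  have htr : ∀ t, ν (bl t j) = ν (bl 0 j) := fun t => by
    have e : (fun x => t + x) ⁻¹' bl t j = bl 0 j := by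
      ext x
      simp [bl]
    rw [← e, measure_preimage_add]
  have hcov : (Set.univ : Set ℤ_[p]) = ⋃ k ∈ Finset.range (p ^ j), bl (k : ℤ_[p]) j := by
    symm
    rw [Set.eq_univ_iff_forall]
    intro x
    refine Set.mem_biUnion (x := x.appr j) (by simpa using x.appr_lt j) ?_
    rw [bl_appr]
    exact mem_bl_self x j
  have hdisj : (Finset.range (p ^ j) : Set ℕ).PairwiseDisjoint fun k => bl (k : ℤ_[p]) j := by
    intro k hk l hl hne
    rw [Function.onFun, Set.disjoint_left]
    intro x hx hx'
    have h2 : ‖(((k : ℤ) - (l : ℤ) : ℤ) : ℤ_[p])‖ ≤ (p : ℝ) ^ (-(j : ℤ)) := by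
      have hk' : (k : ℤ_[p]) ∈ bl (l : ℤ_[p]) j := by
        rw [← bl_eq hx', bl_eq hx]
        exact mem_bl_self _ j
      rw [zpow_neg, zpow_natCast, ← inv_pow]
      push_cast
      exact hk'
    rw [PadicInt.norm_int_le_pow_iff_dvd] at h2
    apply hne
    have hk2 := Finset.mem_range.mp (Finset.mem_coe.mp hk)
    have hl2 := Finset.mem_range.mp (Finset.mem_coe.mp hl)
    have h3 : k ≡ l [MOD p ^ j] := by
      rw [Nat.modEq_iff_dvd]
      rw [← neg_sub, dvd_neg]
      exact_mod_cast h2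
    exact (Nat.ModEq.eq_of_lt_of_lt h3 hk2 hl2)
  have hsum : (p ^ j : ℕ) * ν (bl 0 j) = 1 := by
    rw [← huniv, hcov, measure_biUnion_finset hdisj fun k _ => measurableSet_bl _ _]
    simp [htr]
  rw [htr, ofReal_pinv_pow, ← ENNReal.inv_pow]
  push_cast at hsum
  exact ENNReal.eq_inv_of_mul_eq_one_left (by rw [mul_comm]; exact hsum)

end PadicND

/-! ### Wronskians, compactness and uniform non-degeneracy -/

namespace PadicND

open PowerSeries

variable {p : ℕ} [Fact p.Prime]

lemma exists_eq_X_pow_mul {K : Type*} [Field K] {φ : PowerSeries K} (h : φ ≠ 0) :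
    ∃ (o : ℕ) (u : PowerSeries K), φ = X ^ o * u ∧ constantCoeff u ≠ 0 := by
  have h0 : ∃ k, coeff k φ ≠ 0 := by
    by_contra! H
    exact h (PowerSeries.ext fun k => by simp [H k])
  classical
  obtain ⟨o, h1, h2⟩ : ∃ o, coeff o φ ≠ 0 ∧ ∀ m < o, coeff m φ = 0 :=
    ⟨Nat.find h0, Nat.find_spec h0, fun m hm => by simpa using Nat.find_min h0 hm⟩
  obtain ⟨u, hu⟩ := PowerSeries.X_pow_dvd_iff.mpr h2
  refine ⟨o, u, hu, fun hc => h1 ?_⟩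
  rw [hu]
  simpa [coeff_X_pow_mul'] using hc

lemma X_mul_deriv_X_pow_mul {K : Type*} [Field K] (o : ℕ) (u : PowerSeries K) :
    X * derivative K (X ^ o * u) = X ^ o * (C (o : K) * u + X * derivative K u) := by
  have h1 : X * derivative K ((X : PowerSeries K) ^ o) = C (o : K) * X ^ o := by
    rw [Derivation.leibniz_pow]
    rcases o with _ | o
    · simp
    · simp [pow_succ]
      ring
  rw [Derivation.leibniz, smul_eq_mul, smul_eq_mul, mul_add]
  linear_combination u * h1

lemma order_eq_of_wronskian {K : Type*} [Field K] [CharZero K] {u v : PowerSeries K} {o o' : ℕ}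
    (hu : constantCoeff u ≠ 0) (hv : constantCoeff v ≠ 0)
    (h : (X ^ o * u) * derivative K (X ^ o' * v) = (X ^ o' * v) * derivative K (X ^ o * u)) :
    o = o' := by
  have e : X ^ (o + o') * (u * (C (o' : K) * v + X * derivative K v))
      = X ^ (o + o') * (v * (C (o : K) * u + X * derivative K u)) := by
    have h1 := X_mul_deriv_X_pow_mul o u
    have h2 := X_mul_deriv_X_pow_mul o' v
    rw [pow_add]
    linear_combination X * h - X ^ o * u * h2 + X ^ o' * v * h1
  have e2 := congrArg constantCoeff (mul_left_cancel₀ (pow_ne_zero _ X_ne_zero) e)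
  simp only [map_mul, map_add, constantCoeff_C, constantCoeff_X, zero_mul, add_zero] at e2
  have e3 : ((o' : K) - o) * (constantCoeff u * constantCoeff v) = 0 := by
    linear_combination e2
  rcases mul_eq_zero.mp e3 with h3 | h3
  · exact (by exact_mod_cast sub_eq_zero.mp h3 : o' = o).symm
  · exact absurd h3 (mul_ne_zero hu hv)

/-- In characteristic zero, two power series with vanishing Wronskian are proportional. -/
lemma exists_eq_C_mul_of_wronskian {K : Type*} [Field K] [CharZero K] {φ ψ : PowerSeries K}
    (hφ : φ ≠ 0) (h : φ * derivative K ψ = ψ * derivative K φ) : ∃ c : K, ψ = C c * φ := by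
  obtain ⟨o, u, hu, hu0⟩ := exists_eq_X_pow_mul hφ
  set c := coeff o ψ / coeff o φ with hc
  have hco : coeff o φ ≠ 0 := by
    rw [hu]; simpa [coeff_X_pow_mul'] using hu0
  refine ⟨c, ?_⟩
  by_contra hne
  have hz : ψ - C c * φ ≠ 0 := sub_ne_zero.mpr hne
  obtain ⟨o', v, hv, hv0⟩ := exists_eq_X_pow_mul hz
  have hd : derivative K (C c * φ) = C c * derivative K φ := by
    rw [← smul_eq_C_mul, Derivation.map_smul, smul_eq_C_mul]
  have hw : φ * derivative K (ψ - C c * φ) = (ψ - C c * φ) * derivative K φ := by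
    rw [map_sub, hd]
    linear_combination h
  rw [hv, hu] at hw
  obtain rfl := order_eq_of_wronskian hu0 hv0 hw
  have h0 : coeff o (ψ - C c * φ) = 0 := by
    rw [map_sub, coeff_C_mul, hc, div_mul_cancel₀ _ hco, sub_self]
  rw [hv] at h0
  exact hv0 (by simpa [coeff_X_pow_mul'] using h0)

lemma wr_ne_zero {N : ℕ} {Φ : Fin N → PowerSeries ℚ_[p]} (hΦ : ∀ a, a ≠ 0 → lin Φ a ≠ 0)
    {a b : Fin N → ℚ_[p]} {i : Fin N} (ha : a i = 1) (hb : b i = 0) (hb0 : b ≠ 0) :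
    wr Φ a b ≠ 0 := by
  intro h
  have ha0 : a ≠ 0 := fun h0 => by simp [h0] at ha
  obtain ⟨c, hc⟩ := exists_eq_C_mul_of_wronskian (hΦ a ha0) (sub_eq_zero.mp h)
  rw [← lin_smul] at hc
  have h1 : lin Φ (b - c • a) = 0 := by rw [lin_sub, hc, sub_self]
  have h2 : b - c • a = 0 := by
    by_contra h2
    exact hΦ _ h2 h1
  have h3 : c = 0 := by
    have := congrFun h2 i
    simp only [Pi.sub_apply, Pi.smul_apply, Pi.zero_apply, ha, hb, smul_eq_mul] at this
    linear_combination -this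
  rw [h3, zero_smul, sub_zero] at h2
  exact hb0 h2

/-- A nonzero series with decaying coefficients has a last coefficient of maximal norm. -/
lemma Bd.exists_DDc {M : ℝ} {φ : PowerSeries ℚ_[p]} (h : Bd M φ) (h0 : φ ≠ 0) :
    ∃ l A, 0 < A ∧ DDc l A φ := by
  have h1 : ∃ k, coeff k φ ≠ 0 := by
    by_contra! H
    exact h0 (PowerSeries.ext fun k => by simp [H k])
  obtain ⟨k₀, hk₀⟩ := h1
  set A := ‖coeff k₀ φ‖ with hA
  have hApos : 0 < A := norm_pos_iff.mpr hk₀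
  have hlim : Filter.Tendsto (fun k : ℕ => M * ((p : ℝ)⁻¹) ^ k) Filter.atTop (nhds 0) := by
    simpa using (tendsto_pow_atTop_nhds_zero_of_lt_one pinv_pos.le (pinv_lt_one (p := p))).const_mul M
  obtain ⟨K, hK⟩ := Filter.eventually_atTop.mp (hlim.eventually (gt_mem_nhds hApos))
  have hsmall : ∀ k, K ≤ k → ‖coeff k φ‖ < A := fun k hk => (h k).trans_lt (hK k hk)
  have hk₀K : k₀ < K := by
    by_contra! H
    exact lt_irrefl _ (hsmall k₀ H)
  obtain ⟨m, hm, hmax⟩ := (Finset.range K).exists_max_image (fun k => ‖coeff k φ‖)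
    ⟨k₀, Finset.mem_range.mpr hk₀K⟩
  have hmA : A ≤ ‖coeff m φ‖ := hmax k₀ (Finset.mem_range.mpr hk₀K)
  have hall : ∀ k, ‖coeff k φ‖ ≤ ‖coeff m φ‖ := fun k => by
    by_cases hk : k < K
    · exact hmax k (Finset.mem_range.mpr hk)
    · exact ((hsmall k (not_lt.mp hk)).le).trans hmA
  set S := (Finset.range K).filter fun k => ‖coeff k φ‖ = ‖coeff m φ‖ with hS
  have hSne : S.Nonempty := ⟨m, by simp [hS, Finset.mem_range.mp hm]⟩
  have hl := S.max'_mem hSne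
  set l := S.max' hSne
  rw [hS, Finset.mem_filter] at hl
  refine ⟨l, ‖coeff m φ‖, hApos.trans_le hmA, hl.2, fun k hk => ?_⟩
  have hlt : ‖coeff k φ‖ < ‖coeff m φ‖ := by
    refine lt_of_le_of_ne (hall k) fun he => ?_
    have hkK : k < K := by
      by_contra! H
      exact absurd (hsmall k H) (by rw [he]; exact not_lt.mpr hmA)
    exact absurd (S.le_max' k (by simp [hS, hkK, he])) (not_le.mpr hk)
  by_cases hz : coeff k φ = 0
  · rw [hz, norm_zero]
    exact mul_nonneg (norm_nonneg _) pinv_pos.le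
  have hmz : coeff m φ ≠ 0 := norm_pos_iff.mp (hApos.trans_le hmA)
  rw [Padic.norm_eq_zpow_neg_valuation hz, Padic.norm_eq_zpow_neg_valuation hmz] at hlt ⊢
  have hp1 : (1 : ℝ) < p := by exact_mod_cast (Fact.out : p.Prime).one_lt
  have := (zpow_lt_zpow_iff_right₀ hp1).mp hlt
  rw [← zpow_neg_one, ← zpow_add₀ (by positivity)]
  exact zpow_le_zpow_right₀ hp1.le (by omega)

/-- A dominant coefficient survives a small perturbation. -/
lemma DDc.stable {l : ℕ} {A η : ℝ} {φ ψ : PowerSeries ℚ_[p]} (h : DDc l A φ)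
    (hd : Bd η (ψ - φ)) (hA : 0 < A) (hη : η ≤ A * (p : ℝ)⁻¹) : DDc l A ψ := by
  have h2 : ∀ k, ‖coeff k ψ - coeff k φ‖ ≤ A * (p : ℝ)⁻¹ := fun k => by
    rw [← map_sub]
    exact (hd.le k).trans hη
  have h3 : A * (p : ℝ)⁻¹ < A := mul_lt_of_lt_one_right hA pinv_lt_one
  refine ⟨?_, fun k hk => ?_⟩
  · have h4 := h2 l
    have h5 : ‖coeff l ψ - coeff l φ‖ < ‖coeff l φ‖ := by rw [h.1]; exact h4.trans_lt h3
    have e : coeff l ψ = (coeff l ψ - coeff l φ) + coeff l φ := by ring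
    rw [e, IsUltrametricDist.norm_add_eq_max_of_norm_ne_norm h5.ne, max_eq_right h5.le, h.1]
  · have e : coeff k ψ = (coeff k ψ - coeff k φ) + coeff k φ := by ring
    rw [e]
    exact (IsUltrametricDist.norm_add_le_max _ _).trans (max_le (h2 k) (h.2 k hk))

/-- Compactness: a family of nonzero series, continuous in a compact parameter, has uniform
dominating coefficients, and these persist under perturbation of the data. -/
lemma exists_uniform_DDc {Z : Type*} [TopologicalSpace Z] {T : Set Z} (hT : IsCompact T) {N : ℕ}
    {M : ℝ} {Φ₀ : Fin N → PowerSeries ℚ_[p]}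
    (G : (Fin N → PowerSeries ℚ_[p]) → Z → PowerSeries ℚ_[p])
    (hG0 : ∀ z ∈ T, G Φ₀ z ≠ 0 ∧ ∃ M', Bd M' (G Φ₀ z))
    (hG : ∀ z ∈ T, ∀ η > 0, ∃ V ∈ nhdsWithin z T, ∃ σ > 0, ∀ Φ : Fin N → PowerSeries ℚ_[p],
      (∀ x, Bd M (Φ x)) → (∀ x, Bd σ (Φ x - Φ₀ x)) → ∀ z' ∈ V, Bd η (G Φ z' - G Φ₀ z)) :
    ∃ L A₀ σ, 0 < A₀ ∧ 0 < σ ∧ ∀ Φ : Fin N → PowerSeries ℚ_[p],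
      (∀ x, Bd M (Φ x)) → (∀ x, Bd σ (Φ x - Φ₀ x)) →
        ∀ z ∈ T, ∃ l ≤ L, ∃ A, A₀ ≤ A ∧ DDc l A (G Φ z) := by
  refine hT.induction_on (p := fun T => ∃ L A₀ σ, 0 < A₀ ∧ 0 < σ ∧
    ∀ Φ : Fin N → PowerSeries ℚ_[p],
      (∀ x, Bd M (Φ x)) → (∀ x, Bd σ (Φ x - Φ₀ x)) →
        ∀ z ∈ T, ∃ l ≤ L, ∃ A, A₀ ≤ A ∧ DDc l A (G Φ z)) ?_ ?_ ?_ ?_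
  · exact ⟨0, 1, 1, one_pos, one_pos, fun _ _ _ z hz => hz.elim⟩
  · rintro s t hst ⟨L, A₀, σ, hA, hσ, H⟩
    exact ⟨L, A₀, σ, hA, hσ, fun Φ h1 h2 z hz => H Φ h1 h2 z (hst hz)⟩
  · rintro s t ⟨L, A₀, σ, hA, hσ, H⟩ ⟨L', A₀', σ', hA', hσ', H'⟩
    refine ⟨max L L', min A₀ A₀', min σ σ', lt_min hA hA', lt_min hσ hσ', fun Φ h1 h2 z hz => ?_⟩
    rcases hz with hz | hz
    · obtain ⟨l, hl, A, hA, hD⟩ := H Φ h1 (fun x => (h2 x).mono (min_le_left _ _)) z hz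
      exact ⟨l, hl.trans (le_max_left _ _), A, (min_le_left _ _).trans hA, hD⟩
    · obtain ⟨l, hl, A, hA, hD⟩ := H' Φ h1 (fun x => (h2 x).mono (min_le_right _ _)) z hz
      exact ⟨l, hl.trans (le_max_right _ _), A, (min_le_right _ _).trans hA, hD⟩
  · intro z hz
    obtain ⟨hne, M', hM'⟩ := hG0 z hz
    obtain ⟨l, A, hA, hD⟩ := hM'.exists_DDc hne
    obtain ⟨V, hV, σ, hσ, H⟩ := hG z hz (A * (p : ℝ)⁻¹) (mul_pos hA pinv_pos)
    exact ⟨V, hV, l, A, σ, hA, hσ, fun Φ h1 h2 z' hz' =>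
      ⟨l, le_rfl, A, le_rfl, hD.stable (H Φ h1 h2 z' hz') hA le_rfl⟩⟩

lemma lin_sub_lin {N : ℕ} {M σ : ℝ} (hM : 0 ≤ M) {Φ Φ₀ : Fin N → PowerSeries ℚ_[p]}
    (h : ∀ x, Bd M (Φ x)) (hσ : 0 ≤ σ) (hd : ∀ x, Bd σ (Φ x - Φ₀ x)) (a a₀ : Fin N → ℚ_[p]) :
    Bd (max (‖a - a₀‖ * M) (‖a₀‖ * σ)) (lin Φ a - lin Φ₀ a₀) := by
  have e : lin Φ a - lin Φ₀ a₀ = lin Φ (a - a₀) + lin (fun x => Φ x - Φ₀ x) a₀ := by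
    rw [lin_sub]
    simp only [lin, mul_sub, Finset.sum_sub_distrib]
    ring
  rw [e]
  exact ((Bd.lin hM h _).mono (le_max_left _ _)).add ((Bd.lin hσ hd _).mono (le_max_right _ _))

/-- Uniformity: if the components of `Φ₀` are linearly independent, then every family close to
`Φ₀` is good, with uniform parameters. -/
theorem exists_goodFam {N : ℕ} {M : ℝ} (hM : 0 < M) {Φ₀ : Fin N → PowerSeries ℚ_[p]}
    (hB : ∀ x, Bd M (Φ₀ x)) (hind : ∀ a, a ≠ 0 → lin Φ₀ a ≠ 0) :
    ∃ L A₀ σ, 0 < A₀ ∧ 0 < σ ∧ ∀ Φ : Fin N → PowerSeries ℚ_[p],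
      (∀ x, Bd M (Φ x)) → (∀ x, Bd σ (Φ x - Φ₀ x)) → GoodFam L A₀ Φ := by
  obtain ⟨L₁, A₁, σ₁, hA₁, hσ₁, H₁⟩ := exists_uniform_DDc (M := M) (Φ₀ := Φ₀)
    (isCompact_sphere (0 : Fin N → ℚ_[p]) 1) (fun Φ a => lin Φ a)
    (fun a ha => ⟨hind a (by rintro rfl; simp at ha), _, Bd.lin hM.le hB a⟩)
    (fun a ha η hη => by
      have ha : ‖a‖ = 1 := by simpa using ha
      refine ⟨Metric.ball a (η / M), mem_nhdsWithin_of_mem_nhds (Metric.ball_mem_nhds _ (by positivity)),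
        η, hη, fun Φ h1 h2 a' ha' => (lin_sub_lin hM.le h1 hη.le h2 a' a).mono (max_le ?_ ?_)⟩
      · have : ‖a' - a‖ < η / M := by simpa [dist_eq_norm] using ha'
        rw [lt_div_iff₀ hM] at this
        exact this.le
      · rw [ha, one_mul])
  have hT : IsCompact {z : (Fin N → ℚ_[p]) × (Fin N → ℚ_[p]) |
      ‖z.1‖ ≤ 1 ∧ ‖z.2‖ = 1 ∧ ∃ i, z.1 i = 1 ∧ z.2 i = 0} := by
    refine Metric.isCompact_of_isClosed_isBounded ?_ ?_
    · refine (isClosed_le continuous_fst.norm continuous_const).inter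
        ((isClosed_eq continuous_snd.norm continuous_const).inter ?_)
      have : {z : (Fin N → ℚ_[p]) × (Fin N → ℚ_[p]) | ∃ i, z.1 i = 1 ∧ z.2 i = 0}
          = ⋃ i, {z | z.1 i = 1 ∧ z.2 i = 0} := by ext; simp
      change IsClosed {z : (Fin N → ℚ_[p]) × (Fin N → ℚ_[p]) | ∃ i, z.1 i = 1 ∧ z.2 i = 0}
      rw [this]
      exact isClosed_iUnion_of_finite fun i =>
        (isClosed_eq (by fun_prop) (by fun_prop)).inter (isClosed_eq (by fun_prop) (by fun_prop))
    · refine (Metric.isBounded_closedBall (x := 0) (r := 1)).subset fun z hz => ?_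
      rw [mem_closedBall_zero_iff, Prod.norm_def]
      exact max_le hz.1 hz.2.1.le
  obtain ⟨L₂, A₂, σ₂, hA₂, hσ₂, H₂⟩ := exists_uniform_DDc (M := M) (Φ₀ := Φ₀) hT
    (fun Φ z => wr Φ z.1 z.2)
    (by
      rintro z ⟨-, h2, i, h3, h4⟩
      exact ⟨wr_ne_zero hind h3 h4 (by intro h; simp [h] at h2), _, Bd.wr hM.le hB _ _⟩)
    (by
      rintro z ⟨h1, h2, -⟩ η hη
      refine ⟨Metric.ball z (η / M / M) ∩ {z | ‖z.1‖ ≤ 1 ∧ ‖z.2‖ = 1 ∧ ∃ i, z.1 i = 1 ∧ z.2 i = 0},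
        Filter.inter_mem (mem_nhdsWithin_of_mem_nhds (Metric.ball_mem_nhds _ (by positivity)))
          self_mem_nhdsWithin,
        η / M, by positivity, fun Φ h3 h4 z' hz' => ?_⟩
      obtain ⟨hz', hz1, hz2, -⟩ := hz'
      have hz' : ‖z' - z‖ < η / M / M := by simpa [dist_eq_norm] using hz'
      rw [lt_div_iff₀ hM] at hz'
      have hb : ∀ a a₀ : Fin N → ℚ_[p], ‖a - a₀‖ ≤ ‖z' - z‖ → ‖a₀‖ ≤ 1 →
          Bd (η / M) (lin Φ a - lin Φ₀ a₀) := fun a a₀ h5 h6 =>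
        (lin_sub_lin hM.le h3 (by positivity) h4 a a₀).mono (max_le
          ((mul_le_mul_of_nonneg_right h5 hM.le).trans hz'.le)
          (mul_le_of_le_one_left (by positivity) h6))
      have hb1 := hb z'.1 z.1 (norm_fst_le (z' - z)) h1
      have hb2 := hb z'.2 z.2 (norm_snd_le (z' - z)) h2.le
      have hl : ∀ (Ψ : Fin N → PowerSeries ℚ_[p]) (a : Fin N → ℚ_[p]), (∀ x, Bd M (Ψ x)) → ‖a‖ ≤ 1 →
          Bd M (lin Ψ a) := fun Ψ a hΨ h7 =>
        (Bd.lin hM.le hΨ a).mono (mul_le_of_le_one_left hM.le h7)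
      have e : wr Φ z'.1 z'.2 - wr Φ₀ z.1 z.2
          = (lin Φ z'.1 * derivative ℚ_[p] (lin Φ z'.2 - lin Φ₀ z.2)
            + (lin Φ z'.1 - lin Φ₀ z.1) * derivative ℚ_[p] (lin Φ₀ z.2))
          - (lin Φ z'.2 * derivative ℚ_[p] (lin Φ z'.1 - lin Φ₀ z.1)
            + (lin Φ z'.2 - lin Φ₀ z.2) * derivative ℚ_[p] (lin Φ₀ z.1)) := by
        simp only [wr, map_sub]
        ring
      change Bd η (wr Φ z'.1 z'.2 - wr Φ₀ z.1 z.2)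
      rw [e]
      have hMη : M * (η / M) = η := by field_simp
      have hηM : η / M * M = η := by field_simp
      refine Bd.sub (Bd.add ?_ ?_) (Bd.add ?_ ?_)
      · simpa only [hMη] using (hl Φ _ h3 hz1).mul hb2.deriv
      · simpa only [hηM] using hb1.mul (hl Φ₀ _ hB h2.le).deriv
      · simpa only [hMη] using (hl Φ _ h3 hz2.le).mul hb1.deriv
      · simpa only [hηM] using hb2.mul (hl Φ₀ _ hB h1).deriv)
  refine ⟨max L₁ L₂, min A₁ A₂, min σ₁ σ₂, lt_min hA₁ hA₂, lt_min hσ₁ hσ₂, fun Φ h1 h2 => ⟨?_, ?_⟩⟩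
  · intro a ha
    obtain ⟨l, hl, A, hA, hD⟩ := H₁ Φ h1 (fun x => (h2 x).mono (min_le_left _ _)) a (by simpa using ha)
    exact ⟨l, hl.trans (le_max_left _ _), A, (min_le_left _ _).trans hA, hD⟩
  · intro i a b ha ha1 hb hb1
    obtain ⟨l, hl, A, hA, hD⟩ := H₂ Φ h1 (fun x => (h2 x).mono (min_le_right _ _)) (a, b)
      ⟨ha1, hb1, i, ha, hb⟩
    exact ⟨l, hl.trans (le_max_right _ _), A, (min_le_right _ _).trans hA, hD⟩

end PadicND

/-! ### Composition of power series; interpolation -/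

namespace PadicND

open PowerSeries

variable {p : ℕ} [Fact p.Prime] {d n : ℕ}

lemma Bd.one : Bd 1 (1 : PowerSeries ℚ_[p]) := by
  simpa using Bd.C (1 : ℚ_[p])

lemma Bd.prod {M : ℝ} : ∀ {m : ℕ} {φ : Fin m → PowerSeries ℚ_[p]}, (∀ i, Bd M (φ i)) →
    Bd (M ^ m) (∏ i, φ i)
  | 0, φ, _ => by simpa using Bd.one
  | m + 1, φ, h => by
    rw [Fin.prod_univ_succ, pow_succ']
    exact (h 0).mul (Bd.prod fun i => h i.succ)

lemma ev_prod {M : ℝ} (t : ℤ_[p]) : ∀ {m : ℕ} {φ : Fin m → PowerSeries ℚ_[p]},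
    (∀ i, Bd M (φ i)) → ev (∏ i, φ i) t = ∏ i, ev (φ i) t
  | 0, φ, _ => by simpa using ev_C (1 : ℚ_[p]) t
  | m + 1, φ, h => by
    rw [Fin.prod_univ_succ, Fin.prod_univ_succ, ev_mul (h 0) (Bd.prod fun i => h i.succ),
      ev_prod t fun i => h i.succ]

lemma Bd.prod_sub_prod {M η : ℝ} (hM : 0 < M) (hη : 0 ≤ η) :
    ∀ {m : ℕ} {φ ψ : Fin m → PowerSeries ℚ_[p]}, (∀ i, Bd M (φ i)) → (∀ i, Bd M (ψ i)) →
    (∀ i, Bd η (φ i - ψ i)) → Bd (M ^ m * (η / M)) (∏ i, φ i - ∏ i, ψ i)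
  | 0, φ, ψ, _, _, _ => by
    simpa using Bd.zero (p := p) (by positivity : 0 ≤ η / M)
  | m + 1, φ, ψ, h, h', hd => by
    have e : ∏ i, φ i - ∏ i, ψ i = φ 0 * (∏ i : Fin m, φ i.succ - ∏ i : Fin m, ψ i.succ)
        + (φ 0 - ψ 0) * ∏ i : Fin m, ψ i.succ := by
      rw [Fin.prod_univ_succ, Fin.prod_univ_succ]; ring
    rw [e]
    have h1 := (h 0).mul (Bd.prod_sub_prod hM hη (fun i => h i.succ) (fun i => h' i.succ)
      fun i => hd i.succ)
    have h2 := (hd 0).mul (Bd.prod fun i => h' i.succ)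
    refine (h1.mono (le_of_eq ?_)).add (h2.mono (le_of_eq ?_))
    · rw [pow_succ]; ring
    · rw [pow_succ]; field_simp

/-- The `m`-th homogeneous part of the power series `P`, evaluated on the vector `φ` of power
series in one variable (`x`-th coordinate). -/
noncomputable def hterm (P : FormalMultilinearSeries ℚ_[p] (Fin d → ℚ_[p]) (Fin n → ℚ_[p]))
    (φ : Fin d → PowerSeries ℚ_[p]) (x : Fin n) (m : ℕ) : PowerSeries ℚ_[p] :=
  ∑ i : Fin m → Fin d, C (P m (fun k => Pi.single (i k) 1) x) * ∏ k, φ (i k)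

/-- The composition of `P` with the vector `φ` of power series in one variable. -/
noncomputable def comp (P : FormalMultilinearSeries ℚ_[p] (Fin d → ℚ_[p]) (Fin n → ℚ_[p]))
    (φ : Fin d → PowerSeries ℚ_[p]) (x : Fin n) : PowerSeries ℚ_[p] :=
  PowerSeries.mk fun k => ∑' m, coeff k (hterm P φ x m)

variable {P : FormalMultilinearSeries ℚ_[p] (Fin d → ℚ_[p]) (Fin n → ℚ_[p])}

lemma norm_single_le (m : ℕ) (i : Fin m → Fin d) (x : Fin n) :
    ‖P m (fun k => Pi.single (i k) (1 : ℚ_[p])) x‖ ≤ ‖P m‖ := by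
  refine (norm_le_pi_norm _ x).trans (((P m).le_opNorm _).trans ?_)
  refine mul_le_of_le_one_right (norm_nonneg _) (Finset.prod_le_one (fun _ _ => norm_nonneg _)
    fun k _ => ?_)
  refine (pi_norm_le_iff_of_nonneg zero_le_one).mpr fun y => ?_
  by_cases h : y = i k
  · subst h; simp
  · simp [h]

lemma Bd.hterm {M : ℝ} {φ : Fin d → PowerSeries ℚ_[p]} (hM : 0 ≤ M) (h : ∀ i, Bd M (φ i))
    (x : Fin n) (m : ℕ) : Bd (‖P m‖ * M ^ m) (hterm P φ x m) :=
  Bd.sum (by positivity) _ fun i _ => ((Bd.prod fun k => h (i k)).C_mul _).mono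
    (mul_le_mul_of_nonneg_right (norm_single_le m i x) (by positivity))

lemma ev_hterm {M : ℝ} {φ : Fin d → PowerSeries ℚ_[p]} (hM : 0 ≤ M) (h : ∀ i, Bd M (φ i))
    (x : Fin n) (m : ℕ) (t : ℤ_[p]) :
    ev (hterm P φ x m) t = P m (fun _ i => ev (φ i) t) x := by
  have e : (fun _ : Fin m => fun i => ev (φ i) t)
      = fun _ : Fin m => ∑ i, ev (φ i) t • (Pi.single i (1 : ℚ_[p]) : Fin d → ℚ_[p]) := by
    funext _ i
    simp [Finset.sum_apply, Pi.single_apply]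
  rw [e, ContinuousMultilinearMap.map_sum, Finset.sum_apply, PadicND.hterm, ev_sum (M := ‖P m‖ * M ^ m) (by positivity)
    _ fun i _ => ((Bd.prod fun k => h (i k)).C_mul _).mono
    (mul_le_mul_of_nonneg_right (norm_single_le m i x) (by positivity))]
  refine Finset.sum_congr rfl fun i _ => ?_
  rw [ev_C_mul _ (Bd.prod fun k => h (i k)), ev_prod t fun k => h (i k),
    ContinuousMultilinearMap.map_smul_univ, Pi.smul_apply, smul_eq_mul, mul_comm]

lemma Bd.hterm_sub {M η : ℝ} {φ ψ : Fin d → PowerSeries ℚ_[p]} (hM : 0 < M) (hη : 0 ≤ η)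
    (h : ∀ i, Bd M (φ i)) (h' : ∀ i, Bd M (ψ i)) (hd : ∀ i, Bd η (φ i - ψ i))
    (x : Fin n) (m : ℕ) :
    Bd (‖P m‖ * M ^ m * (η / M)) (PadicND.hterm P φ x m - PadicND.hterm P ψ x m) := by
  rw [PadicND.hterm, PadicND.hterm, ← Finset.sum_sub_distrib]
  refine Bd.sum (by positivity) _ fun i _ => ?_
  rw [← mul_sub]
  refine ((Bd.prod_sub_prod hM hη (fun k => h (i k)) (fun k => h' (i k))
    fun k => hd (i k)).C_mul _).mono ?_
  rw [mul_assoc]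
  exact mul_le_mul_of_nonneg_right (norm_single_le m i x) (by positivity)

variable {M a c : ℝ}

lemma summable_coeff_hterm {φ : Fin d → PowerSeries ℚ_[p]} (hM : 0 ≤ M) (h : ∀ i, Bd M (φ i))
    (ha : 0 ≤ a) (ha1 : a < 1) (hP : ∀ m, ‖P m‖ * M ^ m ≤ c * a ^ m) (x : Fin n) (k : ℕ) :
    Summable fun m => coeff k (hterm P φ x m) := by
  refine Summable.of_norm (Summable.of_nonneg_of_le (fun _ => norm_nonneg _) (fun m => ?_)
    ((summable_geometric_of_lt_one ha ha1).mul_left c))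
  exact ((Bd.hterm hM h x m).le k).trans (hP m)

lemma Bd.comp {φ : Fin d → PowerSeries ℚ_[p]} (hM : 0 ≤ M) (h : ∀ i, Bd M (φ i))
    (ha : 0 ≤ a) (ha1 : a < 1) (hc : 0 ≤ c) (hP : ∀ m, ‖P m‖ * M ^ m ≤ c * a ^ m) (x : Fin n) :
    Bd c (comp P φ x) := fun k => by
  have hp := (pinv_pos (p := p)).le
  rw [PadicND.comp, coeff_mk]
  refine IsUltrametricDist.norm_tsum_le_of_forall_le_of_nonneg (by positivity) fun m => ?_
  refine (((Bd.hterm hM h x m).mono ((hP m).trans ?_)) k)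
  exact mul_le_of_le_one_right hc (pow_le_one₀ ha ha1.le)

lemma Bd.comp_sub {η : ℝ} {φ ψ : Fin d → PowerSeries ℚ_[p]} (hM : 0 < M) (hη : 0 ≤ η)
    (h : ∀ i, Bd M (φ i)) (h' : ∀ i, Bd M (ψ i)) (hd : ∀ i, Bd η (φ i - ψ i))
    (ha : 0 ≤ a) (ha1 : a < 1) (hc : 0 ≤ c) (hP : ∀ m, ‖P m‖ * M ^ m ≤ c * a ^ m) (x : Fin n) :
    Bd (c * (η / M)) (PadicND.comp P φ x - PadicND.comp P ψ x) := fun k => by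
  have hp := (pinv_pos (p := p)).le
  rw [map_sub, PadicND.comp, PadicND.comp, coeff_mk, coeff_mk,
    ← (summable_coeff_hterm hM.le h ha ha1 hP x k).tsum_sub
      (summable_coeff_hterm hM.le h' ha ha1 hP x k)]
  refine IsUltrametricDist.norm_tsum_le_of_forall_le_of_nonneg (by positivity) fun m => ?_
  rw [← map_sub]
  refine ((Bd.hterm_sub hM hη h h' hd x m).mono ?_) k
  refine mul_le_mul_of_nonneg_right ((hP m).trans ?_) (by positivity)
  exact mul_le_of_le_one_right hc (pow_le_one₀ ha ha1.le)

lemma ev_comp {φ : Fin d → PowerSeries ℚ_[p]} (hM : 0 ≤ M) (h : ∀ i, Bd M (φ i))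
    (ha : 0 ≤ a) (ha1 : a < 1) (hP : ∀ m, ‖P m‖ * M ^ m ≤ c * a ^ m) (x : Fin n) (t : ℤ_[p]) :
    ev (comp P φ x) t = ∑' m, P m (fun _ i => ev (φ i) t) x := by
  have hp := (pinv_pos (p := p)).le
  have hs : Summable (Function.uncurry fun m k : ℕ => coeff k (hterm P φ x m) * (t : ℚ_[p]) ^ k) := by
    have hs : Summable fun y : ℕ × ℕ => c * (a ^ y.1 * (p : ℝ)⁻¹ ^ y.2) := by
      refine Summable.mul_left c ?_
      exact (summable_geometric_of_lt_one ha ha1).mul_of_nonneg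
        (summable_geometric_of_lt_one hp pinv_lt_one) (fun _ => by positivity)
        (fun _ => by positivity)
    refine Summable.of_norm (Summable.of_nonneg_of_le (fun _ => norm_nonneg _) (fun y => ?_) hs)
    rw [← mul_assoc]
    exact ((Bd.hterm hM h x y.1).mono (hP y.1)).norm_term t y.2
  calc ev (comp P φ x) t = ∑' k, ∑' m, coeff k (hterm P φ x m) * (t : ℚ_[p]) ^ k := by
        unfold ev
        refine tsum_congr fun k => ?_
        rw [comp, coeff_mk, tsum_mul_right]
    _ = ∑' m, ev (hterm P φ x m) t := hs.tsum_comm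
    _ = _ := tsum_congr fun m => ev_hterm hM h x m t

lemma ev_polynomial (q : Polynomial ℚ_[p]) (t : ℤ_[p]) :
    ev (q : PowerSeries ℚ_[p]) t = q.eval (t : ℚ_[p]) := by
  unfold ev
  rw [Polynomial.eval_eq_sum_range, tsum_eq_sum (s := Finset.range (q.natDegree + 1))]
  · simp only [Polynomial.coeff_coe]
  · intro k hk
    rw [Polynomial.coeff_coe, Polynomial.coeff_eq_zero_of_natDegree_lt, zero_mul]
    simpa using hk

lemma exists_Bd_polynomial (q : Polynomial ℚ_[p]) : ∃ M, Bd M (q : PowerSeries ℚ_[p]) := by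
  have hp := pinv_pos (p := p)
  refine ⟨∑ k ∈ Finset.range (q.natDegree + 1), ‖q.coeff k‖ / (p : ℝ)⁻¹ ^ k, fun k => ?_⟩
  rw [Polynomial.coeff_coe]
  by_cases hk : k ∈ Finset.range (q.natDegree + 1)
  · rw [← div_le_iff₀ (by positivity)]
    exact Finset.single_le_sum (f := fun k => ‖q.coeff k‖ / (p : ℝ)⁻¹ ^ k)
      (fun _ _ => by positivity) hk
  · rw [Polynomial.coeff_eq_zero_of_natDegree_lt (by simpa using hk), norm_zero]
    positivity

/-- Interpolation polynomials vanishing at `0`, for the nodes `1, …, N`. -/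
lemma exists_interpolation (p : ℕ) [Fact p.Prime] (N : ℕ) : ∃ (M : ℝ) (τ : Fin N → ℤ_[p])
    (e : Fin N → PowerSeries ℚ_[p]), 0 < M ∧ (∀ j, Bd M (e j)) ∧ (∀ j, ev (e j) 0 = 0) ∧
      ∀ j k, ev (e j) (τ k) = if j = k then 1 else 0 := by
  set v : ℕ → ℚ_[p] := fun k => (k : ℚ_[p]) with hv
  have hinj : Set.InjOn v (Finset.range (N + 1)) := fun a _ b _ h => by
    simpa [hv] using h
  have hmem : ∀ j : Fin N, (j : ℕ) + 1 ∈ Finset.range (N + 1) := fun j => by simp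
  set q : Fin N → Polynomial ℚ_[p] := fun j => Lagrange.basis (Finset.range (N + 1)) v (j + 1)
  choose M hM using fun j => exists_Bd_polynomial (q j)
  refine ⟨1 + ∑ j, M j, fun k => ((k + 1 : ℕ) : ℤ_[p]), fun j => (q j : PowerSeries ℚ_[p]),
    ?_, fun j => (hM j).mono ?_, fun j => ?_, fun j k => ?_⟩
  · have : 0 ≤ ∑ j, M j := Finset.sum_nonneg fun j _ => (hM j).nonneg
    positivity
  · have := Finset.single_le_sum (f := M) (fun j _ => (hM j).nonneg) (Finset.mem_univ j)
    linarith
  · rw [ev_polynomial]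
    have := Lagrange.eval_basis_of_ne (s := Finset.range (N + 1)) (v := v)
      (i := (j : ℕ) + 1) (j := 0) (by omega) (by simp)
    simpa [hv] using this
  · rw [ev_polynomial, PadicInt.coe_natCast]
    split_ifs with h
    · subst h
      exact Lagrange.eval_basis_self hinj (hmem j)
    · exact Lagrange.eval_basis_of_ne (v := v) (fun h' => h (Fin.ext (by omega))) (hmem k)

/-- Finitely many points at which `1, f⁽¹⁾, …, f⁽ⁿ⁾` are already linearly independent. -/
lemma exists_points {K : Type*} [Field K] {E : Type*} {S : Set E} {f : E → Fin n → K}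
    (h : ∀ (c₀ : K) (c : Fin n → K), (∀ x ∈ S, c₀ + ∑ i, c i * f x i = 0) → c₀ = 0 ∧ ∀ i, c i = 0) :
    ∃ z : Fin (n + 1) → E, (∀ j, z j ∈ S) ∧ ∀ (c₀ : K) (c : Fin n → K),
      (∀ j, c₀ + ∑ i, c i * f (z j) i = 0) → c₀ = 0 ∧ ∀ i, c i = 0 := by
  set w : E → Fin (n + 1) → K := fun x => Fin.cons 1 (f x) with hw
  have htop : Submodule.span K (w '' S) = ⊤ := by
    by_contra hne
    obtain ⟨g, hg, hle⟩ := Submodule.exists_le_ker_of_lt_top _ (lt_top_iff_ne_top.mpr hne)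
    have hgs : ∀ u, g u = ∑ i, u i * g (Pi.single i 1) := fun u => by
      conv_lhs => rw [pi_eq_sum_univ' u]
      simp [map_sum]
    have h1 := h (g (Pi.single 0 1)) (fun i => g (Pi.single i.succ 1)) fun x hx => by
      have : g (w x) = 0 := hle (Submodule.subset_span ⟨x, hx, rfl⟩)
      rw [hgs, Fin.sum_univ_succ] at this
      simpa [hw, mul_comm] using this
    refine hg (LinearMap.ext fun u => ?_)
    rw [hgs, Fin.sum_univ_succ, h1.1]
    simp [h1.2]
  obtain ⟨g, hg, hspan, -⟩ := Submodule.exists_fun_fin_finrank_span_eq K (w '' S)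
  have hN : Module.finrank K (Submodule.span K (w '' S)) = n + 1 := by
    rw [htop, finrank_top, Module.finrank_fin_fun]
  choose z hz hzw using hg
  refine ⟨fun j => z (finCongr hN.symm j), fun j => hz _, fun c₀ c hc => ?_⟩
  have hker : ∀ u : Fin (n + 1) → K, c₀ * u 0 + ∑ i : Fin n, c i * u i.succ = 0 := by
    intro u
    have hu : u ∈ Submodule.span K (Set.range g) := by rw [hspan, htop]; trivial
    induction hu using Submodule.span_induction with
    | mem u hu =>
      obtain ⟨j, rfl⟩ := hu
      have := hc (finCongr hN j)
      simp only [finCongr_apply, Fin.cast_cast, Fin.cast_eq_self] at this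
      rw [← hzw j]
      simpa [hw] using this
    | zero => simp
    | add u v _ _ h1 h2 =>
      simp only [Pi.add_apply, mul_add, Finset.sum_add_distrib]
      linear_combination h1 + h2
    | smul b u _ h1 =>
      have : ∑ i : Fin n, c i * (b * u i.succ) = b * ∑ i : Fin n, c i * u i.succ := by
        rw [Finset.mul_sum]; exact Finset.sum_congr rfl fun i _ => by ring
      simp only [Pi.smul_apply, smul_eq_mul, this]
      linear_combination b * h1
  refine ⟨by simpa using hker (Pi.single 0 1), fun i => ?_⟩
  have := hker (Pi.single i.succ 1)
  simpa [Pi.single_apply] using this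

end PadicND

/-! ### A non-degenerate curve through `x₀` -/

namespace PadicND

variable {p : ℕ} [Fact p.Prime] {d n : ℕ}

/-- An analytic curve `γ` through `0` such that the components of `1, f` are linearly independent
along `x₀ + γ`; the restrictions of `1, f` to the translates `x₀ + s + γ` are power series which
depend on `s` in a Lipschitz way. -/
theorem exists_curve {U : Set (Fin d → ℚ_[p])} (hU : IsOpen U) {x₀ : Fin d → ℚ_[p]} (hx₀ : x₀ ∈ U)
    {f : (Fin d → ℚ_[p]) → (Fin n → ℚ_[p])} (hfa : AnalyticAt ℚ_[p] f x₀)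
    (hnd : ∀ rr : ℝ, 0 < rr → Metric.ball x₀ rr ⊆ U → ∀ (c₀ : ℚ_[p]) (c : Fin n → ℚ_[p]),
        (∀ x ∈ Metric.ball x₀ rr, c₀ + ∑ i, c i * f x i = 0) → c₀ = 0 ∧ ∀ i, c i = 0) :
    ∃ (r M : ℝ) (γ : Fin d → PowerSeries ℚ_[p]) (Γ : (Fin d → ℚ_[p]) → Fin (n + 1) → PowerSeries ℚ_[p]),
      0 < r ∧ 0 < M ∧ Metric.closedBall x₀ r ⊆ U ∧ (∀ i, Bd M (γ i)) ∧ (∀ i, ev (γ i) 0 = 0) ∧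
      (∀ a, a ≠ 0 → lin (Γ 0) a ≠ 0) ∧
      ∀ s, ‖s‖ ≤ r → Γ s 0 = 1 ∧ (∀ x, Bd M (Γ s x)) ∧ (∀ x, Bd (M * ‖s‖) (Γ s x - Γ 0 x)) ∧
        ∀ x t, ev (Γ s (Fin.succ x)) t = f (x₀ + s + fun i => ev (γ i) t) x := by
  obtain ⟨P, R, hPR⟩ := hfa
  obtain ⟨M₀, hM₀, hM₀R⟩ := ENNReal.lt_iff_exists_nnreal_btwn.mp hPR.r_pos
  obtain ⟨a, ⟨ha0, ha1⟩, c, hc, hP⟩ :=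
    P.norm_mul_pow_le_mul_pow_of_lt_radius (hM₀R.trans_le hPR.r_le)
  have hM₀ : (0 : ℝ) < M₀ := by simpa using hM₀
  obtain ⟨M₁, τ, e, hM₁, heB, he0, heτ⟩ := exists_interpolation p (n + 1)
  obtain ⟨r₀, hr₀, hr₀U⟩ := Metric.isOpen_iff.mp hU x₀ hx₀
  obtain ⟨r, hr, hrr₀, hrM₀, hrM₁⟩ : ∃ r, 0 < r ∧ r < r₀ ∧ r ≤ M₀ ∧ r * M₁ ≤ M₀ :=
    ⟨min (r₀ / 2) (min M₀ (M₀ / M₁)), by positivity,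
      (min_le_left _ _).trans_lt (by linarith), (min_le_right _ _).trans (min_le_left _ _),
      (mul_le_mul_of_nonneg_right ((min_le_right _ _).trans (min_le_right _ _)) hM₁.le).trans
        (by rw [div_mul_cancel₀ _ hM₁.ne'])⟩
  have hrU : Metric.closedBall x₀ r ⊆ U :=
    (Metric.closedBall_subset_ball hrr₀).trans hr₀U
  obtain ⟨z, hz, hzi⟩ := exists_points (hnd r hr (Metric.ball_subset_closedBall.trans hrU))
  have hzr : ∀ j, ‖z j - x₀‖ ≤ r := fun j => by
    have := hz j
    rw [Metric.mem_ball, dist_eq_norm] at this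
    exact this.le
  set γ : Fin d → PowerSeries ℚ_[p] := fun i => ∑ j, PowerSeries.C ((z j - x₀) i) * e j with hγ
  have hterm : ∀ i j, Bd M₀ (PowerSeries.C ((z j - x₀) i) * e j) := fun i j =>
    ((heB j).C_mul _).mono ((mul_le_mul_of_nonneg_right
      ((norm_le_pi_norm _ i).trans (hzr j)) hM₁.le).trans hrM₁)
  have hγB : ∀ i, Bd M₀ (γ i) := fun i => Bd.sum hM₀.le _ fun j _ => hterm i j
  have hγev : ∀ i t, ev (γ i) t = ∑ j, (z j - x₀) i * ev (e j) t := fun i t => by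
    rw [hγ, ev_sum hM₀.le _ fun j _ => hterm i j]
    exact Finset.sum_congr rfl fun j _ => ev_C_mul _ (heB j) t
  have hγ0 : ∀ i, ev (γ i) 0 = 0 := fun i => by
    rw [hγev]
    exact Finset.sum_eq_zero fun j _ => by rw [he0, mul_zero]
  have hγτ : ∀ i k, ev (γ i) (τ k) = (z k - x₀) i := fun i k => by
    rw [hγev]
    simp [heτ]
  set ω : (Fin d → ℚ_[p]) → Fin d → PowerSeries ℚ_[p] := fun s i => PowerSeries.C (s i) + γ i with hω
  have hωB : ∀ s, ‖s‖ ≤ r → ∀ i, Bd M₀ (ω s i) := fun s hs i =>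
    ((Bd.C (s i)).mono ((norm_le_pi_norm s i).trans (hs.trans hrM₀))).add (hγB i)
  have hωev : ∀ s i t, ev (ω s i) t = s i + ev (γ i) t := fun s i t => by
    rw [hω, ev_add (Bd.C _) (hγB i), ev_C]
  set Γ : (Fin d → ℚ_[p]) → Fin (n + 1) → PowerSeries ℚ_[p] :=
    fun s => Fin.cons 1 (comp P (ω s)) with hΓ
  have hΓev : ∀ s, ‖s‖ ≤ r → ∀ x t,
      ev (Γ s (Fin.succ x)) t = f (x₀ + s + fun i => ev (γ i) t) x := by
    intro s hs x t
    rw [hΓ]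
    simp only [Fin.cons_succ]
    rw [ev_comp hM₀.le (hωB s hs) ha0.le ha1 hP]
    have hv : (fun i => ev (ω s i) t) = s + fun i => ev (γ i) t := by
      funext i; rw [hωev]; rfl
    have hmem : (s + fun i => ev (γ i) t) ∈ Metric.eball (0 : Fin d → ℚ_[p]) R := by
      rw [Metric.mem_eball, edist_zero_right]
      refine lt_of_le_of_lt ?_ hM₀R
      rw [← hv, enorm_le_coe, ← NNReal.coe_le_coe, coe_nnnorm]
      exact (pi_norm_le_iff_of_nonneg hM₀.le).mpr fun i => (hωB s hs i).norm_ev_le t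
    have h1 := Pi.hasSum.mp (hPR.hasSum hmem) x
    rw [add_assoc, ← h1.tsum_eq, ← hv]
  have hΓB : ∀ s, ‖s‖ ≤ r → ∀ x, Bd (max 1 c) (Γ s x) := by
    intro s hs x
    refine Fin.cases ?_ (fun x => ?_) x
    · exact Bd.one.mono (le_max_left _ _)
    · exact (Bd.comp hM₀.le (hωB s hs) ha0.le ha1 hc.le hP x).mono (le_max_right _ _)
  have h0r : ‖(0 : Fin d → ℚ_[p])‖ ≤ r := by rw [norm_zero]; exact hr.le
  refine ⟨r, max (max 1 c) (max M₀ (c / M₀)), γ, Γ, hr, by positivity, hrU,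
    fun i => (hγB i).mono ((le_max_left _ _).trans (le_max_right _ _)), hγ0, ?_, fun s hs =>
    ⟨rfl, fun x => (hΓB s hs x).mono (le_max_left _ _), fun x => ?_, hΓev s hs⟩⟩
  · intro b hb hl
    refine hb ?_
    have key : b 0 = 0 ∧ ∀ i : Fin n, b i.succ = 0 := by
      refine hzi _ _ fun k => ?_
      have h1 := ev_lin (hΓB 0 h0r 0).nonneg (hΓB 0 h0r) b (τ k)
      rw [hl, ev_zero, Fin.sum_univ_succ] at h1
      have h2 : ev (Γ 0 0) (τ k) = 1 := by
        rw [hΓ]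
        simpa using ev_C (1 : ℚ_[p]) (τ k)
      have h3 : (x₀ + 0 + fun i => ev (γ i) (τ k)) = z k := by
        funext i
        simp [hγτ]
      simp only [hΓev 0 h0r, h2, h3, mul_one] at h1
      exact h1.symm
    funext i
    exact Fin.cases key.1 key.2 i
  · refine Fin.cases ?_ (fun x => ?_) x
    · simpa [hΓ] using Bd.zero (p := p) (by positivity : 0 ≤ max (max 1 c) (max M₀ (c / M₀)) * ‖s‖)
    · have hd : ∀ i, Bd ‖s‖ (ω s i - ω 0 i) := fun i => by
        have : ω s i - ω 0 i = PowerSeries.C (s i) := by simp [hω]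
        rw [this]
        exact (Bd.C _).mono (norm_le_pi_norm s i)
      refine (Bd.comp_sub hM₀ (norm_nonneg s) (hωB s hs) (hωB 0 h0r) hd ha0.le ha1 hc.le hP x).mono ?_
      have : c * (‖s‖ / M₀) = c / M₀ * ‖s‖ := by ring
      rw [this]
      exact mul_le_mul_of_nonneg_right ((le_max_right _ _).trans (le_max_right _ _)) (norm_nonneg _)

end PadicND

/-! ### Averaging along the curve -/

namespace PadicND

variable {p : ℕ} [Fact p.Prime] {d n : ℕ}

/-- The case `n = 0`: a nonzero integer of size at most `Q` has `p`-adic norm at least `1 / Q`, so the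
set is empty unless `δ ≥ 1`. -/
lemma bound_zero [MeasurableSpace (Fin d → ℚ_[p])] (μ : Measure (Fin d → ℚ_[p]))
    (f : (Fin d → ℚ_[p]) → (Fin 0 → ℚ_[p])) (y : Fin d → ℚ_[p]) (ρ : ℝ) {δ Q : ℝ} (hδ : 0 < δ)
    (hQ : 1 ≤ Q) :
    μ {x ∈ Metric.closedBall y ρ | ∃ q : (Fin 0 → ℤ) × ℤ, q ≠ 0 ∧ ‖q‖ ≤ Q ∧
        ‖(∑ i, (q.1 i : ℚ_[p]) * f x i) + (q.2 : ℚ_[p])‖ < δ / Q ^ (0 + 1)}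
      ≤ ENNReal.ofReal (1 * δ) * μ (Metric.closedBall y ρ) := by
  rw [one_mul]
  rcases le_or_gt 1 δ with h | h
  · refine (measure_mono fun x hx => hx.1).trans ?_
    exact le_mul_of_one_le_left zero_le (ENNReal.one_le_ofReal.mpr h)
  · refine le_trans (b := μ ∅) (measure_mono ?_) (by simp)
    rintro x ⟨-, q, hq0, hqQ, hq⟩
    have hz : q.2 ≠ 0 := fun h0 => hq0 (Prod.ext (Subsingleton.elim _ _) h0)
    have h1 := one_le_abs_mul_norm (p := p) hz
    rw [Real.norm_eq_abs] at h1
    have h2 : |(q.2 : ℝ)| ≤ Q := by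
      simpa [Int.norm_eq_abs] using (norm_snd_le q).trans hqQ
    have h3 : ‖(q.2 : ℚ_[p])‖ < δ / Q := by simpa using hq
    rw [lt_div_iff₀ (by linarith)] at h3
    have h4 := mul_le_mul_of_nonneg_right h2 (norm_nonneg (q.2 : ℚ_[p]))
    exfalso
    linarith

lemma measurableSet_A [MeasurableSpace (Fin d → ℚ_[p])] [BorelSpace (Fin d → ℚ_[p])]
    {f : (Fin d → ℚ_[p]) → (Fin n → ℚ_[p])} {y : Fin d → ℚ_[p]} {ρ : ℝ}
    (hf : ContinuousOn f (Metric.closedBall y ρ)) (Q ε : ℝ) :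
    MeasurableSet {x ∈ Metric.closedBall y ρ | ∃ q : (Fin n → ℤ) × ℤ, q ≠ 0 ∧ ‖q‖ ≤ Q ∧
        ‖(∑ i, (q.1 i : ℚ_[p]) * f x i) + (q.2 : ℚ_[p])‖ < ε} := by
  have e : {x ∈ Metric.closedBall y ρ | ∃ q : (Fin n → ℤ) × ℤ, q ≠ 0 ∧ ‖q‖ ≤ Q ∧
        ‖(∑ i, (q.1 i : ℚ_[p]) * f x i) + (q.2 : ℚ_[p])‖ < ε}
      = ⋃ q : (Fin n → ℤ) × ℤ, ⋃ (_ : q ≠ 0 ∧ ‖q‖ ≤ Q),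
        ((fun x => ‖(∑ i, (q.1 i : ℚ_[p]) * f x i) + (q.2 : ℚ_[p])‖) ⁻¹' Set.Iio ε)
          ∩ Metric.closedBall y ρ := by
    ext x
    simp only [Set.mem_iUnion, Set.mem_inter_iff, Set.mem_preimage, Set.mem_Iio, exists_prop]
    constructor
    · rintro ⟨h1, q, h2, h3, h4⟩
      exact ⟨q, ⟨h2, h3⟩, h4, h1⟩
    · rintro ⟨q, ⟨h2, h3⟩, h4, h1⟩
      exact ⟨h1, q, h2, h3, h4⟩
  rw [e]
  refine MeasurableSet.iUnion fun q => MeasurableSet.iUnion fun _ => ?_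
  have hc : ContinuousOn (fun x => ‖(∑ i, (q.1 i : ℚ_[p]) * f x i) + (q.2 : ℚ_[p])‖)
      (Metric.closedBall y ρ) := by
    refine ContinuousOn.norm (ContinuousOn.add (continuousOn_finsetSum _ fun i _ => ?_)
      continuousOn_const)
    exact continuousOn_const.mul (continuousOn_pi.mp hf i)
  obtain ⟨u, hu, hu'⟩ := continuousOn_iff'.mp hc (Set.Iio ε) isOpen_Iio
  rw [hu']
  exact hu.measurableSet.inter Metric.isClosed_closedBall.measurableSet

/-- Averaging over the translates of a curve which preserve a ball. -/
lemma measure_le_of_curve [MeasurableSpace (Fin d → ℚ_[p])] [BorelSpace (Fin d → ℚ_[p])]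
    (μ : Measure (Fin d → ℚ_[p])) [μ.IsAddHaarMeasure] {Ω : Type*} [MeasurableSpace Ω]
    (ν : Measure Ω) [IsFiniteMeasure ν] {T : Set Ω} (hT : MeasurableSet T) (hνT : ν T ≠ 0)
    {g : Ω → Fin d → ℚ_[p]} (hg : Measurable g) {y : Fin d → ℚ_[p]} {ρ : ℝ}
    (hgρ : ∀ t ∈ T, ‖g t‖ ≤ ρ) {A : Set (Fin d → ℚ_[p])} (hA : MeasurableSet A)
    (hAB : A ⊆ Metric.closedBall y ρ) {c : ENNReal}
    (h : ∀ x ∈ Metric.closedBall y ρ, ν {t | t ∈ T ∧ x + g t ∈ A} ≤ c * ν T) :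
    μ A ≤ c * μ (Metric.closedBall y ρ) := by
  set B := Metric.closedBall y ρ with hB
  have hBm : MeasurableSet B := Metric.isClosed_closedBall.measurableSet
  set D : Set ((Fin d → ℚ_[p]) × Ω) := {z | z.1 ∈ B ∧ z.2 ∈ T ∧ z.1 + g z.2 ∈ A} with hD
  have hDm : MeasurableSet D :=
    (measurable_fst hBm).inter ((measurable_snd hT).inter
      ((measurable_fst.add (hg.comp measurable_snd)) hA))
  have h1 : μ.prod ν D ≤ c * ν T * μ B := by
    rw [Measure.prod_apply hDm, ← lintegral_indicator_const hBm]
    refine lintegral_mono fun x => ?_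
    by_cases hx : x ∈ B
    · rw [Set.indicator_of_mem hx]
      refine le_trans (measure_mono fun t ht => ?_) (h x hx)
      exact ht.2
    · rw [Set.indicator_of_notMem hx]
      have : Prod.mk x ⁻¹' D = ∅ := Set.eq_empty_of_forall_notMem fun t ht => hx ht.1
      rw [this, measure_empty]
  have h2 : μ A * ν T ≤ μ.prod ν D := by
    rw [Measure.prod_apply_symm hDm, ← lintegral_indicator_const hT]
    refine lintegral_mono fun t => ?_
    by_cases ht : t ∈ T
    · rw [Set.indicator_of_mem ht, ← measure_preimage_add_right μ (g t) A]
      refine measure_mono fun x hx => ⟨?_, ht, hx⟩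
      have h3 : ‖x + g t - y‖ ≤ ρ := by
        have := hAB hx
        rwa [hB, Metric.mem_closedBall, dist_eq_norm] at this
      have e : x - y = (x + g t - y) - g t := by abel
      rw [hB, Metric.mem_closedBall, dist_eq_norm, e]
      have hρ : 0 ≤ ρ := (norm_nonneg _).trans h3
      refine (pi_norm_le_iff_of_nonneg hρ).mpr fun i => ?_
      exact (norm_sub_le_max_ultra _ _).trans (max_le ((norm_le_pi_norm _ i).trans h3)
        ((norm_le_pi_norm _ i).trans (hgρ t ht)))
    · rw [Set.indicator_of_notMem ht]
      exact zero_le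
  have h4 : ν T * μ A ≤ ν T * (c * μ B) := by
    calc ν T * μ A = μ A * ν T := mul_comm _ _
      _ ≤ c * ν T * μ B := h2.trans h1
      _ = ν T * (c * μ B) := by ring
  exact (ENNReal.mul_le_mul_iff_right hνT (measure_ne_top ν T)).mp h4

end PadicND

/-- **Theorem 7.3.**  Let `f : U → ℚ_p^n` be analytic on open `U ⊆ ℚ_p^d` and
non-degenerate at `x₀ ∈ U`.  Then there are a ball `B₀ = closedBall x₀ r₀ ⊆ U` and
`C₀ > 0` such that for every ball `B ⊆ B₀` and every `δ > 0`, for all sufficiently large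
`Q`, `μ (A_f(δ; B; Q)) ≤ C₀ δ μ B`, where `A_f(δ;B;Q)` is the set of `x ∈ B` with
`|q̃·f(x)|_p < δ Q^{-n-1}` for some integer vector `q̃` with `0 < ‖q̃‖_∞ ≤ Q`. -/
theorem upper_bound_A_set
    (p : ℕ) [Fact p.Prime] (d n : ℕ)
    [MeasurableSpace (Fin d → ℚ_[p])] [BorelSpace (Fin d → ℚ_[p])]
    (μ : Measure (Fin d → ℚ_[p])) [μ.IsAddHaarMeasure]
    (hμ : μ {x : Fin d → ℚ_[p] | ∀ i, ‖x i‖ ≤ 1} = 1)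
    (U : Set (Fin d → ℚ_[p])) (hU : IsOpen U)
    (x₀ : Fin d → ℚ_[p]) (hx₀ : x₀ ∈ U)
    (f : (Fin d → ℚ_[p]) → (Fin n → ℚ_[p]))
    (hfa : AnalyticOnNhd ℚ_[p] f U)
    (hnd : ∀ (zc : Fin d → ℚ_[p]) (rr : ℝ), 0 < rr → x₀ ∈ Metric.ball zc rr →
      Metric.ball zc rr ⊆ U → ∀ (c₀ : ℚ_[p]) (c : Fin n → ℚ_[p]),
        (∀ x ∈ Metric.ball zc rr, c₀ + ∑ i, c i * f x i = 0) → c₀ = 0 ∧ ∀ i, c i = 0) :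
    ∃ (r₀ C₀ : ℝ), 0 < r₀ ∧ 0 < C₀ ∧ Metric.closedBall x₀ r₀ ⊆ U ∧
      ∀ (y : Fin d → ℚ_[p]) (ρ : ℝ), 0 < ρ →
        Metric.closedBall y ρ ⊆ Metric.closedBall x₀ r₀ →
        ∀ δ : ℝ, 0 < δ → ∃ Q₀ : ℝ, ∀ Q : ℝ, Q₀ ≤ Q →
          μ {x ∈ Metric.closedBall y ρ | ∃ q : (Fin n → ℤ) × ℤ, q ≠ 0 ∧ ‖q‖ ≤ Q ∧
              ‖(∑ i, (q.1 i : ℚ_[p]) * f x i) + (q.2 : ℚ_[p])‖ < δ / Q ^ (n + 1)}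
            ≤ ENNReal.ofReal (C₀ * δ) * μ (Metric.closedBall y ρ) := by
  have hnd' := fun (rr : ℝ) (h : 0 < rr) (hs : Metric.ball x₀ rr ⊆ U) =>
    hnd x₀ rr h (Metric.mem_ball_self h) hs
  rcases Nat.eq_zero_or_pos n with rfl | hn
  · obtain ⟨ε, hε, hεU⟩ := Metric.isOpen_iff.mp hU x₀ hx₀
    refine ⟨ε / 2, 1, by positivity, one_pos,
      (Metric.closedBall_subset_ball (by linarith)).trans hεU, fun y ρ _ _ δ hδ =>
      ⟨1, fun Q hQ => ?_⟩⟩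
    exact PadicND.bound_zero μ f y ρ hδ hQ
  · obtain ⟨r, M, γ, Γ, hr, hM, hrU, hγ, hγ0, hind, hΓ⟩ :=
      PadicND.exists_curve hU hx₀ (hfa x₀ hx₀) hnd'
    have hΓ0 := hΓ 0 (by rw [norm_zero]; exact hr.le)
    obtain ⟨L, A₀, σ, hA₀, hσ, hgood⟩ := PadicND.exists_goodFam hM hΓ0.2.1 hind
    -- For `‖x - x₀‖ ≤ σ / M` the family along the curve through `x` is within `σ` of the one through
    -- `x₀`, so the uniform constants apply.
    refine ⟨min r (σ / M), 3 ^ (n + 1) + 1, by positivity, by positivity,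
      (Metric.closedBall_subset_closedBall (min_le_left _ _)).trans hrU,
      fun y ρ hρ hB δ hδ => ?_⟩
    let _ : MeasurableSpace ℤ_[p] := borel _
    have _ : BorelSpace ℤ_[p] := ⟨rfl⟩
    obtain ⟨ν, hνp, hν⟩ := PadicND.exists_isUnif (p := p)
    -- The curve maps the ball `bl 0 j` into the ball of radius `ρ` about `0`.
    obtain ⟨j, hj⟩ : ∃ j : ℕ, M * (p : ℝ)⁻¹ ^ j < ρ := by
      obtain ⟨j, hj⟩ := exists_pow_lt_of_lt_one (div_pos hρ hM) (PadicND.pinv_lt_one (p := p))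
      exact ⟨j, by rw [mul_comm]; exact (lt_div_iff₀ hM).mp hj⟩
    obtain ⟨Q₀, hQ₀, hQ⟩ := PadicND.one_dim_bound hν hn L M hA₀ j hδ
    refine ⟨Q₀, fun Q hQQ => ?_⟩
    refine PadicND.measure_le_of_curve μ ν (T := PadicND.bl 0 j) (PadicND.measurableSet_bl 0 j)
      (by rw [hν]; exact (ENNReal.ofReal_pos.mpr (pow_pos PadicND.pinv_pos j)).ne')
      (g := fun t i => PadicND.ev (γ i) t)
      (continuous_pi fun i => (hγ i).continuous).measurable
      (fun t ht => ?_) (PadicND.measurableSet_A (hfa.continuousOn.mono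
        (hB.trans ((Metric.closedBall_subset_closedBall (min_le_left _ _)).trans hrU))) Q _)
      (fun x hx => hx.1) (fun x hx => ?_)
    · refine (pi_norm_le_iff_of_nonneg hρ.le).mpr fun i => ?_
      have h1 := (hγ i).lipschitz t 0
      rw [hγ0, sub_zero] at h1
      exact h1.trans ((mul_le_mul_of_nonneg_left ht hM.le).trans hj.le)
    · have hs : ‖x - x₀‖ ≤ min r (σ / M) := by
        have := hB hx
        rwa [Metric.mem_closedBall, dist_eq_norm] at this
      obtain ⟨h1, h2, h3, h4⟩ := hΓ (x - x₀) (hs.trans (min_le_left _ _))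
      have hsσ : M * ‖x - x₀‖ ≤ σ := by
        rw [mul_comm]
        exact (le_div_iff₀ hM).mp (hs.trans (min_le_right _ _))
      refine le_trans (measure_mono ?_) (hQ Q hQQ (Γ (x - x₀)) h1 h2
        (hgood _ h2 fun k => (h3 k).mono hsσ))
      -- The coordinate of index `0`, where the family is `1`, carries the constant term `q₀`.
      rintro t ⟨ht, -, q, hq0, hqQ, hq⟩
      refine ⟨ht, Fin.cons q.2 q.1, fun h0 => hq0 ?_, fun k => ?_, ?_⟩
      · refine Prod.ext (funext fun i => ?_) ?_
        · simpa using congrFun h0 i.succ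
        · simpa using congrFun h0 0
      · refine Fin.cases ?_ (fun i => ?_) k
        · simpa [Int.norm_eq_abs] using (norm_snd_le q).trans hqQ
        · simpa [Int.norm_eq_abs] using ((norm_le_pi_norm q.1 i).trans (norm_fst_le q)).trans hqQ
      · rw [Fin.sum_univ_succ, h1]
        have h5 : PadicND.ev (1 : PowerSeries ℚ_[p]) t = 1 := by
          simpa using PadicND.ev_C (1 : ℚ_[p]) t
        simp only [h4, h5, Fin.cons_zero, Fin.cons_succ, add_sub_cancel, one_mul]
        rw [add_comm]
        simpa only [mul_comm] using hq
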